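/- Let c>0, and let H be a graph such that at least one of H and its complement has congestion at most c/(9+15c). Then there exists ε>0 such that for every graph G with |G|>1 that is both H-free and H̄-free, there is a pure pair A,B in G with |A|,|B| ≥ ε·|G|^{1-c}. -/

import Mathlib

noncomputable section

namespace PurePairs

open SimpleGraph

variable {V W : Type*}

/-- A pure pair in `G`: a pair of disjoint vertex sets that are complete
or anticomplete to each other. -/
def PurePair (G : SimpleGraph V) (A B : Set V) : Prop :=
  Disjoint A B ∧
    ((∀ a ∈ A, ∀ b ∈ B, G.Adj a b) ∨ (∀ a ∈ A, ∀ b ∈ B, ¬ G.Adj a b))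

/-- `G` contains `H`: some induced subgraph of `G` is isomorphic to `H`. -/
def Contains (G : SimpleGraph V) (H : SimpleGraph W) : Prop :=
  Nonempty (H ↪g G)

/-- The congestion of a graph `H`: the maximum (here: supremum, together with `0`)
of `1 - (|J|-1)/|E(J)|` over all subgraphs `J` of `H` with at least one edge.
If `H` has no edges this is `0`. -/
def congestion (H : SimpleGraph V) : ℝ :=
  sSup ({0} ∪ {x : ℝ | ∃ J : H.Subgraph, J.edgeSet.Nonempty ∧
    x = 1 - ((J.verts.ncard : ℝ) - 1) / (J.edgeSet.ncard : ℝ)})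

/-- `A` is anticomplete to `B`: no edges between them. -/
def Anticomplete (G : SimpleGraph V) (A B : Set V) : Prop :=
  ∀ a ∈ A, ∀ b ∈ B, ¬ G.Adj a b

/-- `A` covers `B`: every vertex of `B` has a neighbour in `A`. -/
def Covers (G : SimpleGraph V) (A B : Set V) : Prop :=
  ∀ b ∈ B, ∃ a ∈ A, G.Adj a b

/-- `G` is `ε`-sparse: every vertex has degree less than `ε|G|`. -/
def EpsSparse (G : SimpleGraph V) [Fintype V] (ε : ℝ) : Prop :=
  ∀ v : V, ((G.neighborSet v).ncard : ℝ) < ε * (Fintype.card V : ℝ)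

/-- `G` is `(γ,δ)`-coherent: there is no pair of disjoint anticomplete sets `A`, `B`
with `|A| ≥ γ` and `|B| ≥ δ`. -/
def Coherent (G : SimpleGraph V) (γ δ : ℝ) : Prop :=
  ¬ ∃ A B : Set V, Disjoint A B ∧ Anticomplete G A B ∧
      γ ≤ (A.ncard : ℝ) ∧ δ ≤ (B.ncard : ℝ)

/-- `N(X)`: the set of vertices with a neighbour in `X`. -/
def nbhd (G : SimpleGraph V) (X : Set V) : Set V :=
  {v | ∃ x ∈ X, G.Adj x v}

/-- A blockade: a family of nonempty pairwise disjoint vertex sets indexed by a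
finite set of integers. -/
def IsBlockade (I : Finset ℤ) (A : ℤ → Set V) : Prop :=
  (∀ i ∈ I, (A i).Nonempty) ∧
    ∀ i ∈ I, ∀ j ∈ I, i ≠ j → Disjoint (A i) (A j)

/-- The blockade `(A i : i ∈ I)` is `(γ,δ)`-divergent. -/
def Divergent (G : SimpleGraph V) (I : Finset ℤ) (A : ℤ → Set V) (γ δ : ℝ) : Prop :=
  ∃ i ∈ I, ∃ j ∈ I, i ≠ j ∧ ∃ X ⊆ A i, ∃ Y ⊆ A j,
    γ * ((A i).ncard : ℝ) ≤ (X.ncard : ℝ) ∧ δ * ((A j).ncard : ℝ) ≤ (Y.ncard : ℝ) ∧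
    Anticomplete G X Y

/-- The blockade `(A i : i ∈ I)` is `τ`-expanding. -/
def Expanding (G : SimpleGraph V) (I : Finset ℤ) (A : ℤ → Set V) (τ : ℝ) : Prop :=
  ∀ i ∈ I, ∀ j ∈ I, i ≠ j → ∀ X ⊆ A i,
    min (τ * (X.ncard : ℝ) / ((A i).ncard : ℝ)) (1/4)
      ≤ (((nbhd G X) ∩ A j).ncard : ℝ) / ((A j).ncard : ℝ)

/-- The linkage of the blockade `(A i : i ∈ I)` is at most `lam`. -/
def LinkageLE (G : SimpleGraph V) (I : Finset ℤ) (A : ℤ → Set V) (lam : ℝ) : Prop :=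
  ∀ i ∈ I, ∀ j ∈ I, i ≠ j → ∀ v ∈ A i,
    ((G.neighborSet v ∩ A j).ncard : ℝ) ≤ lam * ((A j).ncard : ℝ)

/-- The shrinkage of the blockade `(A i : i ∈ I)` is at most `σ`, i.e. its width is at
least `|G|^{1-σ}`. -/
def ShrinkageLE [Fintype V] (I : Finset ℤ) (A : ℤ → Set V) (σ : ℝ) : Prop :=
  ∀ i ∈ I, (Fintype.card V : ℝ) ^ (1 - σ) ≤ ((A i).ncard : ℝ)

/-- `(L 0, …, L k)` is a levelling in `G`. -/
def IsLevelling (G : SimpleGraph V) (L : ℕ → Set V) (k : ℕ) : Prop :=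
  1 ≤ k ∧ (L 0).ncard = 1 ∧
  (∀ i ≤ k, ∀ j ≤ k, i ≠ j → Disjoint (L i) (L j)) ∧
  (∀ i, 1 ≤ i → i ≤ k → Covers G (L (i-1)) (L i)) ∧
  (∀ i, 2 ≤ i → i ≤ k → ∀ h, h + 2 ≤ i → Anticomplete G (L h) (L i))

/-- The levelling `(L 0, …, L k)` reaches `C`, i.e. `(L 0, …, L k, C)` is a levelling. -/
def Reaches (G : SimpleGraph V) (L : ℕ → Set V) (k : ℕ) (C : Set V) : Prop :=
  IsLevelling G (fun i => if i = k + 1 then C else L i) (k + 1)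

/-- The levelling `(L 0, …, L k)` is `(B i : i ∈ I)`-rainbow. -/
def RainbowLevelling (I : Finset ℤ) (B : ℤ → Set V) (L : ℕ → Set V) (k : ℕ) : Prop :=
  ∃ q : ℕ → ℤ, (∀ i ≤ k, q i ∈ I ∧ L i ⊆ B (q i)) ∧
    ∀ i ≤ k, ∀ j ≤ k, q i = q j → i = j

/-- The levelling `(L 0, …, L k)` grades the blockade `(C j : j ∈ J)` (in some order). -/
def Grades (G : SimpleGraph V) (L : ℕ → Set V) (k : ℕ) (J : Finset ℤ) (C : ℤ → Set V) :
    Prop :=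
  Reaches G L k (⋃ j ∈ J, C j) ∧
  ∃ e : ℕ → ℤ, (∀ g < J.card, e g ∈ J) ∧
    (∀ g < J.card, ∀ h < J.card, e g = e h → g = h) ∧
    ∀ g < J.card, ∃ Y ⊆ L k,
      (∀ h, g ≤ h → h < J.card → Covers G Y (C (e h))) ∧
      (∀ h, h < g → Anticomplete G Y (C (e h)))

/-- The levelling `(L 0, …, L k)` grades the blockade `(C j : j ∈ J)` forwards. -/
def GradesFwd (G : SimpleGraph V) (L : ℕ → Set V) (k : ℕ) (J : Finset ℤ) (C : ℤ → Set V) :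
    Prop :=
  Reaches G L k (⋃ j ∈ J, C j) ∧
  ∀ j ∈ J, ∃ Y ⊆ L k,
    (∀ i ∈ J, j ≤ i → Covers G Y (C i)) ∧
    (∀ i ∈ J, i < j → Anticomplete G Y (C i))

/-- The levelling `(L 0, …, L k)` grades the blockade `(C j : j ∈ J)` backwards. -/
def GradesBwd (G : SimpleGraph V) (L : ℕ → Set V) (k : ℕ) (J : Finset ℤ) (C : ℤ → Set V) :
    Prop :=
  Reaches G L k (⋃ j ∈ J, C j) ∧
  ∀ j ∈ J, ∃ Y ⊆ L k,
    (∀ i ∈ J, i ≤ j → Covers G Y (C i)) ∧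
    (∀ i ∈ J, j < i → Anticomplete G Y (C i))

/-- Two levellings are parallel. -/
def Parallel (G : SimpleGraph V) (L : ℕ → Set V) (k : ℕ) (M : ℕ → Set V) (m : ℕ) : Prop :=
  L 0 = M 0 ∧
  Disjoint (⋃ j ∈ Finset.Icc 1 m, M j) (⋃ i ∈ Finset.Icc 1 k, L i) ∧
  Anticomplete G (⋃ j ∈ Finset.Icc 1 m, M j) (⋃ i ∈ Finset.Icc 1 k, L i)

/-- `(L, M, C)` is a bi-levelling, where `L` has height `k` and `M` has height `m`:
`C` is a blockade, `L, M` are parallel levellings both reaching the union of the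
blocks of `C`, and `L` grades `C` forwards. Its height is `k + m` and its length is
the length of `C`. -/
def IsBiLevelling (G : SimpleGraph V) (L : ℕ → Set V) (k : ℕ) (M : ℕ → Set V) (m : ℕ)
    (J : Finset ℤ) (C : ℤ → Set V) : Prop :=
  IsBlockade J C ∧ IsLevelling G L k ∧ IsLevelling G M m ∧ Parallel G L k M m ∧
    Reaches G M m (⋃ j ∈ J, C j) ∧ GradesFwd G L k J C

/-- A bi-grading: a bi-levelling in which `M` also grades `C` backwards. -/
def IsBiGrading (G : SimpleGraph V) (L : ℕ → Set V) (k : ℕ) (M : ℕ → Set V) (m : ℕ)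
    (J : Finset ℤ) (C : ℤ → Set V) : Prop :=
  IsBiLevelling G L k M m J C ∧ GradesBwd G M m J C

/-- The bi-levelling `(L, M, C)` is `(A i : i ∈ I)`-rainbow: each block of `C`, each
level of `L`, and each level of `M` other than `M 0 = L 0` is included in a block of
`A`, and distinct such sets lie in distinct blocks. -/
def RainbowBiLevelling (I : Finset ℤ) (A : ℤ → Set V)
    (L : ℕ → Set V) (k : ℕ) (M : ℕ → Set V) (m : ℕ)
    (J : Finset ℤ) (C : ℤ → Set V) : Prop :=
  ∃ (qc : ℤ → ℤ) (ql qm : ℕ → ℤ),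
    (∀ j ∈ J, qc j ∈ I ∧ C j ⊆ A (qc j)) ∧
    (∀ i ≤ k, ql i ∈ I ∧ L i ⊆ A (ql i)) ∧
    (∀ i, 1 ≤ i → i ≤ m → qm i ∈ I ∧ M i ⊆ A (qm i)) ∧
    (∀ j ∈ J, ∀ j' ∈ J, qc j = qc j' → j = j') ∧
    (∀ i ≤ k, ∀ i' ≤ k, ql i = ql i' → i = i') ∧
    (∀ i, 1 ≤ i → i ≤ m → ∀ i', 1 ≤ i' → i' ≤ m → qm i = qm i' → i = i') ∧
    (∀ j ∈ J, ∀ i ≤ k, qc j ≠ ql i) ∧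
    (∀ j ∈ J, ∀ i, 1 ≤ i → i ≤ m → qc j ≠ qm i) ∧
    (∀ i ≤ k, ∀ i', 1 ≤ i' → i' ≤ m → ql i ≠ qm i')

/-- Each block of `(C j : j ∈ J)` lies in a block of `(A i : i ∈ I)`; the `A`-size of
`C` is at least `η` when every block of `C` has size at least `η` times the size of the
block of `A` containing it. -/
def SizeGE (I : Finset ℤ) (A : ℤ → Set V) (J : Finset ℤ) (C : ℤ → Set V) (η : ℝ) : Prop :=
  ∀ j ∈ J, ∀ i ∈ I, C j ⊆ A i → η * ((A i).ncard : ℝ) ≤ ((C j).ncard : ℝ)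

/-- A `(B i : i ∈ I)`-rainbow induced path `p 0 - p 1 - ⋯ - p n` in `G`. -/
def RainbowPath (G : SimpleGraph V) (I : Finset ℤ) (B : ℤ → Set V)
    (n : ℕ) (p : ℕ → V) : Prop :=
  (∀ i ≤ n, ∀ j ≤ n, p i = p j → i = j) ∧
  (∀ i < n, G.Adj (p i) (p (i+1))) ∧
  (∀ i j, i + 1 < j → j ≤ n → ¬ G.Adj (p i) (p j)) ∧
  ∃ q : ℕ → ℤ, (∀ i ≤ n, q i ∈ I ∧ p i ∈ B (q i)) ∧
    ∀ i ≤ n, ∀ j ≤ n, q i = q j → i = j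

/-- A `(B i : i ∈ I)`-rainbow copy of `H` in `G`: an induced copy of `H` with each
vertex in a different block. -/
def RainbowCopy (G : SimpleGraph V) (I : Finset ℤ) (B : ℤ → Set V)
    (H : SimpleGraph W) : Prop :=
  ∃ (f : H ↪g G) (q : W → ℤ), Function.Injective q ∧ ∀ w : W, q w ∈ I ∧ f w ∈ B (q w)

/-- `(N,K,σ,lam,c)` forces `H`. -/
def Forces (H : SimpleGraph W) (N K : ℕ) (σ lam c : ℝ) : Prop :=
  ∀ {V : Type} [Fintype V] (G : SimpleGraph V),
    Coherent G ((Fintype.card V : ℝ) ^ (1 - c)) ((Fintype.card V : ℝ) ^ (1 - c)) →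
    N ≤ Fintype.card V →
    ∀ (I : Finset ℤ) (A : ℤ → Set V), IsBlockade I A → I.card = K →
      ShrinkageLE I A σ → LinkageLE G I A lam →
      RainbowCopy G I A H

/-- `p 0 - ⋯ - p n` is a handle of length `n` that can be added to (the graph induced
on) `S` inside the ambient graph `H`: an induced path of `H[S ∪ p]` of length at least
two whose ends lie in `S`, whose internal vertices avoid `S` and have degree two in
`H[S ∪ p]`. -/
def IsHandle (H : SimpleGraph V) (S : Set V) (n : ℕ) (p : ℕ → V) : Prop :=
  2 ≤ n ∧
  (∀ i ≤ n, ∀ j ≤ n, p i = p j → i = j) ∧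
  p 0 ∈ S ∧ p n ∈ S ∧
  (∀ i, 0 < i → i < n → p i ∉ S) ∧
  (∀ i < n, H.Adj (p i) (p (i+1))) ∧
  (∀ i j, i + 1 < j → j ≤ n → ¬ H.Adj (p i) (p j)) ∧
  (∀ i, 0 < i → i < n → ∀ w, (w ∈ S ∨ ∃ j ≤ n, w = p j) → H.Adj (p i) w →
    w = p (i-1) ∨ w = p (i+1))

/-- The vertex sets `S` such that the induced subgraph `H[S]` can be built, starting
from the two-vertex graph with no edges, by repeatedly adding handles of length at
least `β`. -/
inductive BuildableOn (H : SimpleGraph V) (β : ℕ) : Set V → Prop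
  | base (u v : V) (huv : u ≠ v) (hadj : ¬ H.Adj u v) : BuildableOn H β {u, v}
  | handle (S : Set V) (n : ℕ) (p : ℕ → V) (hS : BuildableOn H β S)
      (hh : IsHandle H S n p) (hn : β ≤ n) :
      BuildableOn H β (S ∪ {w | ∃ j ≤ n, w = p j})

/-- `H` is `β`-buildable. -/
def Buildable [Fintype V] (H : SimpleGraph V) (β : ℕ) : Prop :=
  BuildableOn H β Set.univ

/-- The vertex sets `S` such that the induced subgraph `H[S]` can be built, starting
from the null graph, by repeatedly adding a subleaf or a handle of length at least
`β`. -/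
inductive WeaklyBuildableOn (H : SimpleGraph V) (β : ℕ) : Set V → Prop
  | empty : WeaklyBuildableOn H β ∅
  | subleaf (S : Set V) (v : V) (hv : v ∉ S) (hdeg : (S ∩ H.neighborSet v).ncard ≤ 1)
      (hS : WeaklyBuildableOn H β S) : WeaklyBuildableOn H β (insert v S)
  | handle (S : Set V) (n : ℕ) (p : ℕ → V) (hS : WeaklyBuildableOn H β S)
      (hh : IsHandle H S n p) (hn : β ≤ n) :
      WeaklyBuildableOn H β (S ∪ {w | ∃ j ≤ n, w = p j})

/-- `H` is weakly `β`-buildable. -/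
def WeaklyBuildable [Fintype V] (H : SimpleGraph V) (β : ℕ) : Prop :=
  WeaklyBuildableOn H β Set.univ

/-!
If `G` has no pure pair at the scale `|G| ^ (1 - c)`, then both `G` and its complement are coherent:
any two disjoint sets of at least this size are joined by an edge. A Rödl-type argument, applied to
the `H`-free graph `G`, yields many large blocks of small linkage in `G` or in its complement, and
it remains to find an induced copy of `H` with at most one vertex in each block.

A graph of congestion at most `1 / (3q)` has no short cycles, and if its degrees are all at least
two then its average degree is barely above two. So a suitable walk that never turns back passes
through `q` consecutive vertices of degree two, which are the interior of a handle. By induction,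
the graph is built from the empty graph by adding such handles and vertices of degree at most one.
It suffices to embed these pieces into the blocks, which may shrink by a factor `|G| ^ κ` each time.

For a vertex of degree at most one, use private covers: by coherence, a random subset of one block
covers a large part of a second block and misses a large part of every other. For a handle,
coherence makes neighbourhoods expand by a factor of almost `|G| ^ c`, so that paths of length `T`
with `c * T > 1` lead from a single vertex to a large part of a block. Combined with private covers,
such paths join a single vertex `s` to either end of the handle. The lengths on one side take
boundedly many values; after passing to a common value, the paths on the other side are grown to the
complementary length, so that the handle has exactly `q ≥ 3T + 2` internal vertices.
-/

section

open Finset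
open scoped Classical

/-- The neighbours of the vertex `v` in the finite set `B`. -/
def nbrsIn (G : SimpleGraph V) (v : V) (B : Finset V) : Finset V := {b ∈ B | G.Adj v b}

/-- The vertices of the finite set `B` with a neighbour in `X`: the finite counterpart of
`nbhd G X ∩ B`. -/
def nbhdIn (G : SimpleGraph V) (X B : Finset V) : Finset V := {b ∈ B | ∃ x ∈ X, G.Adj x b}

/-- The linkage of the family of finite blocks `(A i : i ∈ I)` is at most `lam`: the counterpart
of `LinkageLE` for finite sets and an arbitrary index type. -/
def HasLinkageLE {ι : Type*} (G : SimpleGraph V) (I : Finset ι) (A : ι → Finset V) (lam : ℝ) :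
    Prop :=
  ∀ i ∈ I, ∀ j ∈ I, i ≠ j → ∀ v ∈ A i, (#(nbrsIn G v (A j)) : ℝ) ≤ lam * #(A j)

/-- The vertices of the block `A i` have colour `i`. This makes the blocks pairwise disjoint, and
a set of vertices of the blocks is rainbow exactly when `col` is injective on it. -/
def IsColoredBy {ι : Type*} (col : V → ι) (I : Finset ι) (A : ι → Finset V) : Prop :=
  ∀ i ∈ I, ∀ v ∈ A i, col v = i

section Basics

variable {ι : Type*} {G : SimpleGraph V} {u v : V} {X Y B C : Finset V} {I J : Finset ι}
  {A A' : ι → Finset V} {lam lam' t w : ℝ}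

@[simp]
lemma mem_nbrsIn : u ∈ nbrsIn G v B ↔ u ∈ B ∧ G.Adj v u := by
  simp [nbrsIn]

@[simp]
lemma mem_nbhdIn : u ∈ nbhdIn G X B ↔ u ∈ B ∧ ∃ x ∈ X, G.Adj x u := by
  simp [nbhdIn]

lemma nbrsIn_subset (G : SimpleGraph V) (v : V) (B : Finset V) : nbrsIn G v B ⊆ B :=
  filter_subset _ _

lemma nbhdIn_subset (G : SimpleGraph V) (X B : Finset V) : nbhdIn G X B ⊆ B :=
  filter_subset _ _

lemma nbrsIn_mono (h : B ⊆ C) : nbrsIn G v B ⊆ nbrsIn G v C :=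
  filter_subset_filter _ h

lemma nbhdIn_mono (hXY : X ⊆ Y) (hBC : B ⊆ C) : nbhdIn G X B ⊆ nbhdIn G Y C := by
  intro b hb
  obtain ⟨hb, x, hx, hxb⟩ := mem_nbhdIn.mp hb
  exact mem_nbhdIn.mpr ⟨hBC hb, x, hXY hx, hxb⟩

@[simp]
lemma nbhdIn_empty (G : SimpleGraph V) (B : Finset V) : nbhdIn G ∅ B = ∅ := by
  simp [nbhdIn]

lemma nbhdIn_union (G : SimpleGraph V) (X Y B : Finset V) :
    nbhdIn G (X ∪ Y) B = nbhdIn G X B ∪ nbhdIn G Y B := by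
  ext b
  simp only [mem_nbhdIn, mem_union]
  grind

lemma nbhdIn_singleton (G : SimpleGraph V) (v : V) (B : Finset V) :
    nbhdIn G {v} B = nbrsIn G v B := by
  ext b
  simp

lemma sum_card_nbrsIn_comm (G : SimpleGraph V) (X Y : Finset V) :
    ∑ x ∈ X, #(nbrsIn G x Y) = ∑ y ∈ Y, #(nbrsIn G y X) := by
  simpa only [nbrsIn, bipartiteAbove, bipartiteBelow, G.adj_comm] using
    sum_card_bipartiteAbove_eq_sum_card_bipartiteBelow (s := X) (t := Y) G.Adj

lemma Coherent.card_sdiff_nbhdIn_lt (h : Coherent G w w) (hXB : Disjoint X B) (hX : w ≤ #X) :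
    (#(B \ nbhdIn G X B) : ℝ) < w := by
  by_contra! hB
  refine h ⟨X, ↑(B \ nbhdIn G X B), ?_, ?_, ?_, ?_⟩
  · exact_mod_cast hXB.mono_right sdiff_subset
  · intro a ha b hb hab
    have hb := mem_sdiff.mp (mem_coe.mp hb)
    exact hb.2 (mem_nbhdIn.mpr ⟨hb.1, a, ha, hab⟩)
  · rwa [Set.ncard_coe_finset]
  · rwa [Set.ncard_coe_finset]

lemma Coherent.card_nbhdIn_gt (h : Coherent G w w) (hXB : Disjoint X B) (hX : w ≤ #X) :
    (#B : ℝ) - w < #(nbhdIn G X B) := by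
  have hlt := h.card_sdiff_nbhdIn_lt hXB hX
  rw [card_sdiff_of_subset (nbhdIn_subset _ _ _),
    Nat.cast_sub (card_le_card (nbhdIn_subset _ _ _))] at hlt
  linarith

lemma HasLinkageLE.mono (h : HasLinkageLE G I A lam) (hJ : J ⊆ I) (hlam : lam ≤ lam') :
    HasLinkageLE G J A lam' := fun i hi j hj hij v hv =>
  (h i (hJ hi) j (hJ hj) hij v hv).trans (by gcongr)

lemma HasLinkageLE.shrink (h : HasLinkageLE G I A lam) (hA : ∀ i ∈ I, A' i ⊆ A i)
    (hlam : lam ≤ lam' * t) (hlam' : 0 ≤ lam') (hcard : ∀ i ∈ I, t * #(A i) ≤ #(A' i)) :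
    HasLinkageLE G I A' lam' := by
  intro i hi j hj hij v hv
  calc (#(nbrsIn G v (A' j)) : ℝ) ≤ #(nbrsIn G v (A j)) := by gcongr; exact nbrsIn_mono (hA j hj)
    _ ≤ lam * #(A j) := h i hi j hj hij v (hA i hi hv)
    _ ≤ lam' * t * #(A j) := by gcongr
    _ = lam' * (t * #(A j)) := mul_assoc _ _ _
    _ ≤ lam' * #(A' j) := by gcongr; exact hcard j hj

lemma IsColoredBy.mono {col : V → ι} (h : IsColoredBy col I A) (hJ : J ⊆ I)
    (hA : ∀ i ∈ J, A' i ⊆ A i) : IsColoredBy col J A' :=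
  fun i hi v hv => h i (hJ hi) v (hA i hi hv)

lemma IsColoredBy.disjoint {col : V → ι} (h : IsColoredBy col I A) {i j : ι} (hi : i ∈ I)
    (hj : j ∈ I) (hij : i ≠ j) : Disjoint (A i) (A j) :=
  Finset.disjoint_left.mpr fun v hvi hvj => hij ((h i hi v hvi).symm.trans (h j hj v hvj))

lemma mul_card_filter_lt_le_sum {α : Type*} (s : Finset α) {f : α → ℝ} (hf : ∀ x ∈ s, 0 ≤ f x)
    (t : ℝ) : t * #{x ∈ s | t < f x} ≤ ∑ x ∈ s, f x := by
  calc t * #{x ∈ s | t < f x} = #{x ∈ s | t < f x} • t := by rw [nsmul_eq_mul, mul_comm]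
    _ ≤ ∑ x ∈ s with t < f x, f x := card_nsmul_le_sum _ _ _ fun x hx => (mem_filter.mp hx).2.le
    _ ≤ ∑ x ∈ s, f x := sum_le_sum_of_subset_of_nonneg (filter_subset _ _) fun x hx _ => hf x hx

lemma card_le_two_mul_card_sdiff_biUnion {β : Type*} (s : Finset V) {K : Finset β}
    {f : β → Finset V} {b : ℝ} (hf : ∀ k ∈ K, (#(f k) : ℝ) ≤ b) (hb : 2 * #K * b ≤ #s) :
    (#s : ℝ) ≤ 2 * #(s \ K.biUnion f) := by
  have hunion : (#(K.biUnion f) : ℝ) ≤ #K * b := by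
    calc (#(K.biUnion f) : ℝ) ≤ ∑ k ∈ K, (#(f k) : ℝ) := by exact_mod_cast card_biUnion_le
      _ ≤ #K * b := by rw [← nsmul_eq_mul]; exact sum_le_card_nsmul _ _ _ hf
  have hsplit : (#s : ℝ) ≤ #(s \ K.biUnion f) + #(K.biUnion f) := by
    exact_mod_cast card_le_card_sdiff_add_card
  linarith

lemma card_filter_nbrsIn_gt_le {mu k : ℝ} (hmu : 0 < mu)
    (h : ∑ x ∈ X, (#(nbrsIn G x Y) : ℝ) ≤ mu * #X * #Y) (hk : 0 < k) :
    (#{x ∈ X | k * mu * #Y < #(nbrsIn G x Y)} : ℝ) ≤ #X / k := by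
  rcases Y.eq_empty_or_nonempty with rfl | hY
  · simpa [nbrsIn] using by positivity
  · have hY : (0 : ℝ) < #Y := by exact_mod_cast hY.card_pos
    have hmarkov := (mul_card_filter_lt_le_sum X (f := fun x => (#(nbrsIn G x Y) : ℝ))
      (fun _ _ => by positivity) (k * mu * #Y)).trans h
    rw [le_div_iff₀ hk]
    refine le_of_mul_le_mul_left ?_ (mul_pos hmu hY)
    linarith

lemma exists_subset_hasLinkageLE {mu : ℝ} (hmu : 0 < mu)
    (h : ∀ i ∈ I, ∀ j ∈ I, i ≠ j → ∑ x ∈ A i, (#(nbrsIn G x (A j)) : ℝ) ≤ mu * #(A i) * #(A j)) :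
    ∃ A' : ι → Finset V, (∀ i, A' i ⊆ A i) ∧ (∀ i ∈ I, (#(A i) : ℝ) ≤ 2 * #(A' i)) ∧
      HasLinkageLE G I A' (4 * #I * mu) := by
  set bad : ι → ι → Finset V := fun i j =>
    {x ∈ A i | 2 * #I * mu * #(A j) < #(nbrsIn G x (A j))} with hbad
  have hcard : ∀ i ∈ I, (#(A i) : ℝ) ≤ 2 * #(A i \ (I.erase i).biUnion (bad i)) := by
    intro i hi
    have hI : (0 : ℝ) < #I := by exact_mod_cast card_pos.mpr ⟨i, hi⟩
    refine card_le_two_mul_card_sdiff_biUnion _ (b := #(A i) / (2 * #I)) (fun j hj => ?_) ?_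
    · obtain ⟨hji, hj⟩ := mem_erase.mp hj
      exact card_filter_nbrsIn_gt_le hmu (h i hi j hj hji.symm) (by positivity)
    · calc (2 * #(I.erase i) * (#(A i) / (2 * #I)) : ℝ) ≤ 2 * #I * (#(A i) / (2 * #I)) := by
            gcongr; exact erase_subset _ _
        _ = #(A i) := by field_simp
  refine ⟨fun i => A i \ (I.erase i).biUnion (bad i), fun i => sdiff_subset, hcard, ?_⟩
  intro i hi j hj hij v hv
  obtain ⟨hvA, hvbad⟩ := mem_sdiff.mp hv
  have hdeg : (#(nbrsIn G v (A j)) : ℝ) ≤ 2 * #I * mu * #(A j) := by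
    by_contra! hlt
    exact hvbad (mem_biUnion.mpr ⟨j, mem_erase.mpr ⟨hij.symm, hj⟩, mem_filter.mpr ⟨hvA, hlt⟩⟩)
  calc (#(nbrsIn G v (A j \ (I.erase j).biUnion (bad j))) : ℝ) ≤ #(nbrsIn G v (A j)) := by
        gcongr; exact nbrsIn_mono sdiff_subset
    _ ≤ 2 * #I * mu * #(A j) := hdeg
    _ ≤ 2 * #I * mu * (2 * #(A j \ (I.erase j).biUnion (bad j))) := by gcongr; exact hcard j hj
    _ = _ := by ring

end Basics

/-- Expansion of the family of finite blocks `(A i : i ∈ I)`: the counterpart of `Expanding` for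
finite sets, multiplied out so that empty blocks do no harm, and with a cap of one half. -/
def IsExpanding {ι : Type*} (G : SimpleGraph V) (I : Finset ι) (A : ι → Finset V) (t : ℝ) : Prop :=
  ∀ i ∈ I, ∀ j ∈ I, i ≠ j → ∀ X ⊆ A i,
    min (t * #X / #(A i)) (1 / 2) * #(A j) ≤ #(nbhdIn G X (A j))

/-- What is left of the block `A i` once all the sets `D i j` have been removed from it. -/
def residual {ι : Type*} (I : Finset ι) (A : ι → Finset V) (D : ι → ι → Finset V) (i : ι) :
    Finset V :=
  A i \ I.biUnion (D i)

/-- A defect of the family of blocks `(A i : i ∈ I)`: small subsets `D i j` of `A i` with few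
neighbours in what is left of `A j`. Removing a maximal defect leaves an expanding family. -/
structure IsDefect {ι : Type*} (G : SimpleGraph V) (I : Finset ι) (A : ι → Finset V) (w t : ℝ)
    (D : ι → ι → Finset V) : Prop where
  subset : ∀ i ∈ I, ∀ j ∈ I, D i j ⊆ A i
  card_lt : ∀ i ∈ I, ∀ j ∈ I, (#(D i j) : ℝ) < w
  card_nbhdIn_le : ∀ i ∈ I, ∀ j ∈ I, i ≠ j →
    (#(nbhdIn G (D i j) (residual I A D j)) : ℝ) * #(A i) ≤ t * #(D i j) * #(A j)

section Expansion

variable {ι : Type*} {G : SimpleGraph V} {I : Finset ι} {A : ι → Finset V}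
  {D D' : ι → ι → Finset V} {X : Finset V} {i j : ι} {w t : ℝ} {col : V → ι}

lemma residual_subset (I : Finset ι) (A : ι → Finset V) (D : ι → ι → Finset V) (i : ι) :
    residual I A D i ⊆ A i :=
  sdiff_subset

lemma residual_anti (h : ∀ i j, D i j ⊆ D' i j) (i : ι) :
    residual I A D' i ⊆ residual I A D i :=
  sdiff_subset_sdiff subset_rfl (biUnion_mono fun j _ => h i j)

lemma disjoint_residual (hj : j ∈ I) : Disjoint (D i j) (residual I A D i) :=
  disjoint_sdiff.mono_left (subset_biUnion_of_mem (D i) hj)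

lemma isDefect_empty (hw : 0 < w) : IsDefect G I A w t fun _ _ => ∅ where
  subset _ _ _ _ := empty_subset _
  card_lt _ _ _ _ := by simpa using hw
  card_nbhdIn_le _ _ _ _ _ := by simp

lemma IsDefect.card_le (hD : IsDefect G I A w t D) (hi : i ∈ I) (hA : 4 * #I * w ≤ #(A i)) :
    (#(A i) : ℝ) ≤ 2 * #(residual I A D i) :=
  card_le_two_mul_card_sdiff_biUnion _ (fun j hj => (hD.card_lt i hi j hj).le)
    (by linarith [show (0 : ℝ) ≤ #(A i) by positivity])

lemma card_nbhdIn_mul_le_of_lt {B C S T : Finset V} (hS : (#B : ℝ) ≤ 2 * #S) (hT : T ⊆ C)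
    (ht : 0 ≤ t) (h : (#(nbhdIn G X T) : ℝ) < t / 2 * #X / #S * #T) :
    (#(nbhdIn G X T) : ℝ) * #B ≤ t * #X * #C := by
  have hS0 : (0 : ℝ) < #S := by
    by_contra! hS0
    rw [hS0.antisymm (by positivity)] at h
    have : (0 : ℝ) ≤ #(nbhdIn G X T) := by positivity
    simp only [div_zero, zero_mul] at h
    linarith
  rw [div_mul_eq_mul_div, lt_div_iff₀ hS0] at h
  calc (#(nbhdIn G X T) : ℝ) * #B ≤ #(nbhdIn G X T) * (2 * #S) := by gcongr
    _ = 2 * (#(nbhdIn G X T) * #S) := by ring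
    _ ≤ 2 * (t / 2 * #X * #T) := by linarith
    _ = t * #X * #T := by ring
    _ ≤ t * #X * #C := by gcongr

/-- A set of at most `2w` vertices with few neighbours in `T` has less than `w` vertices, since by
coherence any `w` vertices have neighbours almost everywhere in `T`. -/
lemma Coherent.card_lt_of_card_nbhdIn_mul_le {B C T : Finset V} (hcoh : Coherent G w w)
    (hXT : Disjoint X T) (hT : (#C : ℝ) ≤ 2 * #T) (hw : 0 < w) (hC : 4 * w ≤ #C) (ht : 0 ≤ t)
    (hB : 8 * t * w ≤ #B) (hB0 : (0 : ℝ) < #B) (hX : (#X : ℝ) ≤ 2 * w)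
    (h : (#(nbhdIn G X T) : ℝ) * #B ≤ t * #X * #C) : (#X : ℝ) < w := by
  by_contra! hXw
  have hquarter : (#C : ℝ) / 4 < #(nbhdIn G X T) := by
    linarith [hcoh.card_nbhdIn_gt hXT hXw]
  have hC0 : (0 : ℝ) < #C := by linarith
  refine lt_irrefl ((#C : ℝ) / 4 * #B) ?_
  calc (#C : ℝ) / 4 * #B < #(nbhdIn G X T) * #B := by gcongr
    _ ≤ t * #X * #C := h
    _ ≤ t * (2 * w) * #C := by gcongr
    _ = #C / 4 * (8 * t * w) := by ring
    _ ≤ #C / 4 * #B := by gcongr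

lemma IsDefect.enlarge {U : Finset V} (hD : IsDefect G I A w t D) (hij : i ≠ j) (hDU : D i j ⊆ U)
    (hUA : U ⊆ A i) (hU : (#U : ℝ) < w)
    (h : (#(nbhdIn G U (residual I A D j)) : ℝ) * #(A i) ≤ t * #U * #(A j)) :
    IsDefect G I A w t fun a b => if a = i ∧ b = j then U else D a b := by
  set D' : ι → ι → Finset V := fun a b => if a = i ∧ b = j then U else D a b
  have hle : ∀ a b, D a b ⊆ D' a b := by grind
  have hres (S : Finset V) (b : ι) :
      (#(nbhdIn G S (residual I A D' b)) : ℝ) ≤ #(nbhdIn G S (residual I A D b)) := by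
    gcongr; exact nbhdIn_mono subset_rfl (residual_anti hle b)
  constructor <;> intro a ha b hb <;> by_cases hab : a = i ∧ b = j
  · simpa only [D', hab, and_self, if_true] using hUA
  · simpa only [D', hab, if_false] using hD.subset a ha b hb
  · simpa only [D', hab, and_self, if_true] using hU
  · simpa only [D', hab, if_false] using hD.card_lt a ha b hb
  · obtain ⟨rfl, rfl⟩ := hab
    simp only [D', and_self, if_true]
    exact fun _ => (mul_le_mul_of_nonneg_right (hres _ _) (by positivity)).trans h
  · simp only [D', hab, if_false]
    exact fun hne => (mul_le_mul_of_nonneg_right (hres _ _) (by positivity)).trans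
      (hD.card_nbhdIn_le a ha b hb hne)

lemma IsDefect.exists_ssuperset (hD : IsDefect G I A w t D) (hcol : IsColoredBy col I A)
    (hcoh : Coherent G w w) (hw : 0 < w) (ht : 0 ≤ t) (h1 : ∀ i ∈ I, 8 * t * w ≤ #(A i))
    (h2 : ∀ i ∈ I, 4 * #I * w ≤ #(A i)) (hexp : ¬ IsExpanding G I (residual I A D) (t / 2)) :
    ∃ i ∈ I, ∃ j ∈ I, i ≠ j ∧ ∃ U ⊆ A i, D i j ⊂ U ∧ #U < w ∧
      (#(nbhdIn G U (residual I A D j)) : ℝ) * #(A i) ≤ t * #U * #(A j) := by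
  simp only [IsExpanding] at hexp
  push Not at hexp
  obtain ⟨i, hi, j, hj, hij, X, hX, hlt⟩ := hexp
  set T := residual I A D j
  have hlarge : ∀ a ∈ I, 4 * w ≤ #(A a) := fun a ha => by
    have : (1 : ℝ) ≤ #I := by exact_mod_cast card_pos.mpr ⟨a, ha⟩
    nlinarith [h2 a ha]
  have hTcard := hD.card_le hj (h2 j hj)
  have hsparse : (#(nbhdIn G X T) : ℝ) * #(A i) ≤ t * #X * #(A j) :=
    card_nbhdIn_mul_le_of_lt (hD.card_le hi (h2 i hi)) (residual_subset I A D j) ht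
      (hlt.trans_le (by gcongr; exact min_le_left _ _))
  have hhalf : (#(nbhdIn G X T) : ℝ) < 1 / 2 * #T :=
    hlt.trans_le (by gcongr; exact min_le_right _ _)
  have hUA : D i j ∪ X ⊆ A i :=
    union_subset (hD.subset i hi j hj) (hX.trans (residual_subset I A D i))
  have hUT : Disjoint (D i j ∪ X) T :=
    (hcol.disjoint hi hj hij).mono hUA (residual_subset I A D j)
  have hXw : (#X : ℝ) < w := by
    by_contra! hge
    linarith [hcoh.card_nbhdIn_gt (hUT.mono_left subset_union_right) hge, hlarge j hj]
  have hDX : Disjoint (D i j) X := (disjoint_residual hj).mono_right hX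
  have hU : (#(D i j ∪ X) : ℝ) = #(D i j) + #X := by exact_mod_cast card_union_of_disjoint hDX
  have hUsparse : (#(nbhdIn G (D i j ∪ X) T) : ℝ) * #(A i) ≤ t * #(D i j ∪ X) * #(A j) := by
    have hsum : (#(nbhdIn G (D i j ∪ X) T) : ℝ) ≤ #(nbhdIn G (D i j) T) + #(nbhdIn G X T) := by
      rw [nbhdIn_union]; exact_mod_cast card_union_le _ _
    rw [hU]
    nlinarith [hD.card_nbhdIn_le i hi j hj hij, show (0 : ℝ) ≤ #(A i) by positivity]
  have hXne : X ≠ ∅ := by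
    rintro rfl
    norm_num at hlt
  refine ⟨i, hi, j, hj, hij, D i j ∪ X, hUA, ?_, ?_, hUsparse⟩
  · exact subset_union_left.ssubset_of_ne fun h =>
      hXne (hDX.symm.eq_bot_of_le (h ▸ subset_union_right))
  · exact hcoh.card_lt_of_card_nbhdIn_mul_le hUT hTcard hw (hlarge j hj) ht (h1 i hi)
      (by linarith [hlarge i hi]) (by linarith [hD.card_lt i hi j hj]) hUsparse

lemma exists_subset_isExpanding (hcol : IsColoredBy col I A) (hcoh : Coherent G w w) (hw : 0 < w)
    (ht : 0 ≤ t) (h1 : ∀ i ∈ I, 8 * t * w ≤ #(A i)) (h2 : ∀ i ∈ I, 4 * #I * w ≤ #(A i)) :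
    ∃ A' : ι → Finset V, (∀ i, A' i ⊆ A i) ∧ (∀ i ∈ I, (#(A i) : ℝ) ≤ 2 * #(A' i)) ∧
      IsExpanding G I A' (t / 2) := by
  obtain ⟨D, hD, hmin⟩ := exists_minimalFor_of_wellFoundedLT (IsDefect G I A w t)
    (fun D => ∑ i ∈ I, ∑ j ∈ I, #(A i \ D i j)) ⟨_, isDefect_empty hw⟩
  refine ⟨residual I A D, residual_subset I A D, fun i hi => hD.card_le hi (h2 i hi), ?_⟩
  by_contra hexp
  obtain ⟨i, hi, j, hj, hij, U, hUA, hDU, hU, hsparse⟩ :=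
    hD.exists_ssuperset hcol hcoh hw ht h1 h2 hexp
  set D' : ι → ι → Finset V := fun a b => if a = i ∧ b = j then U else D a b with hD'
  have hle : ∀ a b, D a b ⊆ D' a b := by grind
  have hssub : A i \ D' i j ⊂ A i \ D i j := by
    obtain ⟨v, hvU, hvD⟩ := exists_of_ssubset hDU
    refine (ssubset_iff_of_subset (sdiff_subset_sdiff subset_rfl (hle i j))).mpr ⟨v, ?_, ?_⟩
    · exact mem_sdiff.mpr ⟨hUA hvU, hvD⟩
    · simp [hD', hvU]
  have hlt : ∑ a ∈ I, ∑ b ∈ I, #(A a \ D' a b) < ∑ a ∈ I, ∑ b ∈ I, #(A a \ D a b) :=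
    have hterm (a b) : #(A a \ D' a b) ≤ #(A a \ D a b) := by gcongr; exact hle a b
    sum_lt_sum (fun a _ => sum_le_sum fun b _ => hterm a b)
      ⟨i, hi, sum_lt_sum (fun b _ => hterm i b) ⟨j, hj, card_lt_card hssub⟩⟩
  exact hlt.not_ge (hmin (hD.enlarge hij hDU.subset hUA hU hsparse) hlt.le)

end Expansion

/-- The list `l` of vertices is an induced path of `G` from `x` to `y` whose vertices have distinct
colours. -/
structure IsRainbowPath {κ : Type*} (G : SimpleGraph V) (col : V → κ) (x y : V) (l : List V) :
    Prop where
  head : l.head? = some x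
  getLast : l.getLast? = some y
  adj_iff : ∀ (i j : ℕ) (hi : i < l.length) (hj : j < l.length), i < j →
    (G.Adj l[i] l[j] ↔ j = i + 1)
  nodup : (l.map col).Nodup

namespace IsRainbowPath

variable {κ : Type*} {G : SimpleGraph V} {col : V → κ} {x y a b r : V} {l P Q : List V}

lemma mem_left (h : IsRainbowPath G col x y l) : x ∈ l :=
  List.mem_of_head? h.head

lemma mem_right (h : IsRainbowPath G col x y l) : y ∈ l :=
  List.mem_of_getLast? h.getLast

lemma length_pos (h : IsRainbowPath G col x y l) : 0 < l.length :=
  List.length_pos_of_mem h.mem_left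

lemma getElem_eq_left_iff (h : IsRainbowPath G col x y l) {i : ℕ} (hi : i < l.length) :
    l[i] = x ↔ i = 0 := by
  have hx : x = l[0]'h.length_pos := by
    simpa [List.head?_eq_getElem?, List.getElem?_eq_getElem h.length_pos] using h.head.symm
  rw [hx, h.nodup.of_map.getElem_inj_iff]

lemma getElem_eq_right_iff (h : IsRainbowPath G col x y l) {i : ℕ} (hi : i < l.length) :
    l[i] = y ↔ i + 1 = l.length := by
  have hlast : l.length - 1 < l.length := by omega
  have hy : y = l[l.length - 1] := by
    simpa [List.getLast?_eq_getElem?, List.getElem?_eq_getElem hlast] using h.getLast.symm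
  rw [hy, h.nodup.of_map.getElem_inj_iff]
  omega

lemma two_le_length_iff (h : IsRainbowPath G col x y l) : 2 ≤ l.length ↔ x ≠ y := by
  have hx := (h.getElem_eq_left_iff h.length_pos).mpr rfl
  have hy := h.getElem_eq_right_iff h.length_pos
  rw [hx] at hy
  have := h.length_pos
  rw [Ne, hy]
  omega

lemma singleton (G : SimpleGraph V) (col : V → κ) (x : V) : IsRainbowPath G col x x [x] where
  head := rfl
  getLast := rfl
  adj_iff i j hi hj hij := by simp only [List.length_singleton] at hj; omega
  nodup := List.nodup_singleton _

lemma append (hP : IsRainbowPath G col x a P) (hQ : IsRainbowPath G col b y Q)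
    (hadj : ∀ p ∈ P, ∀ q ∈ Q, G.Adj p q ↔ p = a ∧ q = b)
    (hcol : ∀ p ∈ P, ∀ q ∈ Q, col p ≠ col q) : IsRainbowPath G col x y (P ++ Q) where
  head := by simp [List.head?_append, hP.head]
  getLast := by simp [List.getLast?_append, hQ.getLast]
  adj_iff i j hi hj hij := by
    rw [List.length_append] at hi hj
    simp only [List.getElem_append]
    split_ifs with h1 h2 h2
    · exact hP.adj_iff i j h1 h2 hij
    · rw [hadj _ (List.getElem_mem _) _ (List.getElem_mem _), hP.getElem_eq_right_iff,
        hQ.getElem_eq_left_iff]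
      omega
    · omega
    · rw [hQ.adj_iff _ _ _ _ (by omega)]
      omega
  nodup := by
    rw [List.map_append, List.nodup_append]
    refine ⟨hP.nodup, hQ.nodup, ?_⟩
    simpa only [List.forall_mem_map] using hcol

lemma reverse (h : IsRainbowPath G col x y l) : IsRainbowPath G col y x l.reverse where
  head := by rw [List.head?_reverse, h.getLast]
  getLast := by rw [List.getLast?_reverse, h.head]
  adj_iff i j hi hj hij := by
    simp only [List.length_reverse] at hi hj
    simp only [List.getElem_reverse]
    rw [G.adj_comm, h.adj_iff _ _ (by omega) (by omega) (by omega)]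
    omega
  nodup := by rw [List.map_reverse, List.nodup_reverse]; exact h.nodup

lemma take (h : IsRainbowPath G col x y l) {i : ℕ} (hi : i < l.length) :
    IsRainbowPath G col x l[i] (l.take (i + 1)) where
  head := by rw [List.head?_take, if_neg (by omega), h.head]
  getLast := by simp [List.getLast?_eq_getElem?, List.length_take, Nat.min_eq_left hi]
  adj_iff a b ha hb hab := by
    simp only [List.length_take] at ha hb
    simp only [List.getElem_take]
    exact h.adj_iff _ _ _ _ hab
  nodup := h.nodup.sublist ((List.take_sublist _ _).map col)

lemma exists_prefix (h : IsRainbowPath G col x y l) {p : V → Prop} (hp : ∃ v ∈ l, p v) :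
    ∃ l' a, l' <+: l ∧ IsRainbowPath G col x a l' ∧ p a ∧ ∀ v ∈ l', p v → v = a := by
  have hex : ∃ i, ∃ hi : i < l.length, p l[i] := by
    obtain ⟨v, hv, hpv⟩ := hp
    obtain ⟨i, hi, rfl⟩ := List.mem_iff_getElem.mp hv
    exact ⟨i, hi, hpv⟩
  obtain ⟨hi, hpi⟩ := Nat.find_spec hex
  refine ⟨l.take (Nat.find hex + 1), l[Nat.find hex], List.take_prefix _ _, h.take hi, hpi, ?_⟩
  intro v hv hpv
  obtain ⟨k, hk, rfl⟩ := List.mem_iff_getElem.mp hv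
  simp only [List.length_take] at hk
  simp only [List.getElem_take] at hpv ⊢
  have hle : Nat.find hex ≤ k := Nat.find_min' hex ⟨by omega, hpv⟩
  congr 1
  omega

lemma exists_eq_append_singleton (h : IsRainbowPath G col x r l) (hxr : x ≠ r) :
    ∃ l₀ a, l = l₀ ++ [r] ∧ IsRainbowPath G col x a l₀ ∧ ∀ v ∈ l₀, v ≠ r ∧ (G.Adj v r ↔ v = a) := by
  have hlen := h.two_le_length_iff.mpr hxr
  have hpre := h.take (i := l.length - 2) (by omega)
  rw [show l.length - 2 + 1 = l.length - 1 by omega, ← List.dropLast_eq_take] at hpre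
  refine ⟨l.dropLast, _, (List.dropLast_append_getLast? _ h.getLast).symm, hpre, ?_⟩
  intro v hv
  obtain ⟨k, hk, rfl⟩ := List.mem_iff_getElem.mp hv
  have hlast := (h.getElem_eq_right_iff (i := l.length - 1) (by omega)).mpr (by omega)
  rw [hpre.getElem_eq_right_iff hk]
  rw [List.length_dropLast] at hk ⊢
  simp only [List.getElem_dropLast]
  refine ⟨fun hkr => ?_, ?_⟩
  · have := (h.getElem_eq_right_iff _).mp hkr
    omega
  · rw [← hlast, h.adj_iff _ _ _ _ (by omega)]
    omega

lemma exists_join (hP : IsRainbowPath G col x r P) (hQ : IsRainbowPath G col y r Q) (hxr : x ≠ r)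
    (hPQ : ∀ p ∈ P, ∀ q ∈ Q, col p = col q → p = r) :
    ∃ R, IsRainbowPath G col x y R ∧ R.length + 1 ≤ P.length + Q.length ∧
      ∀ v ∈ R, v ∈ P ∨ v ∈ Q := by
  obtain ⟨P₀, a₀, rfl, hP₀, hadj₀⟩ := hP.exists_eq_append_singleton hxr
  obtain ⟨P₁, a, hP₁P, hP₁, ⟨q, hq, haq⟩, ha⟩ := hP₀.exists_prefix
    (p := fun v => ∃ q ∈ Q, G.Adj v q)
    ⟨a₀, hP₀.mem_right, r, hQ.mem_right, (hadj₀ a₀ hP₀.mem_right).2.mpr rfl⟩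
  obtain ⟨Q₁, b, hQ₁Q, hQ₁, hab, hb⟩ := hQ.exists_prefix (p := G.Adj a) ⟨q, hq, haq⟩
  have hQ₁mem : ∀ v ∈ Q₁.reverse, v ∈ Q := fun v hv => hQ₁Q.subset (List.mem_reverse.mp hv)
  refine ⟨P₁ ++ Q₁.reverse, hP₁.append hQ₁.reverse ?_ ?_, ?_, ?_⟩
  · intro p hp q hq
    constructor
    · intro hpq
      obtain rfl := ha p hp ⟨q, hQ₁mem q hq, hpq⟩
      exact ⟨rfl, hb q (List.mem_reverse.mp hq) hpq⟩
    · rintro ⟨rfl, rfl⟩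
      exact hab
  · intro p hp q hq hpq
    have hp₀ := hP₁P.subset hp
    exact (hadj₀ p hp₀).1 (hPQ p (List.mem_append_left _ hp₀) q (hQ₁mem q hq) hpq)
  · have h1 := hP₁P.length_le
    have h2 := hQ₁Q.length_le
    simp only [List.length_append, List.length_reverse, List.length_singleton]
    omega
  · intro v hv
    rcases List.mem_append.mp hv with hv | hv
    · exact .inl (List.mem_append_left _ (hP₁P.subset hv))
    · exact .inr (hQ₁mem v hv)

lemma exists_glue (hP : IsRainbowPath G col x r P) (hQ : IsRainbowPath G col y r Q) (hyr : y ≠ r)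
    (hadj : ∀ p ∈ P, p ≠ r → ∀ q ∈ Q, q ≠ r → ¬ G.Adj p q)
    (hcol : ∀ p ∈ P, ∀ q ∈ Q, q ≠ r → col p ≠ col q) :
    ∃ R, IsRainbowPath G col x y R ∧ R.length + 1 = P.length + Q.length ∧
      ∀ v ∈ R, v ∈ P ∨ v ∈ Q := by
  obtain ⟨Q₀, b, rfl, hQ₀, hadj₀⟩ := hQ.exists_eq_append_singleton hyr
  have hmem : ∀ q ∈ Q₀.reverse, q ∈ Q₀ ++ [r] ∧ q ≠ r ∧ (G.Adj q r ↔ q = b) := fun q hq =>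
    ⟨List.mem_append_left _ (List.mem_reverse.mp hq), hadj₀ q (List.mem_reverse.mp hq)⟩
  refine ⟨P ++ Q₀.reverse, hP.append hQ₀.reverse ?_ ?_, by simp; omega, ?_⟩
  · intro p hp q hq
    obtain ⟨hqQ, hqr, hqb⟩ := hmem q hq
    rcases eq_or_ne p r with rfl | hpr
    · rw [G.adj_comm, hqb]
      simp
    · simpa [hpr] using hadj p hp hpr q hqQ hqr
  · exact fun p hp q hq => hcol p hp q (hmem q hq).1 (hmem q hq).2.1
  · intro v hv
    exact (List.mem_append.mp hv).imp_right fun hv => (hmem v hv).1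

end IsRainbowPath

section Cones

variable {ι : Type*} {G : SimpleGraph V} {col : V → ι} {I J K : Finset ι} {A B : ι → Finset V}
  {X U : Finset V} {i i₀ : ι} {r : V} {m : ℕ} {t th lam s : ℝ}

/-- For a minimal set `Y` that covers a `g`-fraction of some block, deleting one vertex of `Y`
shows that it covers at most a `(g + lam)`-fraction of every block. -/
lemma exists_subset_nbhdIn_balanced {a : ι → ℝ} {g : ℝ} (hg : 0 < g) (ha : ∀ j ∈ K, 0 < a j)
    (hX : ∃ j ∈ K, g * a j ≤ #(nbhdIn G X (B j)))
    (hlam : ∀ v ∈ X, ∀ j ∈ K, (#(nbrsIn G v (B j)) : ℝ) ≤ lam * a j) :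
    ∃ Y ⊆ X, ∃ f, g ≤ f ∧ f ≤ g + lam ∧ ∃ k ∈ K, f * a k = #(nbhdIn G Y (B k)) ∧
      ∀ j ∈ K, (#(nbhdIn G Y (B j)) : ℝ) ≤ f * a j := by
  obtain ⟨Y, ⟨hYX, j₁, hj₁, hYj₁⟩, hmin⟩ := exists_minimalFor_of_wellFoundedLT
    (fun Y => Y ⊆ X ∧ ∃ j ∈ K, g * a j ≤ #(nbhdIn G Y (B j))) card ⟨X, subset_rfl, hX⟩
  have hYne : Y.Nonempty := by
    rw [nonempty_iff_ne_empty]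
    rintro rfl
    have : 0 < g * a j₁ := mul_pos hg (ha j₁ hj₁)
    simp only [nbhdIn_empty, card_empty, Nat.cast_zero] at hYj₁
    linarith
  obtain ⟨y, hy⟩ := hYne
  have hY : ∀ j ∈ K, (#(nbhdIn G Y (B j)) : ℝ) ≤ (g + lam) * a j := by
    intro j hj
    have herase : (#(nbhdIn G (Y.erase y) (B j)) : ℝ) < g * a j := by
      by_contra! hge
      exact (card_erase_lt_of_mem hy).not_ge
        (hmin ⟨(erase_subset _ _).trans hYX, j, hj, hge⟩ card_erase_le)
    have hsplit : (#(nbhdIn G Y (B j)) : ℝ) ≤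
        #(nbhdIn G (Y.erase y) (B j)) + #(nbrsIn G y (B j)) := by
      conv_lhs => rw [← insert_erase hy, insert_eq, union_comm, nbhdIn_union, nbhdIn_singleton]
      exact_mod_cast card_union_le _ _
    linarith [hlam y (hYX hy) j hj]
  obtain ⟨k, hk, hmax⟩ :=
    exists_max_image K (fun j => (#(nbhdIn G Y (B j)) : ℝ) / a j) ⟨j₁, hj₁⟩
  refine ⟨Y, hYX, #(nbhdIn G Y (B k)) / a k, ?_, ?_, k, hk, ?_, fun j hj => ?_⟩
  · exact ((le_div_iff₀ (ha j₁ hj₁)).mpr hYj₁).trans (hmax j₁ hj₁)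
  · exact (div_le_iff₀ (ha k hk)).mpr (hY k hk)
  · exact div_mul_cancel₀ _ (ha k hk).ne'
  · exact (div_le_iff₀ (ha j hj)).mp (hmax j hj)

/-- A cone with apex `r`: every vertex of the base `X`, a set of relative size at least `s` in the
block `A i`, is joined to `r` by a rainbow induced path of `m + 1` vertices that uses the colours
in `J`. Apart from their first vertices the paths run inside `U`, which touches only a small
part of each block not in `J`. -/
structure IsCone (G : SimpleGraph V) (col : V → ι) (I : Finset ι) (A : ι → Finset V) (r : V)
    (m : ℕ) (s : ℝ) (J : Finset ι) (i : ι) (X U : Finset V) : Prop where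
  subset : J ⊆ I
  card_eq : #J = m + 1
  col_apex_mem : col r ∈ J
  mem : i ∈ J
  base_subset : X ⊆ A i
  card_base : s * #(A i) ≤ #X
  card_nbhdIn_le : ∀ j ∈ I, j ∉ J → (#(nbhdIn G U (A j)) : ℝ) ≤ 2 * m * s * #(A j)
  exists_path : ∀ x ∈ X, ∃ l, IsRainbowPath G col x r l ∧ l.length = m + 1 ∧
    (∀ v ∈ l, col v ∈ J ∧ v ∈ A (col v)) ∧ ∀ v ∈ l, v ≠ x → v ∈ U

lemma isCone_singleton (hcol : IsColoredBy col I A) (hi : i ∈ I) (hr : r ∈ A i)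
    (hs : s * #(A i) ≤ 1) : IsCone G col I A r 0 s {i} i {r} ∅ where
  subset := singleton_subset_iff.mpr hi
  card_eq := card_singleton i
  col_apex_mem := mem_singleton.mpr (hcol i hi r hr)
  mem := mem_singleton_self i
  base_subset := singleton_subset_iff.mpr hr
  card_base := by simpa using hs
  card_nbhdIn_le j _ _ := by simp
  exists_path := by
    simp only [mem_singleton, forall_eq]
    refine ⟨[r], .singleton G col r, rfl, ?_, by simp⟩
    simpa [hcol i hi r hr] using hr

lemma IsCone.card_le_nbhdIn_sdiff (h : IsCone G col I A r m s J i X U) (hexp : IsExpanding G I A t)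
    (hs : 0 < s) (hsth : s ≤ th) (htm : 4 * m ≤ t) (hth : (2 * m + 1) * th ≤ 1 / 2)
    (hAi : (A i).Nonempty) {j : ι} (hj : j ∈ I) (hjJ : j ∉ J) :
    min (t * s / 2) th * #(A j) ≤ #(nbhdIn G X (A j \ nbhdIn G U (A j))) := by
  have hAi : (0 : ℝ) < #(A i) := by exact_mod_cast hAi.card_pos
  have hij : i ≠ j := fun hij => hjJ (hij ▸ h.mem)
  set g := min (t * s / 2) th
  have hsplit : (#(nbhdIn G X (A j)) : ℝ) ≤
      #(nbhdIn G X (A j \ nbhdIn G U (A j))) + #(nbhdIn G U (A j)) := by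
    norm_cast
    refine (card_le_card fun v hv => ?_).trans (card_union_le _ _)
    simp only [mem_union, mem_nbhdIn, mem_sdiff] at hv ⊢
    grind
  have : (0 : ℝ) ≤ m := by positivity
  have hgm : g + 2 * m * s ≤ min (t * #X / #(A i)) (1 / 2) := by
    apply le_min
    · have hts : t * s ≤ t * #X / #(A i) := by
        rw [le_div_iff₀ hAi, mul_assoc]
        exact mul_le_mul_of_nonneg_left h.card_base (by linarith)
      have hg : g ≤ t * s / 2 := min_le_left _ _
      nlinarith
    · have hg : g ≤ th := min_le_right _ _
      nlinarith
  have hX := hexp i (h.subset h.mem) j hj hij X h.base_subset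
  have hU := h.card_nbhdIn_le j hj hjJ
  have hgX : (g + 2 * m * s) * #(A j) ≤ #(nbhdIn G X (A j)) := le_trans (by gcongr) hX
  linarith

lemma IsCone.exists_path_cons (h : IsCone G col I A r m s J i X U) (hcol : IsColoredBy col I A)
    {j : ι} (hj : j ∈ I) (hjJ : j ∉ J) {Y : Finset V} (hYX : Y ⊆ X) {x : V}
    (hx : x ∈ nbhdIn G Y (A j \ nbhdIn G U (A j))) :
    ∃ l, IsRainbowPath G col x r l ∧ l.length = m + 1 + 1 ∧
      (∀ v ∈ l, col v ∈ insert j J ∧ v ∈ A (col v)) ∧ ∀ v ∈ l, v ≠ x → v ∈ U ∪ Y := by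
  simp only [mem_nbhdIn, mem_sdiff, not_and, not_exists] at hx
  obtain ⟨⟨hxA, hxU⟩, y, hy, hyx⟩ := hx
  obtain ⟨l, hl, hlen, hlJ, hlU⟩ := h.exists_path y (hYX hy)
  have hxcol : col x = j := hcol j hj x hxA
  have hadj : ∀ q ∈ l, (G.Adj x q ↔ q = y) := by
    refine fun q hq => ⟨fun hxq => ?_, fun hqy => hqy ▸ hyx.symm⟩
    by_contra hqy
    exact hxU hxA q (hlU q hq hqy) hxq.symm
  refine ⟨[x] ++ l, (IsRainbowPath.singleton G col x).append hl ?_ ?_, by simp [hlen, add_comm],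
    ?_, ?_⟩
  · simpa using hadj
  · rintro p hp q hq
    rw [List.mem_singleton.mp hp, hxcol]
    exact fun hjq => hjJ (hjq ▸ (hlJ q hq).1)
  · intro v hv
    rcases List.mem_cons.mp hv with rfl | hv
    · exact ⟨hxcol ▸ mem_insert_self _ _, hxcol ▸ hxA⟩
    · exact ⟨mem_insert_of_mem (hlJ v hv).1, (hlJ v hv).2⟩
  · intro v hv hvx
    have hvl := (List.mem_cons.mp hv).resolve_left hvx
    by_cases hvy : v = y
    · exact mem_union_right _ (hvy ▸ hy)
    · exact mem_union_left _ (hlU v hvl hvy)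

lemma IsCone.exists_succ (h : IsCone G col I A r m s J i X U) (hcol : IsColoredBy col I A)
    (hne : ∀ i ∈ I, (A i).Nonempty) (hexp : IsExpanding G I A t) (hlink : HasLinkageLE G I A lam)
    (hlam : lam ≤ th) (hs : 0 < s) (hsth : s ≤ th) (ht : 2 ≤ t) (htm : 4 * m ≤ t)
    (hth : (2 * m + 1) * th ≤ 1 / 2) (hm : m + 1 < #I) :
    ∃ J i X U s', min (t * s / 2) th ≤ s' ∧ s' ≤ th ∧ IsCone G col I A r (m + 1) s' J i X U := by
  have hApos : ∀ j ∈ I, (0 : ℝ) < #(A j) := fun j hj => by exact_mod_cast (hne j hj).card_pos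
  have hiI := h.subset h.mem
  have hgs : s ≤ min (t * s / 2) th := le_min (by nlinarith) hsth
  set g := min (t * s / 2) th
  obtain ⟨j₁, hj₁, hj₁J⟩ := exists_mem_notMem_of_card_lt_card (h.card_eq ▸ hm)
  obtain ⟨Y, hYX, f, hgf, hfg, k, hk, hYk, hY⟩ := exists_subset_nbhdIn_balanced (lam := lam)
    (K := {j ∈ I | j ∉ J}) (B := fun j => A j \ nbhdIn G U (A j)) (hs.trans_le hgs)
    (fun j hj => hApos j (mem_filter.mp hj).1)
    ⟨j₁, mem_filter.mpr ⟨hj₁, hj₁J⟩,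
      h.card_le_nbhdIn_sdiff hexp hs hsth htm hth (hne i hiI) hj₁ hj₁J⟩
    (fun v hv j hj => by
      obtain ⟨hj, hjJ⟩ := mem_filter.mp hj
      refine le_trans ?_ (hlink i hiI j hj (fun hij => hjJ (hij ▸ h.mem)) v (h.base_subset hv))
      gcongr
      exact nbrsIn_mono sdiff_subset)
  obtain ⟨hk, hkJ⟩ := mem_filter.mp hk
  have hgth : g ≤ th := min_le_right _ _
  have hf : f ≤ 2 * min f th := by
    rcases min_cases f th with ⟨hmin, _⟩ | ⟨hmin, _⟩ <;> rw [hmin] <;> linarith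
  refine ⟨insert k J, k, nbhdIn G Y (A k \ nbhdIn G U (A k)), U ∪ Y, min f th, le_min hgf hgth,
    min_le_right _ _, insert_subset hk h.subset, by rw [card_insert_of_notMem hkJ, h.card_eq],
    mem_insert_of_mem h.col_apex_mem, mem_insert_self _ _,
    (nbhdIn_subset _ _ _).trans sdiff_subset, ?_, fun j hj hjJ => ?_,
    fun x hx => h.exists_path_cons hcol hk hkJ hYX hx⟩
  · rw [← hYk]
    gcongr
    exact min_le_left _ _
  · rw [mem_insert, not_or] at hjJ
    have hsplit : (#(nbhdIn G (U ∪ Y) (A j)) : ℝ) ≤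
        #(nbhdIn G U (A j)) + #(nbhdIn G Y (A j \ nbhdIn G U (A j))) := by
      norm_cast
      refine (card_le_card fun v hv => ?_).trans (card_union_le _ _)
      simp only [mem_union, mem_nbhdIn, mem_sdiff] at hv ⊢
      grind
    have hUj := h.card_nbhdIn_le j hj hjJ.2
    have hYj := hY j (mem_filter.mpr ⟨hj, hjJ.2⟩)
    have hs' : s ≤ min f th := le_min (hgs.trans hgf) hsth
    push_cast
    calc (#(nbhdIn G (U ∪ Y) (A j)) : ℝ) ≤ 2 * m * s * #(A j) + f * #(A j) := by linarith
      _ ≤ 2 * m * min f th * #(A j) + 2 * min f th * #(A j) := by gcongr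
      _ = 2 * (m + 1) * min f th * #(A j) := by ring

lemma exists_isCone (hcol : IsColoredBy col I A) (hne : ∀ i ∈ I, (A i).Nonempty)
    (hexp : IsExpanding G I A t) (hlink : HasLinkageLE G I A lam) (hlam : lam ≤ th) (hth0 : 0 < th)
    (ht : 2 ≤ t) (hi₀ : i₀ ∈ I) (hr : r ∈ A i₀) (m : ℕ) (hm : m < #I) (htm : 4 * m ≤ t)
    (hth : (2 * m + 1) * th ≤ 1 / 2) :
    ∃ J i X U s, min ((t / 2) ^ m / #(A i₀)) th ≤ s ∧ s ≤ th ∧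
      IsCone G col I A r m s J i X U := by
  have hA₀ : (0 : ℝ) < #(A i₀) := by exact_mod_cast (hne i₀ hi₀).card_pos
  induction m with
  | zero =>
    refine ⟨{i₀}, i₀, {r}, ∅, min (1 / #(A i₀)) th, by rw [pow_zero], min_le_right _ _,
      isCone_singleton hcol hi₀ hr ?_⟩
    calc min (1 / (#(A i₀) : ℝ)) th * #(A i₀) ≤ 1 / #(A i₀) * #(A i₀) := by
          gcongr; exact min_le_left _ _
      _ = 1 := div_mul_cancel₀ _ hA₀.ne'
  | succ m ih =>
    push_cast at htm hth
    obtain ⟨J, i, X, U, s, hs, hsth, hcone⟩ := ih (by omega) (by linarith) (by nlinarith)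
    have hs0 : 0 < s := (lt_min (by positivity) hth0).trans_le hs
    obtain ⟨J', i', X', U', s', hs', hsth', hcone'⟩ := hcone.exists_succ hcol hne hexp hlink hlam
      hs0 hsth ht (by linarith) (by nlinarith) hm
    refine ⟨J', i', X', U', s', le_trans (le_min ?_ (min_le_right _ _)) hs', hsth', hcone'⟩
    rcases inf_le_iff.mp hs with hs | hs
    · calc min ((t / 2) ^ (m + 1) / #(A i₀)) th ≤ (t / 2) ^ (m + 1) / #(A i₀) := min_le_left _ _
        _ = (t / 2) ^ m / #(A i₀) * (t / 2) := by ring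
        _ ≤ s * (t / 2) := by gcongr
        _ = t * s / 2 := by ring
    · calc min ((t / 2) ^ (m + 1) / #(A i₀)) th ≤ th := min_le_right _ _
        _ ≤ s := hs
        _ ≤ t * s / 2 := by nlinarith

lemma exists_isCone_of_card_le_pow (hcol : IsColoredBy col I A) (hne : ∀ i ∈ I, (A i).Nonempty)
    (hexp : IsExpanding G I A t) (hlink : HasLinkageLE G I A lam) (hlam : lam ≤ th) (hth0 : 0 < th)
    (ht : 2 ≤ t) (hi₀ : i₀ ∈ I) (hr : r ∈ A i₀) (m : ℕ) (hm : m < #I) (htm : 4 * m ≤ t)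
    (hth : (2 * m + 1) * th ≤ 1 / 2) (hbig : #(A i₀) ≤ (t / 2) ^ m) :
    ∃ J i X U, IsCone G col I A r m th J i X U := by
  obtain ⟨J, i, X, U, s, hs, hsth, hcone⟩ :=
    exists_isCone hcol hne hexp hlink hlam hth0 ht hi₀ hr m hm htm hth
  have hA₀ : (0 : ℝ) < #(A i₀) := by exact_mod_cast (hne i₀ hi₀).card_pos
  have hth1 : th ≤ 1 := by nlinarith [show (0 : ℝ) ≤ m by positivity]
  have hths : th ≤ s := by
    refine le_trans (le_min (hth1.trans ?_) le_rfl) hs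
    rwa [one_le_div hA₀]
  exact ⟨J, i, X, U, hsth.antisymm hths ▸ hcone⟩

end Cones

section Sampling

variable {α : Type*} {X S T Y : Finset V} {N N' : α → Finset V} {B B' : Finset α} {p : ℝ} {d : ℕ}

/-- The expectation of `f Y`, where the random subset `Y` of `X` contains each element of `X`
independently with probability `p`. -/
def sampleMean (p : ℝ) (X : Finset V) : (Finset V → ℝ) →ₗ[ℝ] ℝ :=
  ∑ Y ∈ X.powerset, (p ^ #Y * (1 - p) ^ (#X - #Y)) • LinearMap.proj Y

lemma sampleMean_apply (p : ℝ) (X : Finset V) (f : Finset V → ℝ) :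
    sampleMean p X f = ∑ Y ∈ X.powerset, p ^ #Y * (1 - p) ^ (#X - #Y) * f Y := by
  simp [sampleMean]

lemma sampleMean_mono (hp : 0 ≤ p) (hp1 : p ≤ 1) {f g : Finset V → ℝ}
    (h : ∀ Y ⊆ X, f Y ≤ g Y) : sampleMean p X f ≤ sampleMean p X g := by
  have : 0 ≤ 1 - p := by linarith
  rw [sampleMean_apply, sampleMean_apply]
  gcongr with Y hY
  exact h Y (mem_powerset.mp hY)

lemma sampleMean_const (p : ℝ) (X : Finset V) (r : ℝ) : sampleMean p X (fun _ => r) = r := by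
  rw [sampleMean_apply, ← sum_mul, sum_pow_mul_eq_add_pow]
  simp

lemma exists_sampleMean_le (hp : 0 ≤ p) (hp1 : p ≤ 1) (X : Finset V) (f : Finset V → ℝ) :
    ∃ Y ⊆ X, sampleMean p X f ≤ f Y := by
  obtain ⟨Y, hY, hmax⟩ := exists_max_image X.powerset f ⟨∅, empty_mem_powerset X⟩
  refine ⟨Y, mem_powerset.mp hY, ?_⟩
  calc sampleMean p X f ≤ sampleMean p X fun _ => f Y :=
        sampleMean_mono hp hp1 fun Z hZ => hmax Z (mem_powerset.mpr hZ)
    _ = f Y := sampleMean_const _ _ _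

lemma sampleMean_ite_subset (p : ℝ) (hS : S ⊆ X) :
    sampleMean p X (fun Y => if S ⊆ Y then 1 else 0) = p ^ #S := by
  have hexpand := prod_add (fun _ => p) (fun v => if v ∈ S then 0 else 1 - p) X
  have hleft : ∏ v ∈ X, (p + if v ∈ S then 0 else 1 - p) = p ^ #S := by
    simp_rw [apply_ite (p + ·), add_zero, add_sub_cancel, ← mem_coe (s := S)]
    rw [prod_ite, prod_const, prod_const_one, mul_one]
    simp [filter_mem_eq_inter, inter_eq_right.mpr hS]
  rw [← hleft, hexpand, sampleMean_apply]
  refine sum_congr rfl fun Y hY => ?_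
  rw [prod_const, mul_assoc]
  congr 1
  have hSY : (∀ v ∈ X \ Y, v ∉ S) ↔ S ⊆ Y := by
    simp only [mem_sdiff, subset_iff] at hS ⊢
    grind
  split_ifs with h
  · rw [prod_congr rfl fun v hv => if_neg (hSY.mpr h v hv), prod_const,
      card_sdiff_of_subset (mem_powerset.mp hY), mul_one]
  · obtain ⟨v, hv, hvS⟩ := not_forall₂.mp (mt hSY.mp h)
    have hzero : ∏ v ∈ X \ Y, (if v ∈ S then 0 else 1 - p) = 0 :=
      prod_eq_zero hv (if_pos (not_not.mp hvS))
    rw [hzero, mul_zero]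

lemma sampleMean_card_inter (p : ℝ) (hS : S ⊆ X) :
    sampleMean p X (fun Y => (#(S ∩ Y) : ℝ)) = p * #S := by
  have hcount : (fun Y => (#(S ∩ Y) : ℝ)) = ∑ x ∈ S, fun Y => if {x} ⊆ Y then (1 : ℝ) else 0 := by
    ext Y
    simp [singleton_subset_iff]
  rw [hcount, map_sum, sum_congr rfl fun x hx => sampleMean_ite_subset p
    (singleton_subset_iff.mpr (hS hx))]
  simp [mul_comm]

lemma sampleMean_card_inter_mul_card_inter_le (p : ℝ) (hS : S ⊆ X) (hT : T ⊆ X) :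
    sampleMean p X (fun Y => (#(S ∩ Y) : ℝ) * #(T ∩ Y)) ≤ p * #(S ∩ T) + p ^ 2 * #S * #T := by
  have hcount : (fun Y => (#(S ∩ Y) : ℝ) * #(T ∩ Y)) =
      ∑ x ∈ S, ∑ y ∈ T, fun Y => if {x, y} ⊆ Y then (1 : ℝ) else 0 := by
    ext Y
    simp [insert_subset_iff, singleton_subset_iff, ite_and]
  have hpair : ∀ x ∈ S, ∀ y ∈ T, sampleMean p X (fun Y => if {x, y} ⊆ Y then (1 : ℝ) else 0) ≤
      (if x = y then p else 0) + p ^ 2 := by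
    intro x hx y hy
    rw [sampleMean_ite_subset p (insert_subset (hS hx) (singleton_subset_iff.mpr (hT hy)))]
    split_ifs with hxy
    · rw [hxy, pair_eq_singleton, card_singleton, pow_one]
      linarith [sq_nonneg p]
    · rw [card_pair hxy, zero_add]
  rw [hcount]
  simp only [map_sum]
  refine (sum_le_sum fun x hx => sum_le_sum (hpair x hx)).trans_eq ?_
  simp only [sum_add_distrib, sum_ite_eq, sum_const, nsmul_eq_mul, ← sum_filter,
    filter_mem_eq_inter]
  ring

/-- The elements `c` of `B` for which the set `N c` meets `Y`. -/
def meeting (N : α → Finset V) (B : Finset α) (Y : Finset V) : Finset α :=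
  {c ∈ B | (N c ∩ Y).Nonempty}

lemma card_meeting_le_sum (N : α → Finset V) (B : Finset α) (Y : Finset V) :
    #(meeting N B Y) ≤ ∑ c ∈ B, #(N c ∩ Y) := by
  rw [meeting, card_filter]
  gcongr with c
  split_ifs with h
  · exact h.card_pos
  · exact Nat.zero_le _

lemma le_sampleMean_card_meeting (hp : 0 ≤ p) (hp1 : p ≤ 1) (hN : ∀ c ∈ B, N c ⊆ X)
    (hd : ∀ c ∈ B, #(N c) = d) :
    p * d * (1 - p * d) * #B ≤ sampleMean p X (fun Y => (#(meeting N B Y) : ℝ)) := by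
  -- The indicator of `k ≠ 0` is at least `2k - k²` for every natural number `k`.
  have hle : ∀ Y, (∑ c ∈ B, ((2 : ℝ) • (fun Y => (#(N c ∩ Y) : ℝ)) -
      fun Y => (#(N c ∩ Y) : ℝ) * #(N c ∩ Y))) Y ≤ #(meeting N B Y) := by
    intro Y
    rw [meeting, card_filter, Nat.cast_sum, Finset.sum_apply]
    gcongr with c
    simp only [Pi.sub_apply, Pi.smul_apply, smul_eq_mul]
    split_ifs with h
    · push_cast
      nlinarith [sq_nonneg ((#(N c ∩ Y) : ℝ) - 1)]
    · simp [not_nonempty_iff_eq_empty.mp h]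
  refine le_trans ?_ (sampleMean_mono hp hp1 fun Y _ => hle Y)
  simp only [map_sum, map_sub, map_smul, smul_eq_mul]
  rw [mul_comm, ← nsmul_eq_mul]
  refine card_nsmul_le_sum _ _ _ fun c hc => ?_
  have hsq := sampleMean_card_inter_mul_card_inter_le p (hN c hc) (hN c hc)
  rw [inter_self, hd c hc] at hsq
  rw [sampleMean_card_inter p (hN c hc), hd c hc]
  linarith

lemma sampleMean_card_meeting_mul_card_meeting_le {α' : Type*} {N' : α' → Finset V}
    {B' : Finset α'} (hp : 0 ≤ p) (hp1 : p ≤ 1) (hN : ∀ c ∈ B, N c ⊆ X)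
    (hN' : ∀ c ∈ B', N' c ⊆ X) :
    sampleMean p X (fun Y => (#(meeting N B Y) : ℝ) * #(meeting N' B' Y)) ≤
      ∑ c ∈ B, ∑ c' ∈ B', (p * #(N c ∩ N' c') + p ^ 2 * #(N c) * #(N' c')) := by
  have hle : ∀ Y, (#(meeting N B Y) : ℝ) * #(meeting N' B' Y) ≤
      (∑ c ∈ B, ∑ c' ∈ B', fun Y => (#(N c ∩ Y) : ℝ) * #(N' c' ∩ Y)) Y := by
    intro Y
    simp only [Finset.sum_apply, ← sum_mul_sum]
    gcongr
    · exact_mod_cast card_meeting_le_sum N B Y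
    · exact_mod_cast card_meeting_le_sum N' B' Y
  refine (sampleMean_mono hp hp1 fun Y _ => hle Y).trans ?_
  simp only [map_sum]
  gcongr with c hc c' hc'
  exact sampleMean_card_inter_mul_card_inter_le p (hN c hc) (hN' c' hc')

lemma card_interedges_eq_sum {α' : Type*} (R : α → α' → Prop) (B : Finset α) (B' : Finset α') :
    #(Rel.interedges R B B') = ∑ c ∈ B, #{c' ∈ B' | R c c'} := by
  simp only [Rel.interedges, card_filter, sum_product]

lemma sampleMean_card_interedges_meeting_le {α' : Type*} (hp : 0 ≤ p) (hp1 : p ≤ 1)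
    (hN : ∀ c ∈ B, N c ⊆ X) (hd : ∀ c ∈ B, #(N c) = d) (R : α → α' → Prop) (B' : Finset α') :
    sampleMean p X (fun Y => (#(Rel.interedges R (meeting N B Y) B') : ℝ)) ≤
      p * d * #(Rel.interedges R B B') := by
  have hle : ∀ Y, (#(Rel.interedges R (meeting N B Y) B') : ℝ) ≤
      (∑ c ∈ B, (#{c' ∈ B' | R c c'} : ℝ) • fun Y => (#(N c ∩ Y) : ℝ)) Y := by
    intro Y
    rw [card_interedges_eq_sum, meeting, sum_filter, Nat.cast_sum, Finset.sum_apply]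
    gcongr with c
    simp only [Pi.smul_apply, smul_eq_mul]
    split_ifs with h
    · exact le_mul_of_one_le_right (by positivity) (by exact_mod_cast h.card_pos)
    · push_cast; positivity
  refine (sampleMean_mono hp hp1 fun Y _ => hle Y).trans_eq ?_
  rw [card_interedges_eq_sum, map_sum, Nat.cast_sum, mul_sum]
  refine sum_congr rfl fun c hc => ?_
  rw [map_smul, sampleMean_card_inter p (hN c hc), hd c hc, smul_eq_mul]
  ring

end Sampling

section PrivateCovers

variable {ι : Type*} {G : SimpleGraph V} {X Y : Finset V} {I P : Finset ι}
  {B C C' : ι → Finset V} {Z : ι → Finset V} {N : V → Finset V} {R : V → V → Prop} {a b : ι} {d : ℕ}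
  {D z mu p : ℝ}

/-- The set `Z a ⊆ X` covers the block `C a`, and has no edges to the other blocks, for each
`a ∈ P`. -/
structure IsPrivateCover (G : SimpleGraph V) (X : Finset V) (I P : Finset ι)
    (C Z : ι → Finset V) : Prop where
  subset : ∀ a ∈ P, Z a ⊆ X
  exists_adj : ∀ a ∈ P, ∀ c ∈ C a, ∃ y ∈ Z a, G.Adj y c
  not_adj : ∀ a ∈ P, ∀ b ∈ I, b ≠ a → ∀ y ∈ Z a, ∀ c ∈ C b, ¬ G.Adj y c

lemma IsPrivateCover.mono (h : IsPrivateCover G X I P C Z) (hPI : P ⊆ I)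
    (hC : ∀ i ∈ I, C' i ⊆ C i) : IsPrivateCover G X I P C' Z where
  subset := h.subset
  exists_adj a ha c hc := h.exists_adj a ha c (hC a (hPI ha) hc)
  not_adj a ha b hb hba y hy c hc := h.not_adj a ha b hb hba y hy c (hC b hb hc)

lemma IsPrivateCover.update (h : IsPrivateCover G X I P C Z) (hPI : P ⊆ I) (haP : a ∉ P)
    (hC : ∀ i ∈ I, C' i ⊆ C i) (hYX : Y ⊆ X) (hcov : ∀ c ∈ C' a, ∃ y ∈ Y, G.Adj y c)
    (hmiss : ∀ b ∈ I, b ≠ a → ∀ y ∈ Y, ∀ c ∈ C' b, ¬ G.Adj y c) :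
    IsPrivateCover G X I (insert a P) C' (Function.update Z a Y) := by
  have hne : ∀ b ∈ P, b ≠ a := fun b hb hba => haP (hba ▸ hb)
  have h' := h.mono hPI hC
  constructor
  · simp only [forall_mem_insert, Function.update_self]
    refine ⟨hYX, fun b hb => ?_⟩
    rw [Function.update_of_ne (hne b hb)]
    exact h'.subset b hb
  · simp only [forall_mem_insert, Function.update_self]
    refine ⟨hcov, fun b hb => ?_⟩
    rw [Function.update_of_ne (hne b hb)]
    exact h'.exists_adj b hb
  · simp only [forall_mem_insert, Function.update_self]
    refine ⟨hmiss, fun b hb => ?_⟩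
    rw [Function.update_of_ne (hne b hb)]
    exact h'.not_adj b hb

/-- Each vertex `c` of the blocks has a set `N c` of exactly `d` of its at most `D` neighbours in
`X`, and `N c` is nearly disjoint from the neighbourhoods of the vertices not related to `c` by
`R`, a relation which has density at most `mu` between distinct blocks. Then a sparse random subset
of `X` that meets `N c` is unlikely to cover a large part of the other blocks. -/
structure IsSpread (G : SimpleGraph V) (X : Finset V) (I : Finset ι) (B : ι → Finset V)
    (N : V → Finset V) (R : V → V → Prop) (d : ℕ) (D z mu : ℝ) : Prop where
  nonempty : ∀ b ∈ I, (B b).Nonempty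
  subset_nbrsIn : ∀ b ∈ I, ∀ c ∈ B b, N c ⊆ nbrsIn G c X
  card_eq : ∀ b ∈ I, ∀ c ∈ B b, #(N c) = d
  card_nbrsIn_le : ∀ b ∈ I, ∀ c ∈ B b, (#(nbrsIn G c X) : ℝ) ≤ D
  card_inter_le : ∀ b ∈ I, ∀ c ∈ B b, ∀ b' ∈ I, ∀ c' ∈ B b', ¬ R c c' →
    (#(N c ∩ nbrsIn G c' X) : ℝ) ≤ z * d
  card_interedges_le : ∀ b ∈ I, ∀ b' ∈ I, b ≠ b' →
    (#(Rel.interedges R (B b) (B b')) : ℝ) ≤ mu * #(B b) * #(B b')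

namespace IsSpread

lemma mono {B' : ι → Finset V} {mu' : ℝ} (h : IsSpread G X I B N R d D z mu)
    (hB : ∀ b ∈ I, B' b ⊆ B b) (hne : ∀ b ∈ I, (B' b).Nonempty)
    (hR : ∀ b ∈ I, ∀ b' ∈ I, b ≠ b' →
      (#(Rel.interedges R (B' b) (B' b')) : ℝ) ≤ mu' * #(B' b) * #(B' b')) :
    IsSpread G X I B' N R d D z mu' where
  nonempty := hne
  subset_nbrsIn b hb c hc := h.subset_nbrsIn b hb c (hB b hb hc)
  card_eq b hb c hc := h.card_eq b hb c (hB b hb hc)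
  card_nbrsIn_le b hb c hc := h.card_nbrsIn_le b hb c (hB b hb hc)
  card_inter_le b hb c hc b' hb' c' hc' :=
    h.card_inter_le b hb c (hB b hb hc) b' hb' c' (hB b' hb' hc')
  card_interedges_le := hR

lemma natCast_le (h : IsSpread G X I B N R d D z mu) (ha : a ∈ I) : (d : ℝ) ≤ D := by
  obtain ⟨c, hc⟩ := h.nonempty a ha
  rw [← h.card_eq a ha c hc]
  exact le_trans (by exact_mod_cast card_le_card (h.subset_nbrsIn a ha c hc))
    (h.card_nbrsIn_le a ha c hc)

lemma card_inter_nbrsIn_le (h : IsSpread G X I B N R d D z mu) (hz : 0 ≤ z) (ha : a ∈ I)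
    (hb : b ∈ I) {c c' : V} (hc : c ∈ B a) (hc' : c' ∈ B b) :
    (#(N c ∩ nbrsIn G c' X) : ℝ) ≤ d * (z + if R c c' then 1 else 0) := by
  split_ifs with hR
  · have hle : (#(N c ∩ nbrsIn G c' X) : ℝ) ≤ d := by
      rw [← h.card_eq a ha c hc]
      exact_mod_cast card_le_card inter_subset_left
    nlinarith [show (0 : ℝ) ≤ d by positivity]
  · linarith [h.card_inter_le a ha c hc b hb c' hc' hR]

lemma sampleMean_mul_le (h : IsSpread G X I B N R d D z mu) (hz : 0 ≤ z) (hp : 0 ≤ p) (hp1 : p ≤ 1)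
    (ha : a ∈ I) (hb : b ∈ I) (hab : a ≠ b) :
    sampleMean p X (fun Y =>
      (#(meeting N (B a) Y) : ℝ) * #(meeting (fun c => nbrsIn G c X) (B b) Y)) ≤
      p * d * (z + mu + p * D) * #(B a) * #(B b) := by
  refine (sampleMean_card_meeting_mul_card_meeting_le hp hp1
    (fun c hc => (h.subset_nbrsIn a ha c hc).trans (nbrsIn_subset _ _ _))
    fun c _ => nbrsIn_subset _ _ _).trans ?_
  have hterm : ∀ c ∈ B a, ∀ c' ∈ B b,
      p * #(N c ∩ nbrsIn G c' X) + p ^ 2 * #(N c) * #(nbrsIn G c' X) ≤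
        p * d * (z + p * D) + p * d * if R c c' then 1 else 0 := by
    intro c hc c' hc'
    have hinter := h.card_inter_nbrsIn_le hz ha hb hc hc'
    have hD := h.card_nbrsIn_le b hb c' hc'
    rw [h.card_eq a ha c hc]
    calc p * #(N c ∩ nbrsIn G c' X) + p ^ 2 * d * #(nbrsIn G c' X)
        ≤ p * (d * (z + if R c c' then 1 else 0)) + p ^ 2 * d * D := by gcongr
      _ = p * d * (z + p * D) + p * d * if R c c' then 1 else 0 := by ring
  have hR : ∑ c ∈ B a, ∑ c' ∈ B b, (if R c c' then (1 : ℝ) else 0) =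
      #(Rel.interedges R (B a) (B b)) := by
    simp [card_interedges_eq_sum]
  calc ∑ c ∈ B a, ∑ c' ∈ B b, (p * #(N c ∩ nbrsIn G c' X) + p ^ 2 * #(N c) * #(nbrsIn G c' X))
      ≤ ∑ c ∈ B a, ∑ c' ∈ B b, (p * d * (z + p * D) + p * d * if R c c' then 1 else 0) :=
        sum_le_sum fun c hc => sum_le_sum (hterm c hc)
    _ = p * d * (z + p * D) * (#(B a) * #(B b)) + p * d * #(Rel.interedges R (B a) (B b)) := by
        simp only [sum_add_distrib, sum_const, nsmul_eq_mul, ← mul_sum, hR]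
        ring
    _ ≤ p * d * (z + p * D) * (#(B a) * #(B b)) + p * d * (mu * #(B a) * #(B b)) := by
        gcongr
        exact h.card_interedges_le a ha b hb hab
    _ = _ := by ring

lemma sampleMean_cost_le (h : IsSpread G X I B N R d D z mu) (hz : 0 ≤ z) (hmu : 0 < mu)
    (hp : 0 ≤ p) (hp1 : p ≤ 1) (hpD : 48 * #I * (p * D) ≤ 1) (hzI : 48 * #I * z ≤ 1)
    (hmuI : 48 * #I * mu ≤ 1) (ha : a ∈ I) (hb : b ∈ I) (hab : a ≠ b) :
    2 / #(B b) * sampleMean p X (fun Y => (#(meeting N (B a) Y) : ℝ) *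
        #(meeting (fun c => nbrsIn G c X) (B b) Y)) + 1 / (8 * #I * mu * #(B b)) *
        sampleMean p X (fun Y => (#(Rel.interedges R (meeting N (B a) Y) (B b)) : ℝ)) ≤
      p * d * #(B a) * (1 / (4 * #I)) := by
  have hI : (0 : ℝ) < #I := by exact_mod_cast card_pos.mpr ⟨a, ha⟩
  have hBb : (0 : ℝ) < #(B b) := by exact_mod_cast (h.nonempty b hb).card_pos
  have hR : sampleMean p X (fun Y => (#(Rel.interedges R (meeting N (B a) Y) (B b)) : ℝ)) ≤
      p * d * (mu * #(B a) * #(B b)) := by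
    refine (sampleMean_card_interedges_meeting_le hp hp1 (fun c hc =>
      (h.subset_nbrsIn a ha c hc).trans (nbrsIn_subset _ _ _)) (h.card_eq a ha) _ _).trans ?_
    gcongr
    exact h.card_interedges_le a ha b hb hab
  calc _ ≤ 2 / #(B b) * (p * d * (z + mu + p * D) * #(B a) * #(B b)) +
        1 / (8 * #I * mu * #(B b)) * (p * d * (mu * #(B a) * #(B b))) := by
        gcongr
        exact h.sampleMean_mul_le hz hp hp1 ha hb hab
    _ = p * d * #(B a) * (2 * (z + mu + p * D) + 1 / (8 * #I)) := by field_simp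
    _ ≤ p * d * #(B a) * (2 * (1 / (16 * #I)) + 1 / (8 * #I)) := by
        gcongr
        rw [le_div_iff₀ (by positivity)]
        linarith
    _ = p * d * #(B a) * (1 / (4 * #I)) := by field_simp; ring

lemma exists_sample (h : IsSpread G X I B N R d D z mu) (hz : 0 ≤ z) (hmu : 0 < mu) (hp : 0 ≤ p)
    (hd : 1 ≤ d) (hpD : 48 * #I * (p * D) ≤ 1) (hzI : 48 * #I * z ≤ 1) (hmuI : 48 * #I * mu ≤ 1)
    (ha : a ∈ I) :
    ∃ Y ⊆ X, p * d / 4 * #(B a) + ∑ b ∈ I.erase a,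
      (2 / #(B b) * (#(meeting N (B a) Y) * #(meeting (fun c => nbrsIn G c X) (B b) Y)) +
        1 / (8 * #I * mu * #(B b)) * #(Rel.interedges R (meeting N (B a) Y) (B b))) ≤
      (#(meeting N (B a) Y) : ℝ) := by
  have hI : (1 : ℝ) ≤ #I := by exact_mod_cast card_pos.mpr ⟨a, ha⟩
  have hd1 : (1 : ℝ) ≤ d := by exact_mod_cast hd
  have hdD := h.natCast_le ha
  have hpd : p * d ≤ p * D := by gcongr
  have hpD1 : 48 * (p * D) ≤ 1 := by nlinarith [mul_nonneg hp (zero_le_one.trans (hd1.trans hdD))]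
  have hp1 : p ≤ 1 := by nlinarith
  obtain ⟨Y, hYX, hY⟩ := exists_sampleMean_le hp hp1 X
    ((fun Y => (#(meeting N (B a) Y) : ℝ)) - ∑ b ∈ I.erase a,
      ((2 / (#(B b) : ℝ)) • (fun Y => (#(meeting N (B a) Y) : ℝ) *
        #(meeting (fun c => nbrsIn G c X) (B b) Y)) + (1 / (8 * #I * mu * (#(B b) : ℝ))) •
        fun Y => (#(Rel.interedges R (meeting N (B a) Y) (B b)) : ℝ)))
  refine ⟨Y, hYX, ?_⟩
  simp only [map_sub, map_sum, map_add, map_smul, smul_eq_mul, Pi.sub_apply, Finset.sum_apply,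
    Pi.add_apply, Pi.smul_apply] at hY
  refine le_sub_iff_add_le.mp (le_trans ?_ hY)
  have hcover := le_sampleMean_card_meeting hp hp1 (fun c hc =>
    (h.subset_nbrsIn a ha c hc).trans (nbrsIn_subset _ _ _)) (h.card_eq a ha)
  have hcost := sum_le_card_nsmul _ _ _ fun b hb => h.sampleMean_cost_le hz hmu hp hp1 hpD hzI hmuI
    ha (mem_erase.mp hb).2 (mem_erase.mp hb).1.symm
  have herase : (#(I.erase a) : ℝ) * (p * d * #(B a) * (1 / (4 * #I))) ≤ p * d * #(B a) / 4 := by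
    calc (#(I.erase a) : ℝ) * (p * d * #(B a) * (1 / (4 * #I)))
        ≤ #I * (p * d * #(B a) * (1 / (4 * #I))) := by gcongr; exact erase_subset _ _
      _ = p * d * #(B a) / 4 := by field_simp
  rw [nsmul_eq_mul] at hcost
  nlinarith [show 0 ≤ p * d * #(B a) by positivity]

lemma exists_selection (h : IsSpread G X I B N R d D z mu) (hz : 0 ≤ z) (hmu : 0 < mu)
    (hp : 0 < p) (hd : 1 ≤ d) (hpD : 48 * #I * (p * D) ≤ 1) (hzI : 48 * #I * z ≤ 1)
    (hmuI : 48 * #I * mu ≤ 1) (ha : a ∈ I) :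
    ∃ Y ⊆ X, p * d / 4 * #(B a) ≤ #(meeting N (B a) Y) ∧ ∀ b ∈ I, b ≠ a →
      (#(B b) : ℝ) ≤ 2 * #(B b \ nbhdIn G Y (B b)) ∧
      (#(Rel.interedges R (meeting N (B a) Y) (B b)) : ℝ) ≤
        8 * #I * mu * #(meeting N (B a) Y) * #(B b) := by
  obtain ⟨Y, hYX, hY⟩ := h.exists_sample hz hmu hp.le hd hpD hzI hmuI ha
  have hI : (0 : ℝ) < #I := by exact_mod_cast card_pos.mpr ⟨a, ha⟩
  have hB : ∀ b ∈ I, (0 : ℝ) < #(B b) := fun b hb => by exact_mod_cast (h.nonempty b hb).card_pos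
  have hpos : 0 < p * d / 4 * #(B a) := by
    have : (0 : ℝ) < d := by exact_mod_cast hd
    have hBa := hB a ha
    positivity
  refine ⟨Y, hYX, (le_add_of_nonneg_right (sum_nonneg fun b _ => by positivity)).trans hY,
    fun b hb hba => ?_⟩
  have hM : (0 : ℝ) < #(meeting N (B a) Y) :=
    hpos.trans_le ((le_add_of_nonneg_right (sum_nonneg fun b _ => by positivity)).trans hY)
  have hterm := (single_le_sum (fun b _ => by positivity) (mem_erase.mpr ⟨hba, hb⟩)).trans
    ((le_add_of_nonneg_left hpos.le).trans hY)
  have hnbhd : meeting (fun c => nbrsIn G c X) (B b) Y = nbhdIn G Y (B b) := by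
    ext c
    simp only [meeting, Finset.Nonempty, mem_filter, mem_inter, mem_nbrsIn, mem_nbhdIn]
    exact and_congr_right fun _ => ⟨fun ⟨x, ⟨_, hcx⟩, hx⟩ => ⟨x, hx, hcx.symm⟩,
      fun ⟨x, hx, hxc⟩ => ⟨x, ⟨hYX hx, hxc.symm⟩, hx⟩⟩
  rw [hnbhd] at hterm
  have hBb := hB b hb
  constructor
  · have hle := (le_add_of_nonneg_right (by positivity)).trans hterm
    rw [div_mul_eq_mul_div, div_le_iff₀ hBb] at hle
    rw [card_sdiff_of_subset (nbhdIn_subset _ _ _),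
      Nat.cast_sub (card_le_card (nbhdIn_subset _ _ _))]
    nlinarith
  · have hle := (le_add_of_nonneg_left (by positivity)).trans hterm
    rw [one_div, inv_mul_le_iff₀ (by positivity)] at hle
    linarith

lemma card_interedges_le_of_selection [Std.Symm R] (h : IsSpread G X I B N R d D z mu)
    (hmu : 0 < mu) (ha : a ∈ I) (hC : ∀ b ∈ I, C b ⊆ B b)
    (hcard : ∀ b ∈ I, b ≠ a → (#(B b) : ℝ) ≤ 2 * #(C b))
    (hR : ∀ b ∈ I, b ≠ a → (#(Rel.interedges R (C a) (B b)) : ℝ) ≤ 8 * #I * mu * #(C a) * #(B b))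
    {b b' : ι} (hb : b ∈ I) (hb' : b' ∈ I) (hbb' : b ≠ b') :
    (#(Rel.interedges R (C b) (C b')) : ℝ) ≤ 16 * #I * mu * #(C b) * #(C b') := by
  have hI : (1 : ℝ) ≤ #I := by exact_mod_cast card_pos.mpr ⟨a, ha⟩
  have hRa : ∀ b ∈ I, b ≠ a →
      (#(Rel.interedges R (C a) (C b)) : ℝ) ≤ 16 * #I * mu * #(C a) * #(C b) := fun b hb hba =>
    calc (#(Rel.interedges R (C a) (C b)) : ℝ) ≤ #(Rel.interedges R (C a) (B b)) := by
          exact_mod_cast card_le_card (Rel.interedges_mono subset_rfl (hC b hb))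
      _ ≤ 8 * #I * mu * #(C a) * #(B b) := hR b hb hba
      _ ≤ 8 * #I * mu * #(C a) * (2 * #(C b)) := by gcongr; exact hcard b hb hba
      _ = 16 * #I * mu * #(C a) * #(C b) := by ring
  rcases eq_or_ne b a with rfl | hba
  · exact hRa b' hb' hbb'.symm
  rcases eq_or_ne b' a with rfl | hb'a
  · rw [Rel.card_interedges_comm]
    linarith [hRa b hb hba]
  · calc (#(Rel.interedges R (C b) (C b')) : ℝ) ≤ #(Rel.interedges R (B b) (B b')) := by
          exact_mod_cast card_le_card (Rel.interedges_mono (hC b hb) (hC b' hb'))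
      _ ≤ mu * #(B b) * #(B b') := h.card_interedges_le b hb b' hb' hbb'
      _ ≤ mu * (2 * #(C b)) * (2 * #(C b')) := by
          gcongr
          exacts [hcard b hb hba, hcard b' hb' hb'a]
      _ = 4 * 1 * mu * #(C b) * #(C b') := by ring
      _ ≤ 16 * #I * mu * #(C b) * #(C b') := by gcongr; norm_num

lemma exists_step [Std.Symm R] (h : IsSpread G X I B N R d D z mu) (hz : 0 ≤ z)
    (hmu : 0 < mu) (hp : 0 < p) (hd : 1 ≤ d) (hpD : 48 * #I * (p * D) ≤ 1)
    (hzI : 48 * #I * z ≤ 1) (hmuI : 48 * #I * mu ≤ 1) (ha : a ∈ I) :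
    ∃ Y ⊆ X, ∃ C : ι → Finset V, (∀ b ∈ I, C b ⊆ B b) ∧ IsSpread G X I C N R d D z (16 * #I * mu) ∧
      (∀ c ∈ C a, ∃ y ∈ Y, G.Adj y c) ∧ (∀ b ∈ I, b ≠ a → ∀ y ∈ Y, ∀ c ∈ C b, ¬ G.Adj y c) ∧
      p * d / 4 * #(B a) ≤ #(C a) ∧ ∀ b ∈ I, b ≠ a → (#(B b) : ℝ) ≤ 2 * #(C b) := by
  obtain ⟨Y, hYX, hcover, hother⟩ := h.exists_selection hz hmu hp hd hpD hzI hmuI ha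
  set C := Function.update (fun b => B b \ nbhdIn G Y (B b)) a (meeting N (B a) Y)
  have hCa : C a = meeting N (B a) Y := Function.update_self ..
  have hCb : ∀ b, b ≠ a → C b = B b \ nbhdIn G Y (B b) := fun b hb => Function.update_of_ne hb ..
  have hCB : ∀ b ∈ I, C b ⊆ B b := by
    intro b _
    rcases eq_or_ne b a with rfl | hba
    · exact hCa ▸ filter_subset _ _
    · exact hCb b hba ▸ sdiff_subset
  have hcard : ∀ b ∈ I, b ≠ a → (#(B b) : ℝ) ≤ 2 * #(C b) := fun b hb hba => by
    rw [hCb b hba]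
    exact (hother b hb hba).1
  have hB : ∀ b ∈ I, (0 : ℝ) < #(B b) := fun b hb => by exact_mod_cast (h.nonempty b hb).card_pos
  have hne : ∀ b ∈ I, (C b).Nonempty := by
    intro b hb
    have : (0 : ℝ) < #(B b) := hB b hb
    rw [← card_pos, ← Nat.cast_pos (α := ℝ)]
    rcases eq_or_ne b a with rfl | hba
    · have : (0 : ℝ) < d := by exact_mod_cast hd
      exact lt_of_lt_of_le (by positivity) (hCa ▸ hcover)
    · linarith [hcard b hb hba]
  refine ⟨Y, hYX, C, hCB, h.mono hCB hne fun b hb b' hb' hbb' =>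
    h.card_interedges_le_of_selection hmu ha hCB hcard
      (fun b hb hba => hCa ▸ (hother b hb hba).2) hb hb' hbb', ?_, ?_, hCa ▸ hcover, hcard⟩
  · intro c hc
    rw [hCa, meeting, mem_filter] at hc
    obtain ⟨y, hy⟩ := hc.2
    rw [mem_inter] at hy
    exact ⟨y, hy.2, ((mem_nbrsIn.mp (h.subset_nbrsIn a ha c hc.1 hy.1)).2).symm⟩
  · intro b _ hba y hy c hc hyc
    rw [hCb b hba, mem_sdiff] at hc
    exact hc.2 (mem_nbhdIn.mpr ⟨hc.1, y, hy, hyc⟩)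

lemma exists_isPrivateCover_of_subset [Std.Symm R] (h : IsSpread G X I B N R d D z mu)
    (hz : 0 ≤ z) (hmu : 0 < mu) (hp : 0 < p) (hd : 1 ≤ d) (hpD : 48 * #I * (p * D) ≤ 1)
    (hzI : 48 * #I * z ≤ 1) (hmuI : 48 * #I * ((16 * #I) ^ #I * mu) ≤ 1) (hPI : P ⊆ I) :
    ∃ C Z : ι → Finset V, (∀ b ∈ I, C b ⊆ B b) ∧
      IsSpread G X I C N R d D z ((16 * #I) ^ #P * mu) ∧ IsPrivateCover G X I P C Z ∧
      ∀ b ∈ I, (if b ∈ P then p * d / 4 else 1) / 2 ^ #P * #(B b) ≤ (#(C b) : ℝ) := by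
  induction P using Finset.induction_on with
  | empty =>
    exact ⟨B, fun _ => ∅, fun _ _ => subset_rfl, by simpa using h,
      ⟨by simp, by simp, by simp⟩, by simp⟩
  | insert a P haP ih =>
    obtain ⟨ha, hPI⟩ := insert_subset_iff.mp hPI
    obtain ⟨C, Z, hCB, hC, hZ, hcard⟩ := ih hPI
    have hI : (1 : ℝ) ≤ #I := by exact_mod_cast card_pos.mpr ⟨a, ha⟩
    obtain ⟨Y, hYX, C', hC', hspread, hcov, hmiss, hcarda, hcardb⟩ :=
      hC.exists_step hz (by positivity) hp hd hpD hzI (le_trans (by gcongr; linarith) hmuI) ha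
    refine ⟨C', Function.update Z a Y, fun b hb => (hC' b hb).trans (hCB b hb), ?_,
      hZ.update hPI haP hC' hYX hcov hmiss, fun b hb => ?_⟩
    · rwa [card_insert_of_notMem haP, pow_succ', mul_assoc]
    · rw [card_insert_of_notMem haP, pow_succ]
      have hcardC := hcard b hb
      rcases eq_or_ne b a with rfl | hba
      · rw [if_neg haP] at hcardC
        rw [if_pos (mem_insert_self _ _)]
        calc p * d / 4 / (2 ^ #P * 2) * #(B b) = p * d / 8 * (1 / 2 ^ #P * #(B b)) := by ring
          _ ≤ p * d / 8 * #(C b) := by gcongr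
          _ ≤ p * d / 4 * #(C b) := by gcongr; norm_num
          _ ≤ #(C' b) := hcarda
      · simp only [mem_insert, hba, false_or]
        rw [← div_div, div_mul_eq_mul_div, div_le_iff₀ two_pos]
        linarith [hcardb b hb hba]

lemma exists_isPrivateCover [Std.Symm R] (h : IsSpread G X I B N R d D z mu)
    (hz : 0 ≤ z) (hmu : 0 < mu) (hp : 0 < p) (hd : 1 ≤ d) (hpD : 48 * #I * (p * D) ≤ 1)
    (hzI : 48 * #I * z ≤ 1) (hmuI : 48 * #I * ((16 * #I) ^ #I * mu) ≤ 1) :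
    ∃ C Z : ι → Finset V, (∀ b ∈ I, C b ⊆ B b) ∧
      IsSpread G X I C N R d D z ((16 * #I) ^ #I * mu) ∧ IsPrivateCover G X I I C Z ∧
      ∀ b ∈ I, p * d / 4 / 2 ^ #I * #(B b) ≤ (#(C b) : ℝ) := by
  obtain ⟨C, Z, hCB, hC, hZ, hcard⟩ :=
    h.exists_isPrivateCover_of_subset hz hmu hp hd hpD hzI hmuI subset_rfl
  exact ⟨C, Z, hCB, hC, hZ, fun b hb => by simpa [hb] using hcard b hb⟩

end IsSpread

end PrivateCovers

section DegreeClasses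

variable {ι : Type*} {G : SimpleGraph V} {X : Finset V} {I : Finset ι} {B : ι → Finset V}
  {d K Q : ℕ} {β lam w z D : ℝ}

lemma card_interedges_le_add {α α' : Type*} {R S T : α → α' → Prop}
    (h : ∀ a a', T a a' → R a a' ∨ S a a') (A : Finset α) (A' : Finset α') :
    #(Rel.interedges T A A') ≤ #(Rel.interedges R A A') + #(Rel.interedges S A A') := by
  refine (card_le_card fun q hq => ?_).trans (card_union_le _ _)
  simp only [mem_union, Rel.mem_interedges_iff] at hq ⊢
  have := h q.1 q.2
  tauto

lemma card_interedges_le_mul_of_forall {α α' : Type*} {R : α → α' → Prop} {A : Finset α}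
    {A' : Finset α'} {t : ℝ} (h : ∀ a ∈ A, (#{a' ∈ A' | R a a'} : ℝ) ≤ t) :
    (#(Rel.interedges R A A') : ℝ) ≤ t * #A := by
  rw [card_interedges_eq_sum, Nat.cast_sum, mul_comm, ← nsmul_eq_mul]
  exact sum_le_card_nsmul _ _ _ h

lemma card_interedges_swap {α α' : Type*} (R : α → α' → Prop) (A : Finset α) (A' : Finset α') :
    #(Rel.interedges (fun a' a => R a a') A' A) = #(Rel.interedges R A A') := by
  simp only [card_interedges_eq_sum]
  exact (sum_card_bipartiteAbove_eq_sum_card_bipartiteBelow R).symm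

lemma card_filter_lt_card_inter_nbrsIn_le {S Y : Finset V} (hz : 0 < z) (hS : S.Nonempty)
    (h : ∀ x ∈ S, (#(nbrsIn G x Y) : ℝ) ≤ lam * #Y) (hSX : S ⊆ X) :
    (#{c ∈ Y | z * #S < #(S ∩ nbrsIn G c X)} : ℝ) ≤ lam / z * #Y := by
  have hcard : ∀ c, S ∩ nbrsIn G c X = nbrsIn G c S := by
    intro c
    ext x
    simp only [mem_inter, mem_nbrsIn]
    exact ⟨fun h => ⟨h.1, h.2.2⟩, fun h => ⟨h.1, hSX h.1, h.2⟩⟩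
  simp only [hcard]
  have hS0 : (0 : ℝ) < #S := by exact_mod_cast hS.card_pos
  have hmarkov := calc
    z * #S * #{c ∈ Y | z * #S < #(nbrsIn G c S)} ≤ ∑ c ∈ Y, (#(nbrsIn G c S) : ℝ) :=
      mul_card_filter_lt_le_sum Y (fun _ _ => by positivity) _
    _ = ∑ x ∈ S, (#(nbrsIn G x Y) : ℝ) := by exact_mod_cast sum_card_nbrsIn_comm G Y S
    _ ≤ #S * (lam * #Y) := by rw [← nsmul_eq_mul]; exact sum_le_card_nsmul _ _ _ h
  rw [div_mul_eq_mul_div, le_div_iff₀ hz]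
  refine le_of_mul_le_mul_left ?_ hS0
  linarith

lemma exists_isSpread (hd : 1 ≤ d) (hz : 0 < z) (hne : ∀ b ∈ I, (B b).Nonempty)
    (hdeg : ∀ b ∈ I, ∀ c ∈ B b, d ≤ #(nbrsIn G c X))
    (hD : ∀ b ∈ I, ∀ c ∈ B b, (#(nbrsIn G c X) : ℝ) ≤ D)
    (hXB : ∀ x ∈ X, ∀ b ∈ I, (#(nbrsIn G x (B b)) : ℝ) ≤ lam * #(B b))
    (hlink : HasLinkageLE G I B lam) :
    ∃ (N : V → Finset V) (R : V → V → Prop), Std.Symm R ∧ (∀ c c', G.Adj c c' → R c c') ∧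
      IsSpread G X I B N R d D z (lam * (1 + 2 / z)) := by
  have hN : ∀ c, ∃ S ⊆ nbrsIn G c X, d ≤ #(nbrsIn G c X) → #S = d := fun c => by
    by_cases h : d ≤ #(nbrsIn G c X)
    · obtain ⟨S, hS, hcard⟩ := exists_subset_card_eq h
      exact ⟨S, hS, fun _ => hcard⟩
    · exact ⟨∅, empty_subset _, fun h' => absurd h' h⟩
  choose N hNsub hNcard using hN
  set S : V → V → Prop := fun c c' => z * d < #(N c ∩ nbrsIn G c' X)
  have hS : ∀ b ∈ I, ∀ b' ∈ I,
      (#(Rel.interedges S (B b) (B b')) : ℝ) ≤ lam / z * #(B b') * #(B b) := by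
    refine fun b hb b' hb' => card_interedges_le_mul_of_forall fun c hc => ?_
    have hcd := hNcard c (hdeg b hb c hc)
    have hsub := (hNsub c).trans (nbrsIn_subset _ _ _)
    have hcount := card_filter_lt_card_inter_nbrsIn_le hz (card_pos.mp (hcd ▸ hd))
      (fun x hx => hXB x (hsub hx) b' hb') hsub
    rwa [hcd] at hcount
  refine ⟨N, fun c c' => G.Adj c c' ∨ S c c' ∨ S c' c,
    ⟨fun c c' h => h.imp (fun h => h.symm) Or.symm⟩, fun c c' => Or.inl, hne,
    fun _ _ c _ => hNsub c, fun b hb c hc => hNcard c (hdeg b hb c hc), hD,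
    fun _ _ c _ _ _ c' _ h => by simp only [not_or] at h; exact not_lt.mp h.2.1,
    fun b hb b' hb' hbb' => ?_⟩
  have hadj : (#(Rel.interedges G.Adj (B b) (B b')) : ℝ) ≤ lam * #(B b') * #(B b) :=
    card_interedges_le_mul_of_forall (hlink b hb b' hb' hbb')
  have hswap : (#(Rel.interedges (fun c c' => S c' c) (B b) (B b')) : ℝ) ≤
      lam / z * #(B b) * #(B b') := by
    rw [card_interedges_swap]
    exact hS b' hb' b hb
  calc _ ≤ (#(Rel.interedges G.Adj (B b) (B b')) + (#(Rel.interedges S (B b) (B b')) +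
          #(Rel.interedges (fun c c' => S c' c) (B b) (B b'))) : ℝ) := by
        exact_mod_cast (card_interedges_le_add (fun _ _ => id) _ _).trans
          (Nat.add_le_add_left (card_interedges_le_add (fun _ _ => id) _ _) _)
    _ ≤ lam * #(B b') * #(B b) + (lam / z * #(B b') * #(B b) + lam / z * #(B b) * #(B b')) := by
        gcongr
        exact hS b hb b' hb'
    _ = lam * (1 + 2 / z) * #(B b) * #(B b') := by ring

/-- The factor by which the linkage grows when `K` blocks are shrunk to sets with private covers. -/
def coverConst (K : ℕ) : ℝ := 4 * K * ((16 * K) ^ K * (1 + 96 * K))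

lemma exists_isPrivateCover_of_card_nbrsIn (hlam : 0 < lam) (hd : 1 ≤ d) (hI : I.Nonempty)
    (hne : ∀ b ∈ I, (B b).Nonempty) (hdeg : ∀ b ∈ I, ∀ c ∈ B b, d ≤ #(nbrsIn G c X))
    (hβ : ∀ b ∈ I, ∀ c ∈ B b, (#(nbrsIn G c X) : ℝ) ≤ β * d)
    (hXB : ∀ x ∈ X, ∀ b ∈ I, (#(nbrsIn G x (B b)) : ℝ) ≤ lam * #(B b))
    (hlink : HasLinkageLE G I B lam) (hsmall : 12 * (coverConst #I * lam) ≤ 1) :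
    ∃ C Z : ι → Finset V, (∀ b ∈ I, C b ⊆ B b) ∧ IsPrivateCover G X I I C Z ∧
      (∀ b ∈ I, (#(B b) : ℝ) ≤ 384 * #I * 2 ^ #I * β * #(C b)) ∧
      HasLinkageLE G I C (coverConst #I * lam) := by
  have hI0 : (0 : ℝ) < #I := by exact_mod_cast hI.card_pos
  have hd0 : (0 : ℝ) < d := by exact_mod_cast hd
  obtain ⟨N, R, hR, hadj, hspread⟩ := exists_isSpread (z := 1 / (48 * #I)) hd (by positivity) hne
    hdeg hβ hXB hlink
  obtain ⟨i, hi⟩ := hI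
  have hβ0 : 0 < β := pos_of_mul_pos_left (hd0.trans_le (hspread.natCast_le hi)) hd0.le
  have hconst : 4 * #I * ((16 * #I) ^ #I * (lam * (1 + 2 / (1 / (48 * #I))))) =
      coverConst #I * lam := by
    rw [coverConst, div_div_eq_mul_div]
    ring
  obtain ⟨B', Z, hB', hspread', hcover, hcard⟩ := hspread.exists_isPrivateCover (by positivity)
    (by positivity) (p := 1 / (48 * #I * (β * d))) (by positivity) hd
    (le_of_eq (by field_simp)) (le_of_eq (by field_simp)) (by linarith)
  obtain ⟨C, hC, hCcard, hClink⟩ := exists_subset_hasLinkageLE (by positivity)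
    fun i hi j hj hij => le_trans (b := (#(Rel.interedges R (B' i) (B' j)) : ℝ)) (by
      rw [card_interedges_eq_sum]
      push_cast
      gcongr with x
      exact monotone_filter_right _ fun y _ => hadj x y) (hspread'.card_interedges_le i hi j hj hij)
  refine ⟨C, Z, fun b hb => (hC b).trans (hB' b hb), hcover.mono subset_rfl fun b _ => hC b,
    fun b hb => ?_, hconst ▸ hClink⟩
  have hsize : 1 / (192 * #I * 2 ^ #I * β) * #(B b) ≤ (#(B' b) : ℝ) := by
    refine le_trans (le_of_eq ?_) (hcard b hb)
    field_simp
    norm_num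
  rw [one_div, inv_mul_le_iff₀ (by positivity)] at hsize
  calc (#(B b) : ℝ) ≤ 192 * #I * 2 ^ #I * β * #(B' b) := hsize
    _ ≤ 192 * #I * 2 ^ #I * β * (2 * #(C b)) := by gcongr; exact hCcard b hb
    _ = 384 * #I * 2 ^ #I * β * #(C b) := by ring

/-- The vertices of `B` whose number of neighbours in `X` is in `[β ^ t, β ^ (t + 1))`. -/
def degreeClass (G : SimpleGraph V) (X B : Finset V) (β : ℝ) (t : ℕ) : Finset V :=
  {v ∈ B | β ^ t ≤ #(nbrsIn G v X) ∧ #(nbrsIn G v X) < β ^ (t + 1)}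

lemma exists_mem_degreeClass (hβ : 1 < β) (hX : #X ≤ β ^ Q) {Y : Finset V} {v : V}
    (hv : v ∈ nbhdIn G X Y) : ∃ t ∈ range (Q + 1), v ∈ degreeClass G X Y β t := by
  obtain ⟨hvY, x, hx, hxv⟩ := mem_nbhdIn.mp hv
  have hpos : (1 : ℝ) ≤ #(nbrsIn G v X) := by
    exact_mod_cast card_pos.mpr ⟨x, mem_nbrsIn.mpr ⟨hx, hxv.symm⟩⟩
  obtain ⟨t, htle, htlt⟩ := exists_nat_pow_near hpos hβ
  have htQ := calc β ^ t ≤ #(nbrsIn G v X) := htle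
    _ ≤ #X := by gcongr; exact nbrsIn_subset _ _ _
    _ ≤ β ^ Q := hX
  rw [pow_le_pow_iff_right₀ hβ] at htQ
  exact ⟨t, mem_range.mpr (by omega), mem_filter.mpr ⟨hvY, htle, htlt⟩⟩

lemma exists_common_class {R : ℕ} (hR : 0 < R) {D : ι → Finset V} {p : ι → V → ℕ → Prop}
    [∀ j c d, Decidable (p j c d)]
    (hp : ∀ j ∈ I, ∀ c ∈ D j, ∃ d ∈ range R, p j c d) (hI : K * R ≤ #I) :
    ∃ d ∈ range R, ∃ I' ⊆ I, #I' = K ∧ ∀ j ∈ I', #(D j) ≤ R * #{c ∈ D j | p j c d} := by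
  have hne : (range R).Nonempty := nonempty_range_iff.mpr hR.ne'
  have hlarge : ∀ j, ∃ d ∈ range R, j ∈ I → #(D j) ≤ R * #{c ∈ D j | p j c d} := by
    intro j
    by_cases hj : j ∈ I
    · obtain ⟨d, hd, h⟩ := exists_le_of_sum_le (f := fun _ => #(D j))
        (g := fun d => R * #{c ∈ D j | p j c d}) hne (by
          rw [sum_const, card_range, smul_eq_mul, ← mul_sum]
          refine Nat.mul_le_mul_left R ((card_le_card fun c hc => ?_).trans card_biUnion_le)
          obtain ⟨d, hd, hpd⟩ := hp j hj c hc
          exact mem_biUnion.mpr ⟨d, hd, mem_filter.mpr ⟨hc, hpd⟩⟩)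
      exact ⟨d, hd, fun _ => h⟩
    · exact hne.imp fun d hd => ⟨hd, fun h => absurd h hj⟩
  choose f hf hcard using hlarge
  obtain ⟨d, hd, hfiber⟩ := exists_le_card_fiber_of_mul_le_card_of_maps_to (s := I) (n := K)
    (fun j _ => hf j) hne (by rwa [card_range, mul_comm])
  obtain ⟨I', hI', hK⟩ := exists_subset_card_eq hfiber
  refine ⟨d, hd, I', hI'.trans (filter_subset _ _), hK, fun j hj => ?_⟩
  obtain ⟨hjI, rfl⟩ := mem_filter.mp (hI' hj)
  exact hcard j hjI

lemma exists_common_degreeClass (hβ : 1 < β) (hX : #X ≤ β ^ Q) (hI : K * (Q + 1) ≤ #I) :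
    ∃ I' ⊆ I, #I' = K ∧ ∃ t, ∀ b ∈ I',
      (#(nbhdIn G X (B b)) : ℝ) ≤ (Q + 1) * #(degreeClass G X (B b) β t) := by
  obtain ⟨t, -, I', hI', hK, hcard⟩ := exists_common_class Q.succ_pos
    (p := fun b v t => v ∈ degreeClass G X (B b) β t)
    (fun b _ v hv => exists_mem_degreeClass hβ hX hv) hI
  refine ⟨I', hI', hK, t, fun b hb => ?_⟩
  exact_mod_cast (hcard b hb).trans
    (Nat.mul_le_mul_left _ (card_le_card fun v hv => (mem_filter.mp hv).2))

lemma Coherent.exists_isPrivateCover (hcoh : Coherent G w w) (hw : 0 < w) (hβ : 1 < β)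
    (hXβ : #X ≤ β ^ Q) (hK : 1 ≤ K) (hI : K * (Q + 1) ≤ #I) (hdisj : ∀ b ∈ I, Disjoint X (B b))
    (hX : w ≤ #X) (hB : ∀ b ∈ I, 2 * w ≤ #(B b)) (hlam : 0 < lam)
    (hXB : ∀ x ∈ X, ∀ b ∈ I, (#(nbrsIn G x (B b)) : ℝ) ≤ lam * #(B b))
    (hlink : HasLinkageLE G I B lam) (hsmall : 12 * (coverConst K * (lam * (2 * (Q + 1)))) ≤ 1) :
    ∃ I' ⊆ I, #I' = K ∧ ∃ C Z : ι → Finset V, (∀ b ∈ I', C b ⊆ B b) ∧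
      IsPrivateCover G X I' I' C Z ∧
      (∀ b ∈ I', (#(B b) : ℝ) ≤ 768 * K * 2 ^ K * (Q + 1) * β * #(C b)) ∧
      HasLinkageLE G I' C (coverConst K * (lam * (2 * (Q + 1)))) := by
  obtain ⟨I', hI'I, rfl, t, ht⟩ := exists_common_degreeClass (G := G) (B := B) hβ hXβ hI
  set B' : ι → Finset V := fun b => degreeClass G X (B b) β t
  have hB'B : ∀ b ∈ I', B' b ⊆ B b := fun b _ => filter_subset _ _
  have hcard : ∀ b ∈ I', (#(B b) : ℝ) ≤ 2 * (Q + 1) * #(B' b) := fun b hb => by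
    linarith [ht b hb, hcoh.card_nbhdIn_gt (hdisj b (hI'I hb)) hX, hB b (hI'I hb)]
  have hne : ∀ b ∈ I', (B' b).Nonempty := fun b hb => by
    rw [← card_pos, ← Nat.cast_pos (α := ℝ)]
    refine pos_of_mul_pos_right (a := 2 * ((Q : ℝ) + 1)) ?_ (by positivity)
    linarith [hcard b hb, hB b (hI'I hb)]
  have hdeg : ∀ b ∈ I', ∀ c ∈ B' b, ⌈β ^ t⌉₊ ≤ #(nbrsIn G c X) := fun b _ c hc =>
    Nat.ceil_le.mpr (mem_filter.mp hc).2.1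
  have hdegβ : ∀ b ∈ I', ∀ c ∈ B' b, (#(nbrsIn G c X) : ℝ) ≤ β * ⌈β ^ t⌉₊ := fun b _ c hc => by
    calc (#(nbrsIn G c X) : ℝ) ≤ β ^ (t + 1) := (mem_filter.mp hc).2.2.le
      _ = β * β ^ t := pow_succ' _ _
      _ ≤ β * ⌈β ^ t⌉₊ := by gcongr; exact Nat.le_ceil _
  have hlink' : HasLinkageLE G I' B' (lam * (2 * (Q + 1))) :=
    (hlink.mono hI'I le_rfl).shrink (t := 1 / (2 * ((Q : ℝ) + 1))) hB'B (by field_simp; rfl)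
      (by positivity) fun b hb => by
        rw [one_div, inv_mul_le_iff₀ (by positivity)]
        exact hcard b hb
  have hXB' : ∀ x ∈ X, ∀ b ∈ I', (#(nbrsIn G x (B' b)) : ℝ) ≤ lam * (2 * (Q + 1)) * #(B' b) := by
    intro x hx b hb
    calc (#(nbrsIn G x (B' b)) : ℝ) ≤ #(nbrsIn G x (B b)) := by
          gcongr; exact nbrsIn_mono (hB'B b hb)
      _ ≤ lam * #(B b) := hXB x hx b (hI'I hb)
      _ ≤ lam * (2 * (Q + 1) * #(B' b)) := by gcongr; exact hcard b hb
      _ = lam * (2 * (Q + 1)) * #(B' b) := by ring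
  obtain ⟨C, Z, hC, hcover, hCcard, hClink⟩ := exists_isPrivateCover_of_card_nbrsIn (by positivity)
    (Nat.one_le_ceil_iff.mpr (by positivity)) (card_pos.mp hK) hne hdeg hdegβ hXB' hlink' hsmall
  refine ⟨I', hI'I, rfl, C, Z, fun b hb => (hC b hb).trans (hB'B b hb), hcover, fun b hb => ?_,
    hClink⟩
  calc (#(B b) : ℝ) ≤ 2 * (Q + 1) * #(B' b) := hcard b hb
    _ ≤ 2 * (Q + 1) * (384 * #I' * 2 ^ #I' * β * #(C b)) := by gcongr; exact hCcard b hb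
    _ = 768 * #I' * 2 ^ #I' * (Q + 1) * β * #(C b) := by ring

lemma eventually_le_natCast_rpow {e : ℝ} (he : 0 < e) (C : ℝ) :
    ∀ᶠ n : ℕ in Filter.atTop, C ≤ (n : ℝ) ^ e :=
  ((tendsto_rpow_atTop he).comp tendsto_natCast_atTop_atTop).eventually_ge_atTop C

lemma exists_forall_exists_isPrivateCover (hK : 1 ≤ K) {lam' κ : ℝ} (hlam' : 0 < lam')
    (hκ : 0 < κ) :
    ∃ (K₀ : ℕ) (lam : ℝ), 0 < lam ∧ ∃ n₀ : ℕ, ∀ (V : Type) [Fintype V] (G : SimpleGraph V) (w : ℝ),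
      n₀ ≤ Fintype.card V → 0 < w → Coherent G w w → ∀ (X : Finset V) (I : Finset ℕ)
      (B : ℕ → Finset V), K₀ ≤ #I → (∀ b ∈ I, Disjoint X (B b)) → w ≤ #X →
      (∀ b ∈ I, 2 * w ≤ #(B b)) → (∀ x ∈ X, ∀ b ∈ I, (#(nbrsIn G x (B b)) : ℝ) ≤ lam * #(B b)) →
      HasLinkageLE G I B lam →
      ∃ I' ⊆ I, #I' = K ∧ ∃ C Z : ℕ → Finset V, (∀ b ∈ I', C b ⊆ B b) ∧
        IsPrivateCover G X I' I' C Z ∧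
        (∀ b ∈ I', (Fintype.card V : ℝ) ^ (-κ) * #(B b) ≤ #(C b)) ∧ HasLinkageLE G I' C lam' := by
  obtain ⟨Q, hQ⟩ := exists_nat_gt (2 / κ)
  have hQ0 : (0 : ℝ) < Q := lt_trans (by positivity) hQ
  have hQκ : 1 / (Q : ℝ) ≤ κ / 2 := by
    rw [div_lt_iff₀ hκ] at hQ
    rw [div_le_div_iff₀ hQ0 two_pos]
    linarith
  have hcover : 0 < coverConst K := by unfold coverConst; positivity
  set M : ℝ := coverConst K * (2 * (Q + 1))
  obtain ⟨n₀, hn₀⟩ := Filter.eventually_atTop.mp ((eventually_le_natCast_rpow (half_pos hκ)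
    (768 * K * 2 ^ K * (Q + 1))).and (Filter.eventually_gt_atTop 1))
  refine ⟨K * (Q + 1), min (1 / 12) lam' / M, by positivity, n₀, ?_⟩
  intro V _ G w hn hw hcoh X I B hI hdisj hX hB hXB hlink
  obtain ⟨hlarge, hn1⟩ := hn₀ _ hn
  set n := Fintype.card V
  have hn1 : (1 : ℝ) < n := by exact_mod_cast hn1
  have hn0 : (0 : ℝ) < n := by linarith
  have hβQ : ((n : ℝ) ^ (1 / (Q : ℝ))) ^ Q = n := by
    rw [one_div, Real.rpow_inv_natCast_pow hn0.le (by exact_mod_cast hQ0.ne')]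
  have hlam : coverConst K * (min (1 / 12) lam' / M * (2 * (Q + 1))) = min (1 / 12) lam' := by
    simp only [M]
    field_simp
  obtain ⟨I', hI', hK', C, Z, hC, hZ, hcard, hClink⟩ := hcoh.exists_isPrivateCover
    (β := n ^ (1 / (Q : ℝ))) hw (Real.one_lt_rpow hn1 (by positivity))
    (by rw [hβQ]; exact_mod_cast card_le_univ X) hK hI hdisj hX hB (by positivity) hXB hlink
    (by linarith [min_le_left (1 / 12) lam'])
  refine ⟨I', hI', hK', C, Z, hC, hZ, fun b hb => ?_,
    hClink.mono subset_rfl (hlam.trans_le (min_le_right _ _))⟩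
  rw [Real.rpow_neg hn0.le, inv_mul_le_iff₀ (by positivity)]
  calc (#(B b) : ℝ) ≤ 768 * K * 2 ^ K * (Q + 1) * n ^ (1 / (Q : ℝ)) * #(C b) := hcard b hb
    _ ≤ n ^ (κ / 2) * n ^ (κ / 2) * #(C b) := by gcongr; exact hn1.le
    _ = n ^ κ * #(C b) := by rw [← Real.rpow_add hn0, add_halves]

end DegreeClasses

section Forcing

variable {ι : Type*} {G : SimpleGraph V} {H : SimpleGraph W} {col : V → ι} {I I' P : Finset ι}
  {A C Z : ι → Finset V} {X : Finset V} {S : Finset W} {f : W → V} {v : W} {y : V} {c : ℝ} {b₀ : ι}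

/-- The map `f` embeds `H[S]` as an induced subgraph of `G` whose vertices lie in distinct blocks
`A i`, `i ∈ I`. -/
structure IsRainbowEmbedding (G : SimpleGraph V) (H : SimpleGraph W) (col : V → ι) (I : Finset ι)
    (A : ι → Finset V) (S : Finset W) (f : W → V) : Prop where
  mem : ∀ w ∈ S, col (f w) ∈ I ∧ f w ∈ A (col (f w))
  injOn : Set.InjOn (fun w => col (f w)) S
  adj_iff : ∀ w ∈ S, ∀ w' ∈ S, H.Adj w w' ↔ G.Adj (f w) (f w')

namespace IsRainbowEmbedding

lemma mono (h : IsRainbowEmbedding G H col I' C S f) (hI : I' ⊆ I) (hC : ∀ i ∈ I', C i ⊆ A i) :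
    IsRainbowEmbedding G H col I A S f where
  mem w hw := ⟨hI (h.mem w hw).1, hC _ (h.mem w hw).1 (h.mem w hw).2⟩
  injOn := h.injOn
  adj_iff := h.adj_iff

lemma union {S' : Finset W} {g : W → V} (hf : IsRainbowEmbedding G H col I A S f)
    (hg : IsRainbowEmbedding G H col I A S' g) (hSS' : Disjoint S S')
    (hcol : ∀ w ∈ S, ∀ w' ∈ S', col (f w) ≠ col (g w'))
    (hadj : ∀ w ∈ S, ∀ w' ∈ S', H.Adj w w' ↔ G.Adj (f w) (g w')) :
    IsRainbowEmbedding G H col I A (S ∪ S') (S.piecewise f g) := by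
  have hS : ∀ w ∈ S, S.piecewise f g w = f w := fun w hw => S.piecewise_eq_of_mem _ _ hw
  have hS' : ∀ w ∈ S', S.piecewise f g w = g w := fun w hw =>
    S.piecewise_eq_of_notMem _ _ (disjoint_right.mp hSS' hw)
  constructor
  · intro w hw
    rcases mem_union.mp hw with hw | hw
    · exact hS w hw ▸ hf.mem w hw
    · exact hS' w hw ▸ hg.mem w hw
  · rw [coe_union, Set.injOn_union (by exact_mod_cast hSS')]
    refine ⟨hf.injOn.congr fun w hw => ?_, hg.injOn.congr fun w hw => ?_, fun w hw w' hw' => ?_⟩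
    · rw [hS w hw]
    · rw [hS' w hw]
    · simpa only [hS w hw, hS' w' hw'] using hcol w hw w' hw'
  · intro w hw w' hw'
    rcases mem_union.mp hw with hw | hw <;> rcases mem_union.mp hw' with hw' | hw'
    · rw [hS w hw, hS w' hw', hf.adj_iff w hw w' hw']
    · rw [hS w hw, hS' w' hw', hadj w hw w' hw']
    · rw [hS' w hw, hS w' hw', H.adj_comm, G.adj_comm, hadj w' hw' w hw]
    · rw [hS' w hw, hS' w' hw', hg.adj_iff w hw w' hw']

lemma singleton (hy : col y ∈ I) (hyA : y ∈ A (col y)) :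
    IsRainbowEmbedding G H col I A {v} fun _ => y :=
  ⟨by simp [hy, hyA], by simp, by simp⟩

end IsRainbowEmbedding

lemma IsPrivateCover.exists_adj_iff [DecidableEq ι] (h : IsPrivateCover G X P P C Z)
    (hf : IsRainbowEmbedding G H col (P.erase b₀) C S f) (hb₀ : b₀ ∈ P) (hCb₀ : (C b₀).Nonempty)
    (hv : (∃ u ∈ S, ∀ w ∈ S, H.Adj v w ↔ w = u) ∨ ∀ w ∈ S, ¬ H.Adj v w) :
    ∃ y ∈ X, ∀ w ∈ S, H.Adj v w ↔ G.Adj y (f w) := by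
  have hmem : ∀ w ∈ S, col (f w) ∈ P ∧ col (f w) ≠ b₀ ∧ f w ∈ C (col (f w)) := fun w hw =>
    ⟨mem_of_mem_erase (hf.mem w hw).1, ne_of_mem_erase (hf.mem w hw).1, (hf.mem w hw).2⟩
  rcases hv with ⟨u, hu, hvu⟩ | hv
  · obtain ⟨huP, -, huC⟩ := hmem u hu
    obtain ⟨y, hy, hyu⟩ := h.exists_adj _ huP _ huC
    refine ⟨y, h.subset _ huP hy, fun w hw => ?_⟩
    obtain ⟨hwP, -, hwC⟩ := hmem w hw
    rw [hvu w hw]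
    refine ⟨fun hwu => hwu ▸ hyu, fun hyw => ?_⟩
    by_contra hwu
    exact h.not_adj _ huP _ hwP (fun hcol => hwu (hf.injOn hw hu hcol)) y hy _ hwC hyw
  · obtain ⟨c, hc⟩ := hCb₀
    obtain ⟨y, hy, -⟩ := h.exists_adj _ hb₀ c hc
    refine ⟨y, h.subset _ hb₀ hy, fun w hw => iff_of_false (hv w hw) ?_⟩
    obtain ⟨hwP, hwb₀, hwC⟩ := hmem w hw
    exact h.not_adj _ hb₀ _ hwP hwb₀ y hy _ hwC

/-- In every large graph `G` that is coherent at scale `|G| ^ (1 - c)`, every sufficiently long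
sequence of blocks of size at least `|G| ^ (1 - σ)` and of small linkage contains a rainbow induced
copy of `H[S]`. -/
def IsForced (H : SimpleGraph W) (c : ℝ) (S : Finset W) : Prop :=
  ∃ (K : ℕ) (σ : ℝ), 0 < σ ∧ ∃ lam : ℝ, 0 < lam ∧ ∃ n₀ : ℕ,
    ∀ (V : Type) [Fintype V] (G : SimpleGraph V), n₀ ≤ Fintype.card V →
    Coherent G ((Fintype.card V : ℝ) ^ (1 - c)) ((Fintype.card V : ℝ) ^ (1 - c)) →
    ∀ (col : V → ℕ) (I : Finset ℕ) (A : ℕ → Finset V), K ≤ #I → IsColoredBy col I A →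
    (∀ i ∈ I, (Fintype.card V : ℝ) ^ (1 - σ) ≤ #(A i)) → HasLinkageLE G I A lam →
    ∃ f : W → V, IsRainbowEmbedding G H col I A S f

lemma isForced_empty (H : SimpleGraph W) (c : ℝ) : IsForced H c ∅ := by
  refine ⟨0, 1, one_pos, 1, one_pos, 1, fun V _ G hn _ col I A _ _ _ _ => ?_⟩
  have : Nonempty V := Fintype.card_pos_iff.mp hn
  exact ⟨fun _ => Classical.arbitrary V, by simp, by simp, by simp⟩

lemma mul_rpow_le_rpow {n a b x s : ℝ} (hn : 1 ≤ n) (hs : s ≤ n ^ a) (hx : a + b ≤ x) :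
    s * n ^ b ≤ n ^ x :=
  calc s * n ^ b ≤ n ^ a * n ^ b := by gcongr
    _ = n ^ (a + b) := (Real.rpow_add (by linarith) _ _).symm
    _ ≤ n ^ x := by gcongr

lemma rpow_le_of_rpow_mul_le {n a b x y z : ℝ} (hn : 1 ≤ n) (hx : x ≤ a + b) (hz : n ^ b ≤ z)
    (hy : n ^ a * z ≤ y) : n ^ x ≤ y :=
  calc n ^ x ≤ n ^ (a + b) := by gcongr
    _ = n ^ a * n ^ b := Real.rpow_add (by linarith) _ _
    _ ≤ n ^ a * z := by gcongr
    _ ≤ y := hy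

lemma IsForced.insert_of_subsingleton (hc : 0 < c) (hvS : v ∉ S)
    (hv : (∃ u ∈ S, ∀ w ∈ S, H.Adj v w ↔ w = u) ∨ ∀ w ∈ S, ¬ H.Adj v w) (hF : IsForced H c S) :
    IsForced H c (insert v S) := by
  obtain ⟨K₁, σ₁, hσ₁, lam₁, hlam₁, n₁, hF⟩ := hF
  obtain ⟨K₂, lam₂, hlam₂, n₂, hcover⟩ :=
    exists_forall_exists_isPrivateCover (Nat.succ_pos K₁) hlam₁ (half_pos hσ₁)
  obtain ⟨n₃, hn₃⟩ := Filter.eventually_atTop.mp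
    ((eventually_le_natCast_rpow (half_pos hc) 2).and (Filter.eventually_ge_atTop 1))
  refine ⟨K₂ + 1, min (σ₁ / 2) (c / 2), by positivity, lam₂, hlam₂, max n₁ (max n₂ n₃), ?_⟩
  intro V _ G hn hcoh col I A hI hcol hA hlink
  simp only [max_le_iff] at hn
  obtain ⟨hn2, hn1⟩ := hn₃ _ hn.2.2
  set n := Fintype.card V
  replace hn1 : (1 : ℝ) ≤ n := by exact_mod_cast hn1
  have hw : (0 : ℝ) < (n : ℝ) ^ (1 - c) := by positivity
  have hA2 : ∀ i ∈ I, 2 * (n : ℝ) ^ (1 - c) ≤ #(A i) := fun i hi =>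
    (mul_rpow_le_rpow hn1 hn2 (by linarith [min_le_right (σ₁ / 2) (c / 2)])).trans (hA i hi)
  obtain ⟨i₀, hi₀⟩ : I.Nonempty := card_pos.mp (by omega)
  have herase := erase_subset i₀ I
  obtain ⟨P, hPI₀, hPcard, C, Z, hCA, hZ, hCcard, hClink⟩ := hcover V G _ hn.2.1 hw hcoh (A i₀)
    (I.erase i₀) A (by rw [card_erase_of_mem hi₀]; omega)
    (fun b hb => hcol.disjoint hi₀ (herase hb) (ne_of_mem_erase hb).symm)
    (by linarith [hA2 i₀ hi₀]) (fun b hb => hA2 b (herase hb))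
    (fun x hx b hb => hlink i₀ hi₀ b (herase hb) (ne_of_mem_erase hb).symm x hx)
    (hlink.mono herase le_rfl)
  have hCσ : ∀ b ∈ P, (n : ℝ) ^ (1 - σ₁) ≤ #(C b) := fun b hb =>
    rpow_le_of_rpow_mul_le hn1 (by linarith [min_le_left (σ₁ / 2) (c / 2)])
      (hA b (herase (hPI₀ hb))) (hCcard b hb)
  obtain ⟨b₀, hb₀⟩ : P.Nonempty := card_pos.mp (by omega)
  have hPb₀ := erase_subset b₀ P
  obtain ⟨f, hf⟩ := hF V G hn.1 hcoh col (P.erase b₀) C (by rw [card_erase_of_mem hb₀]; omega)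
    (hcol.mono (hPb₀.trans (hPI₀.trans herase)) fun i hi => hCA i (hPb₀ hi))
    (fun i hi => hCσ i (hPb₀ hi)) (hClink.mono hPb₀ le_rfl)
  obtain ⟨y, hy, hyadj⟩ := hZ.exists_adj_iff hf hb₀ (card_pos.mp
    (Nat.cast_pos.mp (lt_of_lt_of_le (by positivity) (hCσ b₀ hb₀)))) hv
  have hycol : col y = i₀ := hcol i₀ hi₀ y hy
  refine ⟨_, (IsRainbowEmbedding.singleton (hycol ▸ hi₀) (hycol ▸ hy)).union
    (hf.mono (hPb₀.trans (hPI₀.trans herase)) fun i hi => hCA i (hPb₀ hi))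
    (disjoint_singleton_left.mpr hvS) ?_ ?_⟩ <;> simp only [forall_eq, mem_singleton]
  · exact fun w hw => hycol ▸ (ne_of_mem_erase (hPI₀ (hPb₀ (hf.mem w hw).1))).symm
  · exact hyadj

end Forcing

section Probes

variable {ι : Type*} {G : SimpleGraph V} {col : V → ι} {I J : Finset ι} {A C Z : ι → Finset V}
  {X U S : Finset V} {T : ℕ} {i k a : ι} {s u : V} {t th lam : ℝ}

/-- A system of short rainbow paths: every vertex of `X ⊆ A i` is joined to every vertex of
`S ⊆ A k` through the blocks of `J`, by a path whose interior lies in a set `U` that has few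
neighbours in the remaining blocks. -/
structure IsPathSystem (G : SimpleGraph V) (col : V → ι) (I : Finset ι) (A : ι → Finset V) (T : ℕ)
    (th : ℝ) (J : Finset ι) (i : ι) (X : Finset V) (k : ι) (S U : Finset V) : Prop where
  subset : J ⊆ I
  card_le : #J ≤ 2 * T + 2
  left_mem : i ∈ J
  left_subset : X ⊆ A i
  card_left : th * #(A i) ≤ #X
  right_mem : k ∈ J
  right_subset : S ⊆ A k
  card_right : th * #(A k) ≤ #S
  card_nbhdIn_le : ∀ j ∈ I, j ∉ J → (#(nbhdIn G U (A j)) : ℝ) ≤ 4 * T * th * #(A j)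
  exists_path : ∀ x ∈ X, ∀ s ∈ S, ∃ l, IsRainbowPath G col x s l ∧ l.length ≤ 2 * T + 1 ∧
    (∀ v ∈ l, col v ∈ J ∧ v ∈ A (col v)) ∧ ∀ v ∈ l, v ≠ x → v ≠ s → v ∈ U

lemma IsExpanding.mono (h : IsExpanding G I A t) (hJ : J ⊆ I) : IsExpanding G J A t :=
  fun i hi j hj => h i (hJ hi) j (hJ hj)

/-- Two cones with the same apex that share no other block; the path from `x` to `s` is found
inside the union of the paths from `x` and from `s` to the apex. -/
lemma exists_isPathSystem (hcol : IsColoredBy col I A) (hne : ∀ i ∈ I, (A i).Nonempty)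
    (hexp : IsExpanding G I A t) (hlink : HasLinkageLE G I A lam) (hlam : lam ≤ th) (hth0 : 0 < th)
    (ht : 2 ≤ t) (hT : 1 ≤ T) (hI : 2 * T + 2 ≤ #I) (htT : 4 * T ≤ t)
    (hth : (2 * T + 1) * th ≤ 1 / 2) (hbig : ∀ i ∈ I, #(A i) ≤ (t / 2) ^ T) :
    ∃ J i X k S U, IsPathSystem G col I A T th J i X k S U := by
  obtain ⟨i₀, hi₀⟩ : I.Nonempty := card_pos.mp (by omega)
  obtain ⟨r, hr⟩ := hne i₀ hi₀
  obtain ⟨J, i, X, U, hX⟩ := exists_isCone_of_card_le_pow hcol hne hexp hlink hlam hth0 ht hi₀ hr T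
    (by omega) htT hth (hbig i₀ hi₀)
  set I₂ := {j ∈ I | j = i₀ ∨ j ∉ J}
  have hI₂I : I₂ ⊆ I := filter_subset _ _
  have hI₂card : T < #I₂ := by
    have hsdiff := le_card_sdiff J I
    have hsub : #(I \ J) ≤ #I₂ := card_le_card fun j => by simp +contextual [I₂]
    rw [hX.card_eq] at hsdiff
    omega
  obtain ⟨J', k, S, U', hS⟩ := exists_isCone_of_card_le_pow (hcol.mono hI₂I fun _ _ => subset_rfl)
    (fun i hi => hne i (hI₂I hi)) (hexp.mono hI₂I) (hlink.mono hI₂I le_rfl) hlam hth0 ht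
    (by simp [I₂, hi₀]) hr T hI₂card htT hth (hbig i₀ hi₀)
  refine ⟨J ∪ J', i, X, k, S, U ∪ U', union_subset hX.subset (hS.subset.trans hI₂I), ?_,
    mem_union_left _ hX.mem, hX.base_subset, hX.card_base, mem_union_right _ hS.mem, hS.base_subset,
    hS.card_base, fun j hj hjJ => ?_, fun x hx s hs => ?_⟩
  · linarith [card_union_le J J', hX.card_eq, hS.card_eq]
  · rw [notMem_union] at hjJ
    have hunion : (#(nbhdIn G (U ∪ U') (A j)) : ℝ) ≤
        #(nbhdIn G U (A j)) + #(nbhdIn G U' (A j)) := by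
      rw [nbhdIn_union]
      exact_mod_cast card_union_le _ _
    linarith [hX.card_nbhdIn_le j hj hjJ.1,
      hS.card_nbhdIn_le j (mem_filter.mpr ⟨hj, Or.inr hjJ.1⟩) hjJ.2]
  · obtain ⟨P, hP, hPl, hPJ, hPU⟩ := hX.exists_path x hx
    obtain ⟨Q, hQ, hQl, hQJ, hQU⟩ := hS.exists_path s hs
    obtain ⟨R, hR, hRl, hRmem⟩ := hP.exists_join hQ (hP.two_le_length_iff.mp (by omega))
      fun p hp q hq hpq => by
        have hcolp : col p = i₀ := by
          have := (mem_filter.mp (hS.subset (hQJ q hq).1)).2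
          rw [← hpq] at this
          exact this.resolve_right (not_not.mpr (hPJ p hp).1)
        exact List.inj_on_of_nodup_map hP.nodup hp hP.mem_right
          (hcolp.trans (hcol i₀ hi₀ r hr).symm)
    refine ⟨R, hR, by omega, fun v hv => ?_, fun v hv hvx hvs => ?_⟩
    · rcases hRmem v hv with h | h
      · exact ⟨mem_union_left _ (hPJ v h).1, (hPJ v h).2⟩
      · exact ⟨mem_union_right _ (hQJ v h).1, (hQJ v h).2⟩
    · rcases hRmem v hv with h | h
      · exact mem_union_left _ (hPU v h hvx)
      · exact mem_union_right _ (hQU v h hvs)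

lemma IsPathSystem.card_le_two_mul (h : IsPathSystem G col I A T th J i X k S U)
    (hlink : HasLinkageLE G I A lam) (hlam : 0 < lam) (hth : 4 * T * th ≤ 1 / 4) {j : ι}
    (hj : j ∈ I) (hjJ : j ∉ J) :
    (#(A j) : ℝ) ≤ 2 * #{c ∈ A j \ nbhdIn G U (A j) | #(nbrsIn G c S) ≤ 4 * lam * #S} := by
  have hsum : ∑ c ∈ A j, (#(nbrsIn G c S) : ℝ) ≤ lam * #(A j) * #S := by
    calc ∑ c ∈ A j, (#(nbrsIn G c S) : ℝ) = ∑ s ∈ S, (#(nbrsIn G s (A j)) : ℝ) := by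
          exact_mod_cast sum_card_nbrsIn_comm G _ _
      _ ≤ ∑ _s ∈ S, lam * #(A j) := sum_le_sum fun s hs =>
          hlink k (h.subset h.right_mem) j hj (fun hkj => hjJ (hkj ▸ h.right_mem)) s
            (h.right_subset hs)
      _ = lam * #(A j) * #S := by rw [sum_const, nsmul_eq_mul, mul_comm]
  have hmarkov := card_filter_nbrsIn_gt_le hlam hsum four_pos
  have hU := h.card_nbhdIn_le j hj hjJ
  have hcover : #(A j) ≤ #{c ∈ A j \ nbhdIn G U (A j) | #(nbrsIn G c S) ≤ 4 * lam * #S} +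
      (#{c ∈ A j | 4 * lam * #S < #(nbrsIn G c S)} + #(nbhdIn G U (A j))) := by
    refine (card_le_card fun c hc => ?_).trans
      ((card_union_le _ _).trans (add_le_add_right (card_union_le _ _) _))
    simp only [mem_union, mem_filter, mem_sdiff]
    by_cases hcU : c ∈ nbhdIn G U (A j)
    · exact .inr (.inr hcU)
    · exact (le_or_gt _ _).imp (fun h => ⟨⟨hc, hcU⟩, h⟩) fun h => .inl ⟨hc, h⟩
  have hcover : (#(A j) : ℝ) ≤ #{c ∈ A j \ nbhdIn G U (A j) | #(nbrsIn G c S) ≤ 4 * lam * #S} +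
      (#{c ∈ A j | 4 * lam * #S < #(nbrsIn G c S)} + #(nbhdIn G U (A j))) := by
    exact_mod_cast hcover
  have hth' : 4 * T * th * #(A j) ≤ 1 / 4 * #(A j) := by gcongr
  linarith

lemma exists_subset_isExpanding_hasLinkageLE {w : ℝ} (hcol : IsColoredBy col I A)
    (hcoh : Coherent G w w) (hw : 0 < w) (ht : 0 ≤ t) (h1 : ∀ i ∈ I, 8 * t * w ≤ #(A i))
    (h2 : ∀ i ∈ I, 4 * #I * w ≤ #(A i)) (hlam : 0 ≤ lam) (hlink : HasLinkageLE G I A lam) :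
    ∃ A' : ι → Finset V, (∀ i, A' i ⊆ A i) ∧ (∀ i ∈ I, (#(A i) : ℝ) ≤ 2 * #(A' i)) ∧
      IsExpanding G I A' (t / 2) ∧ HasLinkageLE G I A' (2 * lam) := by
  obtain ⟨A', hA', hcard, hexp⟩ := exists_subset_isExpanding hcol hcoh hw ht h1 h2
  exact ⟨A', hA', hcard, hexp, hlink.shrink (t := 1 / 2) (fun i _ => hA' i) (by linarith)
    (by positivity) fun i hi => by linarith [hcard i hi]⟩

/-- A rainbow path `l` from `y` to `s` that probes the vertex `u` of the block `C a`: among the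
vertices of the blocks `C b`, `b ∈ I`, its interior sees none, and its end `y` sees `u` and none
outside `C a`. -/
structure IsProbe (G : SimpleGraph V) (col : V → ι) (J : Finset ι) (A : ι → Finset V)
    (I : Finset ι) (C : ι → Finset V) (a : ι) (u y s : V) (l : List V) : Prop where
  isRainbowPath : IsRainbowPath G col y s l
  mem : ∀ v ∈ l, col v ∈ J ∧ v ∈ A (col v)
  adj : G.Adj y u
  not_adj_left : ∀ b ∈ I, b ≠ a → ∀ c ∈ C b, ¬ G.Adj y c
  not_adj : ∀ v ∈ l, v ≠ y → v ≠ s → ∀ b ∈ I, ∀ c ∈ C b, ¬ G.Adj v c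

lemma IsProbe.mono {A' : ι → Finset V} {y : V} {l : List V}
    (h : IsProbe G col J A' I C a u y s l) (hA : ∀ i, A' i ⊆ A i) :
    IsProbe G col J A I C a u y s l :=
  { h with mem := fun v hv => (h.mem v hv).imp_right fun hvA => hA _ hvA }

lemma IsPrivateCover.exists_isProbe {p : List V → Prop} (hZ : IsPrivateCover G X I I C Z)
    (hU : ∀ v ∈ U, ∀ b ∈ I, ∀ c ∈ C b, ¬ G.Adj v c)
    (hX : ∀ x ∈ X, ∃ l, IsRainbowPath G col x s l ∧ p l ∧ (∀ v ∈ l, col v ∈ J ∧ v ∈ A (col v)) ∧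
      ∀ v ∈ l, v ≠ x → v ≠ s → v ∈ U) (ha : a ∈ I) (hu : u ∈ C a) :
    ∃ y l, IsProbe G col J A I C a u y s l ∧ p l := by
  obtain ⟨y, hy, hyu⟩ := hZ.exists_adj a ha u hu
  obtain ⟨l, hl, hpl, hlJ, hlU⟩ := hX y (hZ.subset a ha hy)
  exact ⟨y, l, ⟨hl, hlJ, hyu, fun b hb hba => hZ.not_adj a ha b hb hba y hy,
    fun v hv hvy hvs => hU v (hlU v hv hvy hvs)⟩, hpl⟩

lemma IsPathSystem.exists_isProbe (h : IsPathSystem G col I A T th J i X k S U) {I' : Finset ι}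
    (hC : ∀ b ∈ I', C b ⊆ A b \ nbhdIn G U (A b)) (hZ : IsPrivateCover G X I' I' C Z) (ha : a ∈ I')
    (hu : u ∈ C a) (hs : s ∈ S) :
    ∃ y l, IsProbe G col J A I' C a u y s l ∧ l.length ≤ 2 * T + 1 := by
  refine hZ.exists_isProbe (U := U) (fun v hv b hb c hc hvc => ?_)
    (fun x hx => h.exists_path x hx s hs) ha hu
  obtain ⟨hcA, hcU⟩ := mem_sdiff.mp (hC b hb hc)
  exact hcU (mem_nbhdIn.mpr ⟨hcA, v, hv, hvc⟩)

end Probes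

section ProbeSystems

variable {ι : Type*} {G : SimpleGraph V} {col : V → ι} {I : Finset ι} {A : ι → Finset V} {K T : ℕ}
  {t lam w : ℝ}

lemma exists_forall_exists_isPrivateCover_of_subset (hK : 1 ≤ K) {M lam' κ : ℝ} (hM : 0 < M)
    (hlam' : 0 < lam') (hκ : 0 < κ) :
    ∃ (K₀ : ℕ) (lam : ℝ), 0 < lam ∧ ∃ n₀ : ℕ, ∀ (V : Type) [Fintype V] (G : SimpleGraph V) (w : ℝ),
      n₀ ≤ Fintype.card V → 0 < w → Coherent G w w → ∀ (col : V → ℕ) (I₀ I : Finset ℕ)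
      (A B : ℕ → Finset V) (i : ℕ) (X : Finset V), I ⊆ I₀ → K₀ ≤ #I → i ∈ I₀ → i ∉ I →
      IsColoredBy col I₀ A → HasLinkageLE G I₀ A lam → X ⊆ A i → w ≤ #X → (∀ b ∈ I, B b ⊆ A b) →
      (∀ b ∈ I, #(A b) ≤ M * #(B b)) → (∀ b ∈ I, 2 * M * w ≤ #(A b)) →
      ∃ I' ⊆ I, #I' = K ∧ ∃ C Z : ℕ → Finset V, (∀ b ∈ I', C b ⊆ B b) ∧
        IsPrivateCover G X I' I' C Z ∧
        (∀ b ∈ I', (Fintype.card V : ℝ) ^ (-κ) * #(A b) ≤ M * #(C b)) ∧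
        HasLinkageLE G I' C lam' := by
  obtain ⟨K₀, lam, hlam, n₀, hcover⟩ := exists_forall_exists_isPrivateCover hK hlam' hκ
  refine ⟨K₀, lam / M, by positivity, n₀, ?_⟩
  intro V _ G w hn hw hcoh col I₀ I A B i X hI hK₀ hi hiI hcol hlink hXA hX hBA hAB hA
  have hne : ∀ b ∈ I, i ≠ b := fun b hb hib => hiI (hib ▸ hb)
  have hlamA : ∀ b ∈ I, lam / M * #(A b) ≤ lam * #(B b) := fun b hb => by
    rw [div_mul_eq_mul_div, div_le_iff₀ hM, mul_assoc, mul_comm _ M]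
    exact mul_le_mul_of_nonneg_left (hAB b hb) hlam.le
  obtain ⟨I', hI', hI'card, C, Z, hCB, hZ, hCcard, hClink⟩ :=
    hcover V G w hn hw hcoh X I B hK₀
      (fun b hb => (hcol.disjoint hi (hI hb) (hne b hb)).mono hXA (hBA b hb)) hX
      (fun b hb => le_of_mul_le_mul_left (by linarith [hA b hb, hAB b hb]) hM)
      (fun x hx b hb => (Nat.cast_le.mpr (card_le_card (nbrsIn_mono (hBA b hb)))).trans
        ((hlink i hi b (hI hb) (hne b hb) x (hXA hx)).trans (hlamA b hb)))
      ((hlink.mono hI le_rfl).shrink (t := 1 / M) hBA (by rw [mul_one_div]) hlam.le fun b hb => by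
        rw [one_div, inv_mul_le_iff₀ hM]
        exact hAB b hb)
  refine ⟨I', hI', hI'card, C, Z, hCB, hZ, fun b hb => ?_, hClink⟩
  calc (Fintype.card V : ℝ) ^ (-κ) * #(A b) ≤ (Fintype.card V : ℝ) ^ (-κ) * (M * #(B b)) := by
        gcongr
        exact hAB b (hI' hb)
    _ = M * ((Fintype.card V : ℝ) ^ (-κ) * #(B b)) := by ring
    _ ≤ M * #(C b) := by gcongr; exact hCcard b hb

lemma exists_subset_isPathSystem {M : ℝ} (hcol : IsColoredBy col I A) (hcoh : Coherent G w w)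
    (hw : 0 < w) (hlam0 : 0 ≤ lam) (hlink : HasLinkageLE G I A lam)
    (hlam : 2 * lam ≤ 1 / (8 * (2 * T + 1))) (hT : 1 ≤ T) (hI : 2 * T + 2 ≤ #I)
    (hM : 16 * (2 * T + 1) + 4 * #I ≤ M) (ht : M ≤ t) (hA : ∀ i ∈ I, M * t * w ≤ #(A i))
    (hbig : ∀ i ∈ I, #(A i) ≤ (t / 4) ^ T) :
    ∃ (A' : ι → Finset V) (J : Finset ι) (i : ι) (X : Finset V) (k : ι) (S U : Finset V),
      (∀ i, A' i ⊆ A i) ∧ (∀ i ∈ I, (#(A i) : ℝ) ≤ 2 * #(A' i)) ∧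
      (∀ i ∈ I, 2 * 2 * w ≤ #(A' i)) ∧ HasLinkageLE G I A' (2 * lam) ∧
      IsPathSystem G col I A' T (1 / (8 * (2 * T + 1))) J i X k S U ∧ w ≤ #X ∧
      #(A k) ≤ M * #S := by
  set th : ℝ := 1 / (8 * (2 * T + 1)) with hth
  have hthT : 8 * (2 * T + 1) * th = 1 := by rw [hth]; field_simp
  have hth0 : 0 < th := by positivity
  have hT0 : (1 : ℝ) ≤ T := by exact_mod_cast hT
  have hI0 : (0 : ℝ) ≤ #I := by positivity
  have hAt : ∀ x ≤ M * t, ∀ i ∈ I, x * w ≤ #(A i) := fun x hx i hi =>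
    le_trans (by gcongr) (hA i hi)
  have hAM : ∀ x ≤ M, ∀ i ∈ I, x * w ≤ #(A i) := fun x hx => hAt x (by nlinarith)
  obtain ⟨A', hA', hcard, hexp, hlink'⟩ := exists_subset_isExpanding_hasLinkageLE hcol hcoh hw
    (by linarith) (hAt (8 * t) (by nlinarith)) (hAM (4 * #I) (by linarith)) hlam0 hlink
  have hA'M : ∀ x, 2 * x ≤ M → ∀ i ∈ I, x * w ≤ #(A' i) := fun x hx i hi => by
    linarith [hAM _ hx i hi, hcard i hi]
  have hne : ∀ i ∈ I, (A' i).Nonempty := fun i hi => by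
    have hpos : (0 : ℝ) < #(A' i) := by linarith [hA'M 1 (by linarith) i hi]
    exact card_pos.mp (by exact_mod_cast hpos)
  obtain ⟨J, i, X, k, S, U, h⟩ := exists_isPathSystem (hcol.mono subset_rfl fun i _ => hA' i) hne
    hexp hlink' hlam hth0 (by linarith) hT hI (by linarith) (by linarith) fun i hi =>
      (Nat.cast_le.mpr (card_le_card (hA' i))).trans ((hbig i hi).trans_eq (by ring))
  refine ⟨A', J, i, X, k, S, U, hA', hcard, hA'M (2 * 2) (by linarith), hlink', h, ?_, ?_⟩
  · calc w = th * (8 * (2 * T + 1) * w) := by rw [← mul_assoc, mul_comm th, hthT, one_mul]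
      _ ≤ th * #(A' i) := by gcongr; exact hA'M _ (by linarith) i (h.subset h.left_mem)
      _ ≤ #X := h.card_left
  · calc (#(A k) : ℝ) ≤ 2 * (8 * (2 * T + 1) * th) * #(A' k) := by
          rw [hthT, mul_one]
          exact hcard k (h.subset h.right_mem)
      _ = 16 * (2 * T + 1) * (th * #(A' k)) := by ring
      _ ≤ 16 * (2 * T + 1) * #S := by gcongr; exact h.card_right
      _ ≤ M * #S := by gcongr; linarith

lemma exists_forall_exists_isProbe (hT : 1 ≤ T) (hK : 1 ≤ K) {lam' κ : ℝ} (hlam' : 0 < lam')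
    (hκ : 0 < κ) :
    ∃ (K₀ : ℕ) (lam : ℝ), 0 < lam ∧ ∃ (M : ℝ) (n₀ : ℕ), ∀ (V : Type) [Fintype V]
      (G : SimpleGraph V) (w : ℝ), n₀ ≤ Fintype.card V → 0 < w → Coherent G w w → ∀ t, M ≤ t →
      Fintype.card V ≤ (t / 4) ^ T → ∀ (col : V → ℕ) (I : Finset ℕ) (A : ℕ → Finset V), K₀ ≤ #I →
      IsColoredBy col I A → (∀ i ∈ I, M * t * w ≤ #(A i)) → HasLinkageLE G I A lam →
      ∃ J ⊆ I, ∃ I' ⊆ I, Disjoint J I' ∧ #I' = K ∧ ∃ k ∈ J, ∃ S ⊆ A k, #(A k) ≤ M * #S ∧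
        ∃ C : ℕ → Finset V, (∀ b ∈ I', C b ⊆ A b) ∧
          (∀ b ∈ I', (Fintype.card V : ℝ) ^ (-κ) * #(A b) ≤ 4 * #(C b)) ∧
          HasLinkageLE G I' C lam' ∧ (∀ b ∈ I', ∀ c ∈ C b, #(nbrsIn G c S) ≤ lam' * #S) ∧
          ∀ a ∈ I', ∀ u ∈ C a, ∀ s ∈ S, ∃ y l, IsProbe G col J A I' C a u y s l ∧
            l.length ≤ 2 * T + 1 := by
  obtain ⟨K₁, lam₁, hlam₁, n₀, hcover⟩ :=
    exists_forall_exists_isPrivateCover_of_subset hK two_pos hlam' hκ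
  obtain ⟨mu, hmu0, hmu₁, hmu', hmuth⟩ : ∃ mu : ℝ, 0 < mu ∧ 2 * mu ≤ lam₁ ∧ 4 * (2 * mu) ≤ lam' ∧
      2 * mu ≤ 1 / (8 * (2 * T + 1)) :=
    ⟨min (lam₁ / 2) (min (lam' / 8) (1 / (8 * (2 * T + 1)) / 2)), by positivity, by grind, by grind,
      by grind⟩
  set K₀ := K₁ + (2 * T + 2)
  refine ⟨K₀, mu, hmu0, 16 * (2 * T + 1) + 4 * K₀, n₀, ?_⟩
  intro V _ G w hn hw hcoh t ht hnt col I A hI hcol hA hlink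
  obtain ⟨I₀, hI₀, hI₀card⟩ := exists_subset_card_eq hI
  obtain ⟨A', J, i, X, k, S, U, hA', hcard, hA'w, hlink', h, hX, hS⟩ := exists_subset_isPathSystem
    (hcol.mono hI₀ fun _ _ => subset_rfl) hcoh hw hmu0.le (hlink.mono hI₀ le_rfl) hmuth hT
    (by omega) (by rw [hI₀card]) ht (fun i hi => hA i (hI₀ hi))
    fun i hi => (Nat.cast_le.mpr (card_le_univ _)).trans hnt
  obtain ⟨I', hI', hI'card, C, Z, hCB, hZ, hCcard, hClink⟩ := hcover V G w hn hw hcoh col I₀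
    (I₀ \ J) A' (fun j => {c ∈ A' j \ nbhdIn G U (A' j) | #(nbrsIn G c S) ≤ 4 * (2 * mu) * #S}) i X
    sdiff_subset (by have := le_card_sdiff J I₀; have := h.card_le; omega) (h.subset h.left_mem)
    (by simp [h.left_mem]) (hcol.mono hI₀ fun i _ => hA' i) (hlink'.mono subset_rfl hmu₁)
    h.left_subset hX (fun b _ => (filter_subset _ _).trans sdiff_subset)
    (fun b hb => h.card_le_two_mul hlink' (by positivity) (by field_simp; linarith)
      (mem_sdiff.mp hb).1 (mem_sdiff.mp hb).2) fun b hb => hA'w b (mem_sdiff.mp hb).1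
  have hI'I : ∀ b ∈ I', b ∈ I₀ ∧ b ∉ J := fun b hb => mem_sdiff.mp (hI' hb)
  have hC : ∀ b ∈ I', ∀ c ∈ C b, c ∈ A' b \ nbhdIn G U (A' b) ∧
      #(nbrsIn G c S) ≤ 4 * (2 * mu) * #S := fun b hb c hc => mem_filter.mp (hCB b hb hc)
  refine ⟨J, h.subset.trans hI₀, I', fun b hb => hI₀ (hI'I b hb).1,
    disjoint_right.mpr fun b hb => (hI'I b hb).2, hI'card, k, h.right_mem, S,
    h.right_subset.trans (hA' k), hS, C, fun b hb c hc => hA' b (mem_sdiff.mp (hC b hb c hc).1).1,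
    fun b hb => ?_, hClink, fun b hb c hc => (hC b hb c hc).2.trans (by gcongr),
    fun a ha u hu s hs => ?_⟩
  · calc (Fintype.card V : ℝ) ^ (-κ) * #(A b) ≤ (Fintype.card V : ℝ) ^ (-κ) * (2 * #(A' b)) := by
          gcongr
          exact hcard b (hI'I b hb).1
      _ ≤ 4 * #(C b) := by linarith [hCcard b hb]
  · obtain ⟨y, l, hl, hlen⟩ := h.exists_isProbe (fun b hb c hc => (hC b hb c hc).1) hZ ha hu hs
    exact ⟨y, l, hl.mono hA', hlen⟩

end ProbeSystems

section ApexProbes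

variable {ι : Type*} {G : SimpleGraph V} {col : V → ι} {I : Finset ι} {A : ι → Finset V}
  {J : Finset ι} {X U : Finset V}
  {K R T m q : ℕ} {i i₀ : ι} {s : V} {t th lam w : ℝ}

lemma exists_subset_isExpanding_of_sum_le {mu : ℝ} (hcol : IsColoredBy col I A)
    (hcoh : Coherent G w w) (hw : 0 < w) (ht : 0 ≤ t) (h1 : ∀ i ∈ I, 16 * t * w ≤ #(A i))
    (h2 : ∀ i ∈ I, 8 * #I * w ≤ #(A i)) (hmu : 0 < mu)
    (hsum : ∀ i ∈ I, ∀ j ∈ I, i ≠ j →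
      ∑ x ∈ A i, (#(nbrsIn G x (A j)) : ℝ) ≤ mu * #(A i) * #(A j)) :
    ∃ A' : ι → Finset V, (∀ i, A' i ⊆ A i) ∧ (∀ i ∈ I, (#(A i) : ℝ) ≤ 4 * #(A' i)) ∧
      IsExpanding G I A' (t / 2) ∧ HasLinkageLE G I A' (8 * #I * mu) := by
  obtain ⟨B, hB, hcard, hBlink⟩ := exists_subset_hasLinkageLE hmu hsum
  obtain ⟨A', hA', hA'card, hexp, hlink⟩ := exists_subset_isExpanding_hasLinkageLE
    (hcol.mono subset_rfl fun i _ => hB i) hcoh hw ht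
    (fun i hi => by linarith [h1 i hi, hcard i hi]) (fun i hi => by linarith [h2 i hi, hcard i hi])
    (by positivity) hBlink
  refine ⟨A', fun i => (hA' i).trans (hB i), fun i hi => ?_, hexp, ?_⟩
  · linarith [hcard i hi, hA'card i hi]
  · convert hlink using 1
    ring

/-- Once a common label `d` has been found, the depth of the cone is adjusted to it. -/
lemma exists_isCone_common_class (hcol : IsColoredBy col I A) (hne : ∀ i ∈ I, (A i).Nonempty)
    (hexp : IsExpanding G I A t) (hlink : HasLinkageLE G I A lam) (hlam : lam ≤ th) (hth0 : 0 < th)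
    (ht : 2 ≤ t) (hi₀ : i₀ ∈ I) (hs : s ∈ A i₀) (hbig : #(A i₀) ≤ (t / 2) ^ T) (hR : 0 < R)
    (hRT : R + T ≤ q) (htq : 4 * q ≤ t) (hth : 8 * (q + 1) * R * th ≤ 1)
    {p : ι → V → ℕ → Prop} (hp : ∀ j ∈ I, j ≠ i₀ → ∀ c ∈ A j, ∃ d ∈ range R, p j c d)
    (hI : (K + q + 1) * R < #I) :
    ∃ d ∈ range R, ∃ I₁ ⊆ I, ∃ J i X U, IsCone G col I₁ A s (q - d) th J i X U ∧
      ∃ I₂ ⊆ I, Disjoint J I₂ ∧ K ≤ #I₂ ∧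
        ∀ j ∈ I₂, (#(A j) : ℝ) ≤ 2 * R * #({c ∈ A j | p j c d} \ nbhdIn G U (A j)) := by
  obtain ⟨d, hd, I₃, hI₃, hI₃card, hclass⟩ := exists_common_class (K := K + q + 1)
    (I := I.erase i₀) hR (fun j hj => hp j (mem_of_mem_erase hj) (ne_of_mem_erase hj))
    (by rw [card_erase_of_mem hi₀]; omega)
  have hdR := mem_range.mp hd
  have hI₁ : insert i₀ I₃ ⊆ I := insert_subset hi₀ (hI₃.trans (erase_subset _ _))
  have hqd : ((q - d : ℕ) : ℝ) ≤ q := by exact_mod_cast Nat.sub_le q d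
  have hR1 : (1 : ℝ) ≤ R := by exact_mod_cast hR
  have hthR : (q + 1) * th ≤ (q + 1) * th * R := le_mul_of_one_le_right (by positivity) hR1
  obtain ⟨J, i, X, U, h⟩ := exists_isCone_of_card_le_pow (hcol.mono hI₁ fun _ _ => subset_rfl)
    (fun i hi => hne i (hI₁ hi)) (hexp.mono hI₁) (hlink.mono hI₁ le_rfl) hlam hth0 ht
    (mem_insert_self i₀ I₃) hs (q - d)
    (by rw [card_insert_of_notMem fun h => notMem_erase i₀ I (hI₃ h)]; omega) (by linarith)
    (by nlinarith) (hbig.trans (pow_le_pow_right₀ (by linarith) (by omega)))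
  refine ⟨d, hd, insert i₀ I₃, hI₁, J, i, X, U, h, I₃ \ J,
    sdiff_subset.trans (hI₃.trans (erase_subset _ _)), disjoint_sdiff, ?_, fun j hj => ?_⟩
  · have hsdiff := le_card_sdiff J I₃
    rw [h.card_eq] at hsdiff
    omega
  · obtain ⟨hj, hjJ⟩ := mem_sdiff.mp hj
    have hU := h.card_nbhdIn_le j (mem_insert_of_mem hj) hjJ
    have hlarge : (#(A j) : ℝ) ≤ R * #{c ∈ A j | p j c d} := by exact_mod_cast hclass j hj
    have hsdiff : (#{c ∈ A j | p j c d} : ℝ) ≤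
        #({c ∈ A j | p j c d} \ nbhdIn G U (A j)) + #(nbhdIn G U (A j)) := by
      exact_mod_cast card_le_card_sdiff_add_card
    have hUR : 4 * (R * (2 * (q - d : ℕ) * th * #(A j))) ≤ 1 * #(A j) := calc
      _ = 8 * ((q - d : ℕ) : ℝ) * R * th * #(A j) := by ring
      _ ≤ 8 * (q + 1) * R * th * #(A j) := by gcongr; linarith
      _ ≤ 1 * #(A j) := by gcongr
    nlinarith

lemma IsCone.apex_mem (h : IsCone G col I A s m th J i X U) (hm : 1 ≤ m) (hX : X.Nonempty) :
    s ∈ U := by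
  obtain ⟨x, hx⟩ := hX
  obtain ⟨l, hl, hlen, -, hlU⟩ := h.exists_path x hx
  exact hlU s hl.mem_right (hl.two_le_length_iff.mp (by omega)).symm

lemma IsCone.exists_isProbe (h : IsCone G col I A s m th J i X U) {I' : Finset ι}
    {C Z : ι → Finset V} (hC : ∀ b ∈ I', ∀ c ∈ C b, c ∉ nbhdIn G U (A b))
    (hCA : ∀ b ∈ I', C b ⊆ A b) (hZ : IsPrivateCover G X I' I' C Z) {a : ι} (ha : a ∈ I') {u : V}
    (hu : u ∈ C a) : ∃ y l, IsProbe G col J A I' C a u y s l ∧ l.length = m + 1 :=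
  hZ.exists_isProbe (U := U)
    (fun v hv b hb c hc hvc => hC b hb c hc (mem_nbhdIn.mpr ⟨hCA b hb hc, v, hv, hvc⟩))
    (fun x hx => (h.exists_path x hx).imp fun _ hl =>
      ⟨hl.1, hl.2.1, hl.2.2.1, fun v hv hvx _ => hl.2.2.2 v hv hvx⟩) ha hu

lemma exists_subset_isCone_common_class {M mu : ℝ} (hcol : IsColoredBy col I A)
    (hcoh : Coherent G w w) (hw : 0 < w) (hi₀ : i₀ ∈ I) (hmu0 : 0 < mu)
    (hmu : 8 * #I * mu ≤ 1 / (8 * (q + 1) * R))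
    (hsum : ∀ i ∈ I, ∀ j ∈ I, i ≠ j →
      ∑ x ∈ A i, (#(nbrsIn G x (A j)) : ℝ) ≤ mu * #(A i) * #(A j))
    (hR : 0 < R) (hRT : R + T ≤ q) (hI : (K + q + 1) * R < #I)
    (hM : 32 * (q + 1) * R + 8 * #I ≤ M) (ht : M ≤ t) (hA : ∀ i ∈ I, M * t * w ≤ #(A i))
    (hbig : ∀ i ∈ I, #(A i) ≤ (t / 4) ^ T) {p : V → ι → V → ℕ → Prop}
    (hp : ∀ s ∈ A i₀, ∀ j ∈ I, j ≠ i₀ → ∀ c ∈ A j, ∃ d ∈ range R, p s j c d) :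
    ∃ A' : ι → Finset V, (∀ i, A' i ⊆ A i) ∧ (∀ i ∈ I, (#(A i) : ℝ) ≤ 4 * #(A' i)) ∧
      (∀ i ∈ I, 2 * (2 * R) * w ≤ #(A' i)) ∧ HasLinkageLE G I A' (8 * #I * mu) ∧
      ∃ s ∈ A i₀, ∃ d ∈ range R, ∃ I₁ ⊆ I, ∃ J i X U,
        IsCone G col I₁ A' s (q - d) (1 / (8 * (q + 1) * R)) J i X U ∧ w ≤ #X ∧
        ∃ I₂ ⊆ I, Disjoint J I₂ ∧ K ≤ #I₂ ∧
          ∀ j ∈ I₂, (#(A' j) : ℝ) ≤ 2 * R * #({c ∈ A' j | p s j c d} \ nbhdIn G U (A' j)) := by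
  set th : ℝ := 1 / (8 * (q + 1) * R)
  have hthR : 8 * (q + 1) * R * th = 1 := mul_one_div_cancel (by positivity)
  have hth0 : 0 < th := by positivity
  have hI1 : (1 : ℝ) ≤ #I := by exact_mod_cast card_pos.mpr ⟨i₀, hi₀⟩
  have hR1 : (1 : ℝ) ≤ R := by exact_mod_cast hR
  have hqR : (q + 1 : ℝ) ≤ (q + 1) * R := le_mul_of_one_le_right (by positivity) hR1
  have hAt : ∀ x ≤ M * t, ∀ i ∈ I, x * w ≤ #(A i) := fun x hx i hi =>
    le_trans (by gcongr) (hA i hi)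
  have : 32 ≤ M := by nlinarith
  have hAM : ∀ x ≤ M, ∀ i ∈ I, x * w ≤ #(A i) := fun x hx => hAt x (by nlinarith)
  obtain ⟨A', hA', hcard, hexp, hlink⟩ := exists_subset_isExpanding_of_sum_le (t := t) hcol
    hcoh hw (by linarith) (hAt _ (by nlinarith)) (hAM _ (by nlinarith)) hmu0 hsum
  have hA'M : ∀ x, 4 * x ≤ M → ∀ i ∈ I, x * w ≤ #(A' i) := fun x hx i hi => by
    linarith [hAM _ hx i hi, hcard i hi]
  have hne : ∀ i ∈ I, (A' i).Nonempty := fun i hi => by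
    have hpos : (0 : ℝ) < #(A' i) := by linarith [hA'M 1 (by linarith) i hi]
    exact card_pos.mp (by exact_mod_cast hpos)
  obtain ⟨s, hs⟩ := hne i₀ hi₀
  obtain ⟨d, hd, I₁, hI₁, J, i, X, U, h, hI₂⟩ := exists_isCone_common_class
    (hcol.mono subset_rfl fun i _ => hA' i) hne hexp hlink hmu hth0 (by linarith) hi₀ hs
    ((Nat.cast_le.mpr (card_le_card (hA' i₀))).trans ((hbig i₀ hi₀).trans_eq (by ring))) hR hRT
    (by nlinarith) hthR.le (fun j hj hji₀ c hc => hp s (hA' i₀ hs) j hj hji₀ c (hA' j hc)) hI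
  refine ⟨A', hA', hcard, hA'M _ (by nlinarith), hlink, s, hA' i₀ hs, d, hd, I₁, hI₁, J, i, X, U,
    h, ?_, hI₂⟩
  calc w = th * (8 * (q + 1) * R * w) := by rw [← mul_assoc, mul_comm th, hthR, one_mul]
    _ ≤ th * #(A' i) := by gcongr; exact hA'M _ (by nlinarith) i (hI₁ (h.subset h.mem))
    _ ≤ #X := h.card_base

lemma exists_forall_exists_isProbe_of_apex (hq : 3 * T + 2 ≤ q) (hK : 1 ≤ K) {lam' κ : ℝ}
    (hlam' : 0 < lam') (hκ : 0 < κ) :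
    ∃ (K₀ : ℕ) (mu : ℝ), 1 ≤ K₀ ∧ 0 < mu ∧ ∃ (M : ℝ) (n₀ : ℕ), ∀ (V : Type) [Fintype V]
      (G : SimpleGraph V) (w : ℝ), n₀ ≤ Fintype.card V → 0 < w → Coherent G w w → ∀ t, M ≤ t →
      Fintype.card V ≤ (t / 4) ^ T → ∀ (col : V → ℕ) (I : Finset ℕ) (i₀ : ℕ) (C : ℕ → Finset V)
      (p : V → ℕ → V → ℕ → Prop), i₀ ∈ I → #I = K₀ + 1 → IsColoredBy col I C →
      (∀ i ∈ I, M * t * w ≤ #(C i)) → (∀ i ∈ I, ∀ j ∈ I, i ≠ j →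
        ∑ x ∈ C i, (#(nbrsIn G x (C j)) : ℝ) ≤ mu * #(C i) * #(C j)) →
      (∀ s ∈ C i₀, ∀ j ∈ I, j ≠ i₀ → ∀ c ∈ C j, ∃ d ∈ range (2 * T + 2), p s j c d) →
      ∃ s ∈ C i₀, ∃ d, ∃ I' ⊆ I, i₀ ∉ I' ∧ #I' = K ∧ ∃ J ⊆ I, Disjoint J I' ∧ ∃ F : ℕ → Finset V,
        (∀ b ∈ I', F b ⊆ C b) ∧ (∀ b ∈ I', ∀ c ∈ F b, p s b c d ∧ ¬ G.Adj s c) ∧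
        (∀ b ∈ I', (Fintype.card V : ℝ) ^ (-κ) * #(C b) ≤ M * #(F b)) ∧
        HasLinkageLE G I' F lam' ∧ ∀ b ∈ I', ∀ u ∈ F b, ∃ y l,
          IsProbe G col J C I' F b u y s l ∧ l.length + d = q + 1 := by
  set R := 2 * T + 2 with hR
  obtain ⟨K₁, lam₁, hlam₁, n₀, hcover⟩ := exists_forall_exists_isPrivateCover_of_subset hK
    (show (0 : ℝ) < 2 * R by positivity) hlam' hκ
  set K₀ := (K₁ + q + 1) * R with hK₀
  obtain ⟨mu, hmu0, hmuth, hmu₁⟩ : ∃ mu : ℝ, 0 < mu ∧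
      8 * (K₀ + 1 : ℕ) * mu ≤ 1 / (8 * (q + 1) * R) ∧ 8 * (K₀ + 1 : ℕ) * mu ≤ lam₁ :=
    ⟨min (1 / (8 * ((q : ℝ) + 1) * R)) lam₁ / (8 * (K₀ + 1 : ℕ)), by positivity,
    by rw [mul_div_cancel₀ _ (by positivity)]; exact min_le_left _ _,
    by rw [mul_div_cancel₀ _ (by positivity)]; exact min_le_right _ _⟩
  set M : ℝ := 32 * (q + 1) * R + 8 * (K₀ + 1 : ℕ) with hM
  refine ⟨K₀, mu, Nat.mul_pos (by omega) (by omega), hmu0, M, n₀, ?_⟩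
  intro V _ G w hn hw hcoh t ht hnt col I i₀ C p hi₀ hI hcol hC hsum hp
  obtain ⟨A, hA, hcard, hAw, hlink, s, hs, d, hd, I₁, hI₁, J, i, X, U, h, hX, I₂, hI₂, hJI₂, hK₁,
    hlarge⟩ := exists_subset_isCone_common_class (K := K₁) hcol hcoh hw hi₀ hmu0 (by rwa [hI]) hsum
      (by omega) (by omega) (by omega) (by rw [hI]) ht hC
      (fun i _ => (Nat.cast_le.mpr (card_le_univ _)).trans hnt) hp
  rw [hI] at hlink
  have hi : i ∈ I := hI₁ (h.subset h.mem)
  obtain ⟨I', hI', hI'card, F, Z, hFB, hZ, hFcard, hFlink⟩ := hcover V G w hn hw hcoh col I I₂ A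
    (fun j => {c ∈ A j | p s j c d} \ nbhdIn G U (A j)) i X hI₂ hK₁ hi
    (disjoint_left.mp hJI₂ h.mem) (hcol.mono subset_rfl fun i _ => hA i)
    (hlink.mono subset_rfl hmu₁) h.base_subset hX
    (fun b _ => sdiff_subset.trans (filter_subset _ _)) hlarge fun b hb => hAw b (hI₂ hb)
  have hF : ∀ b ∈ I', ∀ c ∈ F b, (c ∈ A b ∧ p s b c d) ∧ c ∉ nbhdIn G U (A b) :=
    fun b hb c hc => by simpa only [mem_sdiff, mem_filter] using hFB b hb hc
  have hdR := mem_range.mp hd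
  have hXne : X.Nonempty := card_pos.mp (by exact_mod_cast hw.trans_le hX)
  have hsU := h.apex_mem (by omega) hXne
  refine ⟨s, hs, d, I', hI'.trans hI₂, fun hi₀' => disjoint_left.mp hJI₂ h.col_apex_mem
    (hI' (hcol i₀ hi₀ s hs ▸ hi₀')), hI'card, J, h.subset.trans hI₁, hJI₂.mono_right hI', F,
    fun b hb c hc => hA b (hF b hb c hc).1.1, fun b hb c hc => ⟨(hF b hb c hc).1.2, fun hsc =>
      (hF b hb c hc).2 (mem_nbhdIn.mpr ⟨(hF b hb c hc).1.1, s, hsU, hsc⟩)⟩, fun b hb => ?_,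
    hFlink, fun b hb u hu => ?_⟩
  · calc (Fintype.card V : ℝ) ^ (-κ) * #(C b) ≤ (Fintype.card V : ℝ) ^ (-κ) * (4 * #(A b)) := by
          gcongr
          exact hcard b (hI₂ (hI' hb))
      _ ≤ 4 * (2 * R * #(F b)) := by linarith [hFcard b hb]
      _ = 8 * R * #(F b) := by ring
      _ ≤ M * #(F b) := by
          gcongr
          nlinarith [show (0 : ℝ) ≤ q * R by positivity, show (0 : ℝ) ≤ (K₀ + 1 : ℕ) by positivity]
  · obtain ⟨y, l, hl, hlen⟩ := h.exists_isProbe (fun b hb c hc => (hF b hb c hc).2)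
      (fun b hb c hc => (hF b hb c hc).1.1) hZ hb hu
    exact ⟨y, l, hl.mono hA, by omega⟩

end ApexProbes

section Ears

variable {ι : Type*} {G : SimpleGraph V} {col : V → ι} {I I₀ I' J₁ J₂ : Finset ι}
  {A C D F : ι → Finset V} {a b k : ι} {u w x y s : V} {P Q : List V}

/-- A rainbow path `l` from `x` to `y` through the blocks outside `I'` that turns `u ∈ F a` and
`w ∈ F b` into the ends of an induced path with interior `l`, and whose vertices see no other block
`F i`, `i ∈ I'`. -/
structure IsEar (G : SimpleGraph V) (col : V → ι) (I : Finset ι) (A : ι → Finset V)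
    (I' : Finset ι) (F : ι → Finset V) (a b : ι) (u w x y : V) (l : List V) : Prop where
  isRainbowPath : IsRainbowPath G col x y l
  mem : ∀ v ∈ l, col v ∈ I ∧ col v ∉ I' ∧ v ∈ A (col v)
  adj_left_iff : ∀ v ∈ l, G.Adj v u ↔ v = x
  adj_right_iff : ∀ v ∈ l, G.Adj v w ↔ v = y
  not_adj : ∀ v ∈ l, ∀ i ∈ I', i ≠ a → i ≠ b → ∀ c ∈ F i, ¬ G.Adj v c

lemma IsProbe.exists_isEar (hP : IsProbe G col J₁ A I C a u x s P)
    (hQ : IsProbe G col J₂ D I' F b w y s Q)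
    (hQC : ∀ v ∈ Q, v ≠ s → col v ∈ I ∧ col v ∉ I' ∧ v ∈ C (col v))
    (hs : ∀ i ∈ I', ∀ c ∈ F i, ¬ G.Adj s c) (hJ₁ : J₁ ⊆ I₀) (hI : I ⊆ I₀) (hdisj : Disjoint J₁ I)
    (hI' : I' ⊆ I) (hCA : ∀ i ∈ I, C i ⊆ A i) (hFC : ∀ i ∈ I', F i ⊆ C i) (ha : a ∈ I')
    (hb : b ∈ I') (hab : a ≠ b) (hu : u ∈ F a) (hw : w ∈ F b) :
    ∃ l, IsEar G col I₀ A I' F a b u w x y l ∧ l.length + 1 = P.length + Q.length := by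
  have hPF : ∀ v ∈ P, v ≠ x → ∀ i ∈ I', ∀ c ∈ F i, ¬ G.Adj v c := fun v hv hvx i hi c hc => by
    rcases eq_or_ne v s with rfl | hvs
    · exact hs i hi c hc
    · exact hP.not_adj v hv hvx hvs i (hI' hi) c (hFC i hi hc)
  have hQF : ∀ v ∈ Q, v ≠ y → ∀ i ∈ I', ∀ c ∈ F i, ¬ G.Adj v c := fun v hv hvy i hi c hc => by
    rcases eq_or_ne v s with rfl | hvs
    · exact hs i hi c hc
    · exact hQ.not_adj v hv hvy hvs i hi c hc
  have hxF : ∀ i ∈ I', i ≠ a → ∀ c ∈ F i, ¬ G.Adj x c := fun i hi hia c hc =>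
    hP.not_adj_left i (hI' hi) hia c (hFC i hi hc)
  obtain ⟨l, hl, hlen, hlPQ⟩ := hP.isRainbowPath.exists_glue hQ.isRainbowPath
    (fun hys => hs b hb w hw (hys ▸ hQ.adj)) (fun p hp hps v hv hvs => by
      obtain ⟨hvI, hvI', hvC⟩ := hQC v hv hvs
      rcases eq_or_ne p x with rfl | hpx
      · exact hP.not_adj_left _ hvI (fun hva => hvI' (hva ▸ ha)) v hvC
      · exact hP.not_adj p hp hpx hps _ hvI v hvC)
    fun p hp v hv hvs hpv => disjoint_left.mp hdisj (hP.mem p hp).1 (hpv ▸ (hQC v hv hvs).1)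
  have hlF : ∀ v ∈ l, v = x ∨ v = y ∨ ∀ i ∈ I', ∀ c ∈ F i, ¬ G.Adj v c := fun v hv => by
    rcases hlPQ v hv with h | h
    · exact (eq_or_ne v x).imp_right fun hvx => .inr (hPF v h hvx)
    · exact .inr ((eq_or_ne v y).imp_right (hQF v h))
  refine ⟨l, ⟨hl, fun v hv => ?_, fun v hv => ⟨fun hvu => ?_, fun hvx => hvx ▸ hP.adj⟩,
    fun v hv => ⟨fun hvw => ?_, fun hvy => hvy ▸ hQ.adj⟩, fun v hv i hi hia hib c hc => ?_⟩, hlen⟩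
  · by_cases hvP : v ∈ P
    · exact ⟨hJ₁ (hP.mem v hvP).1, fun h => disjoint_left.mp hdisj (hP.mem v hvP).1 (hI' h),
        (hP.mem v hvP).2⟩
    · obtain ⟨hvI, hvI', hvC⟩ := hQC v ((hlPQ v hv).resolve_left hvP)
        fun hvs => hvP (hvs ▸ hP.isRainbowPath.mem_right)
      exact ⟨hI hvI, hvI', hCA _ hvI hvC⟩
  · rcases hlF v hv with h | rfl | h
    · exact h
    · exact absurd hvu (hQ.not_adj_left a ha hab u hu)
    · exact absurd hvu (h a ha u hu)
  · rcases hlF v hv with rfl | h | h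
    · exact absurd hvw (hxF b hb hab.symm w hw)
    · exact h
    · exact absurd hvw (h b hb w hw)
  · rcases hlF v hv with rfl | rfl | h
    · exact hxF i hi hia c hc
    · exact hQ.not_adj_left i hi hib c hc
    · exact h i hi c hc

lemma sum_card_nbrsIn_le_of_hasLinkageLE {mu : ℝ} (hlink : HasLinkageLE G I C mu)
    (hk : ∀ b ∈ I, ∀ c ∈ C b, #(nbrsIn G c (C k)) ≤ mu * #(C k)) (hI : ∀ i ∈ I₀, i = k ∨ i ∈ I) :
    ∀ i ∈ I₀, ∀ j ∈ I₀, i ≠ j →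
      ∑ x ∈ C i, (#(nbrsIn G x (C j)) : ℝ) ≤ mu * #(C i) * #(C j) := by
  have hsum : ∀ i j, (∀ x ∈ C i, #(nbrsIn G x (C j)) ≤ mu * #(C j)) →
      ∑ x ∈ C i, (#(nbrsIn G x (C j)) : ℝ) ≤ mu * #(C i) * #(C j) := fun i j h =>
    (sum_le_card_nsmul _ _ _ h).trans_eq (by rw [nsmul_eq_mul]; ring)
  intro i hi j hj hij
  rcases hI i hi with rfl | hiI
  · have hcomm : ∑ x ∈ C i, (#(nbrsIn G x (C j)) : ℝ) = ∑ x ∈ C j, (#(nbrsIn G x (C i)) : ℝ) := by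
      exact_mod_cast sum_card_nbrsIn_comm G (C i) (C j)
    rw [hcomm, mul_right_comm]
    exact hsum j i (hk j ((hI j hj).resolve_left hij.symm))
  · rcases hI j hj with rfl | hjI
    · exact hsum i j (hk i hiI)
    · exact hsum i j (hlink i hiI j hjI hij)

end Ears

section EarSystems

variable {T K q : ℕ}

lemma exists_isEar_of_isProbe {ι : Type*} {G : SimpleGraph V} {col : V → ι}
    {I I₁ I' J J₂ : Finset ι} {A C D F : ι → Finset V} {a b k : ι} {u w s : V} {d : ℕ}
    (hJ : J ⊆ I) (hI₁ : I₁ ⊆ I) (hJI₁ : Disjoint J I₁) (hI' : I' ⊆ I₁)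
    (hCA : ∀ i ∈ I₁, C i ⊆ A i) (hFC : ∀ i ∈ I', F i ⊆ C i) (hs : col s = k)
    (hD : ∀ i ∈ J₂, i ≠ k → i ∈ I₁ ∧ D i ⊆ C i) (hJ₂I' : Disjoint J₂ I')
    (hsF : ∀ i ∈ I', ∀ c ∈ F i, ¬ G.Adj s c)
    (hP : ∃ x P, IsProbe G col J A I₁ C a u x s P ∧ P.length = d)
    (hQ : ∃ y Q, IsProbe G col J₂ D I' F b w y s Q ∧ Q.length + d = q + 1)
    (ha : a ∈ I') (hb : b ∈ I') (hab : a ≠ b) (hu : u ∈ F a) (hw : w ∈ F b) :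
    ∃ x y l, IsEar G col I A I' F a b u w x y l ∧ l.length = q := by
  obtain ⟨x, P, hP, hPlen⟩ := hP
  obtain ⟨y, Q, hQ, hQlen⟩ := hQ
  have hQC : ∀ v ∈ Q, v ≠ s → col v ∈ I₁ ∧ col v ∉ I' ∧ v ∈ C (col v) := fun v hv hvs => by
    obtain ⟨hvJ₂, hvD⟩ := hQ.mem v hv
    have hvk : col v ≠ k := fun h => hvs <| List.inj_on_of_nodup_map hQ.isRainbowPath.nodup hv
      hQ.isRainbowPath.mem_right (h.trans hs.symm)
    exact ⟨(hD _ hvJ₂ hvk).1, disjoint_left.mp hJ₂I' hvJ₂, (hD _ hvJ₂ hvk).2 hvD⟩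
  obtain ⟨l, hl, hlen⟩ :=
    hP.exists_isEar hQ hQC hsF hJ hI₁ hJI₁ hI' hCA hFC ha hb hab hu hw
  exact ⟨x, y, l, hl, by omega⟩

lemma exists_forall_exists_isEar_of_isProbe (hq : 3 * T + 2 ≤ q) (hK : 1 ≤ K) {lam' κ : ℝ}
    (hlam' : 0 < lam') (hκ : 0 < κ) :
    ∃ (K₀ : ℕ) (mu : ℝ), 1 ≤ K₀ ∧ 0 < mu ∧ ∃ (M : ℝ) (n₀ : ℕ), ∀ (V : Type) [Fintype V]
      (G : SimpleGraph V) (w : ℝ), n₀ ≤ Fintype.card V → 0 < w → Coherent G w w → ∀ t, M ≤ t →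
      Fintype.card V ≤ (t / 4) ^ T → ∀ (col : V → ℕ) (I J I₁ : Finset ℕ) (k : ℕ)
      (A C : ℕ → Finset V) (S : Finset V), IsColoredBy col I A → J ⊆ I → I₁ ⊆ I → Disjoint J I₁ →
      #I₁ = K₀ → k ∈ J → S ⊆ A k → (∀ i ∈ I₁, C i ⊆ A i) → M * t * w ≤ #S →
      (∀ i ∈ I₁, M * t * w ≤ #(C i)) → HasLinkageLE G I₁ C mu →
      (∀ i ∈ I₁, ∀ c ∈ C i, #(nbrsIn G c S) ≤ mu * #S) →
      (∀ a ∈ I₁, ∀ u ∈ C a, ∀ s ∈ S, ∃ y l, IsProbe G col J A I₁ C a u y s l ∧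
        l.length ≤ 2 * T + 1) →
      ∃ I' ⊆ I₁, #I' = K ∧ ∃ F : ℕ → Finset V, (∀ b ∈ I', F b ⊆ C b) ∧
        (∀ b ∈ I', (Fintype.card V : ℝ) ^ (-κ) * #(C b) ≤ M * #(F b)) ∧
        HasLinkageLE G I' F lam' ∧ ∀ a ∈ I', ∀ b ∈ I', a ≠ b → ∀ u ∈ F a, ∀ w ∈ F b, ∃ x y l,
          IsEar G col I A I' F a b u w x y l ∧ l.length = q := by
  obtain ⟨K₀, mu, hK₀, hmu, M, n₀, hapex⟩ := exists_forall_exists_isProbe_of_apex hq hK hlam' hκ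
  refine ⟨K₀, mu, hK₀, hmu, M, n₀, ?_⟩
  intro V _ G w hn hw hcoh t ht hnt col I J I₁ k A C S hcol hJ hI₁ hJI₁ hI₁card hk hS hCA hScard
    hCcard hlink hCS hP
  have hkI₁ : k ∉ I₁ := disjoint_left.mp hJI₁ hk
  set D := Function.update C k S
  have hDk : D k = S := Function.update_self ..
  have hDC : ∀ i ∈ I₁, D i = C i := fun i hi =>
    Function.update_of_ne (ne_of_mem_of_not_mem hi hkI₁) ..
  have hDA : ∀ i ∈ insert k I₁, D i ⊆ A i :=
    (forall_mem_insert ..).mpr ⟨hDk ▸ hS, fun i hi => hDC i hi ▸ hCA i hi⟩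
  obtain ⟨s, hs, d, I', hI', hkI', hI'card, J₂, hJ₂, hJ₂I', F, hFD, hF, hFcard, hFlink, hQ⟩ :=
    hapex V G w hn hw hcoh t ht hnt col (insert k I₁) k D
      (fun s a u d => ∃ y l, IsProbe G col J A I₁ C a u y s l ∧ l.length = d)
      (mem_insert_self ..) (by rw [card_insert_of_notMem hkI₁, hI₁card])
      (hcol.mono (insert_subset (hJ hk) hI₁) hDA)
      ((forall_mem_insert ..).mpr ⟨hDk ▸ hScard, fun i hi => hDC i hi ▸ hCcard i hi⟩)
      (sum_card_nbrsIn_le_of_hasLinkageLE (k := k) (I := I₁)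
        (fun i hi j hj hij => by rw [hDC i hi, hDC j hj]; exact hlink i hi j hj hij)
        (fun b hb => by rw [hDC b hb, hDk]; exact hCS b hb) fun i => mem_insert.mp)
      fun s hs a ha hak u hu => by
        have haI₁ := mem_of_mem_insert_of_ne ha hak
        obtain ⟨y, l, hl, hlen⟩ := hP a haI₁ u (hDC a haI₁ ▸ hu) s (hDk ▸ hs)
        exact ⟨l.length, mem_range.mpr (by omega), y, l, hl, rfl⟩
  have hI'I₁ : I' ⊆ I₁ := fun i hi =>
    mem_of_mem_insert_of_ne (hI' hi) (ne_of_mem_of_not_mem hi hkI')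
  have hFC : ∀ i ∈ I', F i ⊆ C i := fun i hi => hDC i (hI'I₁ hi) ▸ hFD i hi
  exact ⟨I', hI'I₁, hI'card, F, hFC, fun b hb => hDC b (hI'I₁ hb) ▸ hFcard b hb, hFlink,
    fun a ha b hb hab u hu v hv => exists_isEar_of_isProbe hJ hI₁ hJI₁ hI'I₁ hCA hFC
      (hcol k (hJ hk) s (hS (hDk ▸ hs)))
      (fun i hi hik => have hi := mem_of_mem_insert_of_ne (hJ₂ hi) hik; ⟨hi, (hDC i hi).le⟩) hJ₂I'
      (fun i hi c hc => (hF i hi c hc).2) (hF a ha u hu).1 (hQ b hb v hv) ha hb hab hu hv⟩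

lemma exists_forall_exists_isEar_of_le_pow (hT : 1 ≤ T) (hq : 3 * T + 2 ≤ q) (hK : 1 ≤ K)
    {lam' κ : ℝ} (hlam' : 0 < lam') (hκ : 0 < κ) :
    ∃ (K₀ : ℕ) (lam : ℝ), 0 < lam ∧ ∃ (M : ℝ) (n₀ : ℕ), ∀ (V : Type) [Fintype V]
      (G : SimpleGraph V) (w : ℝ), n₀ ≤ Fintype.card V → 0 < w → Coherent G w w → ∀ t, M ≤ t →
      Fintype.card V ≤ (t / 4) ^ T → ∀ (col : V → ℕ) (I : Finset ℕ) (A : ℕ → Finset V), K₀ ≤ #I →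
      IsColoredBy col I A → (∀ i ∈ I, M * (t * w) ≤ (Fintype.card V : ℝ) ^ (-κ) * #(A i)) →
      HasLinkageLE G I A lam →
      ∃ I' ⊆ I, #I' = K ∧ ∃ F : ℕ → Finset V, (∀ b ∈ I', F b ⊆ A b) ∧
        (∀ b ∈ I', (Fintype.card V : ℝ) ^ (-κ) * ((Fintype.card V : ℝ) ^ (-κ) * #(A b)) ≤
          M * #(F b)) ∧
        HasLinkageLE G I' F lam' ∧ ∀ a ∈ I', ∀ b ∈ I', a ≠ b → ∀ u ∈ F a, ∀ w ∈ F b, ∃ x y l,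
          IsEar G col I A I' F a b u w x y l ∧ l.length = q := by
  obtain ⟨K₂, mu, hK₂, hmu, M₂, n₂, hear⟩ := exists_forall_exists_isEar_of_isProbe hq hK hlam' hκ
  obtain ⟨K₁, lam, hlam, M₁, n₁, hprobe⟩ := exists_forall_exists_isProbe hT hK₂ hmu hκ
  obtain ⟨M, hM, hM₁, hM₂⟩ : ∃ M : ℝ, 1 ≤ M ∧ M₁ ≤ M ∧ M₂ ≤ M :=
    ⟨max 1 (max M₁ M₂), by simp, by simp, by simp⟩
  have hMM : M ≤ 4 * M * M := by nlinarith
  refine ⟨K₁, lam, hlam, 4 * M * M, max 1 (max n₁ n₂), ?_⟩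
  intro V _ G w hn hw hcoh t ht hnt col I A hI hcol hA hlink
  have hn1 : (1 : ℝ) ≤ Fintype.card V := by exact_mod_cast (le_max_left _ _).trans hn
  set z := (Fintype.card V : ℝ) ^ (-κ)
  have hz0 : 0 < z := by positivity
  have hz1 : z ≤ 1 := Real.rpow_le_one_of_one_le_of_nonpos hn1 (by linarith)
  have hMt : M ≤ t := hMM.trans ht
  have htw : 0 < t * w := by nlinarith
  have hAM : ∀ i ∈ I, M * (M * t * w) ≤ #(A i) := fun i hi =>
    calc M * (M * t * w) ≤ 4 * M * M * (t * w) := by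
          nlinarith [show 0 ≤ M * M * (t * w) by positivity]
      _ ≤ z * #(A i) := hA i hi
      _ ≤ #(A i) := mul_le_of_le_one_left (by positivity) hz1
  obtain ⟨J, hJ, I₁, hI₁, hJI₁, hI₁card, k, hk, S, hS, hScard, C, hCA, hCcard, hClink, hCS, hP⟩ :=
    hprobe V G w (by grind) hw hcoh t (hM₁.trans hMt) hnt col I A hI hcol
      (fun i hi => le_trans (by nlinarith [show 0 ≤ M * (t * w) by positivity]) (hAM i hi)) hlink
  have hMtw : M₂ * t * w ≤ M * t * w := by nlinarith
  obtain ⟨I', hI', hI'card, F, hF, hFcard, hFlink, hFear⟩ :=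
    hear V G w (by grind) hw hcoh t (hM₂.trans hMt) hnt col I J I₁ k A C S hcol hJ hI₁ hJI₁ hI₁card
      hk hS hCA (hMtw.trans <| le_of_mul_le_mul_left ((hAM k (hJ hk)).trans <|
        hScard.trans (by gcongr)) (by linarith))
      (fun i hi => hMtw.trans (by
        nlinarith [hA i (hI₁ hi), hCcard i hi, show 0 ≤ M * (t * w) by positivity])) hClink hCS hP
  refine ⟨I', hI'.trans hI₁, hI'card, F, fun i hi => (hF i hi).trans (hCA i (hI' hi)),
    fun b hb => ?_, hFlink, hFear⟩
  calc z * (z * #(A b)) ≤ z * (4 * #(C b)) := by gcongr z * ?_; exact hCcard b (hI' hb)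
    _ = 4 * (z * #(C b)) := by ring
    _ ≤ 4 * (M₂ * #(F b)) := by gcongr 4 * ?_; exact hFcard b hb
    _ ≤ 4 * (M * M * #(F b)) := by gcongr; nlinarith
    _ = 4 * M * M * #(F b) := by ring

lemma exists_forall_exists_isEar {c : ℝ} (hT : 1 ≤ T) (hcT : 1 < c * T) (hq : 3 * T + 2 ≤ q)
    (hK : 1 ≤ K) {lam' σ' : ℝ} (hlam' : 0 < lam') (hσ' : 0 < σ') :
    ∃ (K₀ : ℕ) (σ lam : ℝ), 0 < σ ∧ 0 < lam ∧ ∃ n₀ : ℕ, ∀ (V : Type) [Fintype V]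
      (G : SimpleGraph V), n₀ ≤ Fintype.card V →
      Coherent G ((Fintype.card V : ℝ) ^ (1 - c)) ((Fintype.card V : ℝ) ^ (1 - c)) →
      ∀ (col : V → ℕ) (I : Finset ℕ) (A : ℕ → Finset V), K₀ ≤ #I → IsColoredBy col I A →
      (∀ i ∈ I, (Fintype.card V : ℝ) ^ (1 - σ) ≤ #(A i)) → HasLinkageLE G I A lam →
      ∃ I' ⊆ I, #I' = K ∧ ∃ F : ℕ → Finset V, (∀ b ∈ I', F b ⊆ A b) ∧
        (∀ b ∈ I', (Fintype.card V : ℝ) ^ (1 - σ') ≤ #(F b)) ∧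
        HasLinkageLE G I' F lam' ∧ ∀ a ∈ I', ∀ b ∈ I', a ≠ b → ∀ u ∈ F a, ∀ w ∈ F b, ∃ x y l,
          IsEar G col I A I' F a b u w x y l ∧ l.length = q := by
  have hT0 : (1 : ℝ) ≤ T := by exact_mod_cast hT
  obtain ⟨σ, hσ, hσT, hσσ'⟩ : ∃ σ : ℝ, 0 < σ ∧ 5 * σ * T ≤ c * T - 1 ∧ 4 * σ ≤ σ' := by
    refine ⟨min ((c * T - 1) / (5 * T)) (σ' / 4), lt_min (div_pos ?_ ?_) ?_, ?_, ?_⟩ <;>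
      try linarith
    · calc _ ≤ 5 * ((c * T - 1) / (5 * T)) * T := by gcongr; exact min_le_left _ _
        _ = c * T - 1 := by field_simp
    · linarith [min_le_right ((c * T - 1) / (5 * T)) (σ' / 4)]
  have hcσ : 5 * σ < c := by nlinarith
  obtain ⟨K₀, lam, hlam, M, n₁, hear⟩ := exists_forall_exists_isEar_of_le_pow hT hq hK hlam' hσ
  obtain ⟨n₂, hn₂⟩ := Filter.eventually_atTop.mp
    ((eventually_le_natCast_rpow hσ (max M 4)).and (Filter.eventually_ge_atTop 1))
  refine ⟨K₀, σ, lam, hσ, hlam, max n₁ n₂, ?_⟩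
  intro V _ G hn hcoh col I A hI hcol hA hlink
  set n : ℝ := (Fintype.card V : ℝ)
  obtain ⟨hMn, hn1⟩ := hn₂ _ ((le_max_right _ _).trans hn)
  have hn1 : 1 ≤ n := Nat.one_le_cast.mpr hn1
  have hn0 : 0 < n := by linarith
  have hM : ∀ {s x y : ℝ}, s ≤ max M 4 → σ + x ≤ y → s * n ^ x ≤ n ^ y := fun hs hxy =>
    mul_rpow_le_rpow hn1 (hs.trans hMn) hxy
  have hMt : M ≤ n ^ (c - 4 * σ) := by
    simpa using hM (le_max_left M 4) (show σ + 0 ≤ c - 4 * σ by linarith)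
  have hnt : n ≤ (n ^ (c - 4 * σ) / 4) ^ T :=
    calc n = n ^ (1 : ℝ) := (Real.rpow_one n).symm
      _ ≤ n ^ ((c - 5 * σ) * T) := Real.rpow_le_rpow_of_exponent_le hn1 (by linarith)
      _ = (n ^ (c - 5 * σ)) ^ T := by rw [Real.rpow_mul hn0.le, Real.rpow_natCast]
      _ ≤ (n ^ (c - 4 * σ) / 4) ^ T := by
          gcongr
          linarith [hM (le_max_right M 4) (show σ + (c - 5 * σ) ≤ c - 4 * σ by linarith)]
  have hAσ : ∀ i ∈ I, n ^ (1 - 2 * σ) ≤ n ^ (-σ) * #(A i) := fun i hi =>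
    rpow_le_of_rpow_mul_le hn1 (by linarith) (hA i hi) le_rfl
  obtain ⟨I', hI', hI'card, F, hF, hFcard, hFlink, hFear⟩ :=
    hear V G _ ((le_max_left _ _).trans hn) (by positivity) hcoh _ hMt hnt col I A hI hcol
      (fun i hi => (hAσ i hi).trans' <| by
        rw [← Real.rpow_add hn0]
        exact hM (le_max_left M 4) (by linarith)) hlink
  refine ⟨I', hI', hI'card, F, hF, fun b hb => ?_, hFlink, hFear⟩
  have hFσ : n ^ (1 - 3 * σ) ≤ n ^ σ * #(F b) :=
    (rpow_le_of_rpow_mul_le hn1 (by linarith) (hAσ b (hI' hb)) (hFcard b hb)).trans <| by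
      gcongr
      exact (le_max_left _ _).trans hMn
  exact rpow_le_of_rpow_mul_le hn1 (a := -σ) (by linarith) hFσ (by
    rw [← mul_assoc, ← Real.rpow_add hn0, neg_add_cancel, Real.rpow_zero, one_mul])

end EarSystems

section Handles

variable {ι : Type*} {G : SimpleGraph V} {H : SimpleGraph W} {col : V → ι} {I I' : Finset ι}
  {A F : ι → Finset V} {S : Finset W} {f : W → V} {x y : V} {l : List V} {p : ℕ → W} {c : ℝ}
  {q n T β i : ℕ} {w : W} {U : Set W}

namespace IsHandle

lemma adj_iff (h : IsHandle H U (q + 1) p) (hi : i < q) (hw : w ∈ U ∨ ∃ j ≤ q + 1, w = p j) :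
    H.Adj (p (i + 1)) w ↔ w = p i ∨ w = p (i + 2) := by
  obtain ⟨-, -, -, -, -, hadj, -, hdeg⟩ := h
  refine ⟨hdeg (i + 1) (by omega) (by omega) w hw, ?_⟩
  rintro (rfl | rfl)
  · exact (hadj i (by omega)).symm
  · exact hadj (i + 1) (by omega)

lemma injOn (h : IsHandle H U n p) : Set.InjOn p (Set.Iic n) :=
  fun i hi j hj hij => h.2.1 i hi j hj hij

lemma notMem (h : IsHandle H U (q + 1) p) (hi : i < q) : p (i + 1) ∉ U :=
  h.2.2.2.2.1 (i + 1) (by omega) (by omega)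

lemma union_eq (h : IsHandle H U (q + 1) p) :
    U ∪ {w | ∃ j ≤ q + 1, w = p j} = U ∪ (fun i => p (i + 1)) '' Set.Iio q := by
  obtain ⟨-, -, hp₀, hpq, -⟩ := h
  ext w
  constructor
  · rintro (hw | ⟨_ | j, hj, rfl⟩)
    · exact Or.inl hw
    · exact Or.inl hp₀
    · rcases hj.eq_or_lt with hj | hj
      · exact Or.inl (hj ▸ hpq)
      · exact Or.inr ⟨j, by simpa using hj, rfl⟩
  · rintro (hw | ⟨j, hj, rfl⟩)
    · exact Or.inl hw
    · exact Or.inr ⟨j + 1, by simpa using (Set.mem_Iio.mp hj).le, rfl⟩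

lemma exists_isRainbowEmbedding (h : IsHandle H U (q + 1) p) (hl : IsRainbowPath G col x y l)
    (hlq : l.length = q) (hlA : ∀ v ∈ l, col v ∈ I ∧ v ∈ A (col v)) :
    ∃ g : W → V, (∀ (i : ℕ) (hi : i < l.length), g (p (i + 1)) = l[i]) ∧
      IsRainbowEmbedding G H col I A ((range q).image fun i => p (i + 1)) g := by
  have hp : ∀ i < q, ∀ j < q + 1, p (i + 1) = p j ↔ i + 1 = j := fun i hi j hj =>
    h.injOn.eq_iff (by simp; omega) (by simp; omega)
  have hinj : Set.InjOn (fun i => p (i + 1)) (Set.Iio q) := fun i hi j hj hij => by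
    simpa using (hp i hi (j + 1) (by simpa using hj)).mp hij
  obtain ⟨g, hg⟩ : ∃ g : W → V, ∀ (i : ℕ) (hi : i < l.length), g (p (i + 1)) = l[i] :=
    ⟨fun w => l.getD (Function.invFunOn (fun i => p (i + 1)) (Set.Iio q) w) x, fun i hi => by
      have hinv := hinj.leftInvOn_invFunOn (show i ∈ Set.Iio q from hlq ▸ hi)
      simp only [hinv, List.getD_eq_getElem _ _ hi]⟩
  subst hlq
  refine ⟨g, hg, ?_, ?_, ?_⟩
  · simp only [forall_mem_image, mem_range]
    exact fun i hi => hg i hi ▸ hlA _ (List.getElem_mem hi)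
  · rw [coe_image]
    rintro _ ⟨i, hi, rfl⟩ _ ⟨j, hj, rfl⟩ hij
    rw [mem_coe, mem_range] at hi hj
    simp only [hg i hi, hg j hj] at hij
    have hij' : i = j := (List.Nodup.getElem_inj_iff hl.nodup (hi := by simpa using hi)
      (hj := by simpa using hj)).mp (by simpa only [List.getElem_map] using hij)
    rw [hij']
  · simp only [forall_mem_image, mem_range]
    intro i hi j hj
    rw [h.adj_iff hi (Or.inr ⟨j + 1, by omega, rfl⟩), hp j hj i (by omega),
      h.injOn.eq_iff (by simp; omega) (by simp; omega), hg i hi, hg j hj]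
    rcases lt_trichotomy i j with hij | rfl | hij
    · rw [hl.adj_iff i j hi hj hij]; omega
    · simp
    · rw [G.adj_comm, hl.adj_iff j i hj hi hij]; omega

end IsHandle

lemma IsEar.exists_isRainbowEmbedding (hf : IsRainbowEmbedding G H col I' F S f)
    (hp : IsHandle H (S : Set W) (q + 1) p) (hI' : I' ⊆ I) (hFA : ∀ i ∈ I', F i ⊆ A i)
    (hl : IsEar G col I A I' F (col (f (p 0))) (col (f (p (q + 1)))) (f (p 0)) (f (p (q + 1)))
      x y l) (hlq : l.length = q) :
    ∃ f', IsRainbowEmbedding G H col I A (S ∪ (range q).image fun i => p (i + 1)) f' := by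
  obtain ⟨g, hgl, hg⟩ := hp.exists_isRainbowEmbedding hl.isRainbowPath hlq
    fun v hv => ⟨(hl.mem v hv).1, (hl.mem v hv).2.2⟩
  refine ⟨_, (hf.mono hI' hFA).union hg ?_ ?_ ?_⟩
  · simp only [disjoint_right, forall_mem_image, mem_range]
    exact fun i hi => by simpa using hp.notMem hi
  · simp only [forall_mem_image, mem_range, ← hlq]
    intro s hs i hi hcol
    exact (hl.mem _ (List.getElem_mem hi)).2.1 (hgl i hi ▸ hcol ▸ (hf.mem s hs).1)
  · simp only [forall_mem_image, mem_range, ← hlq]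
    intro s hs i hi
    have hmem := List.getElem_mem hi
    have hiq : i < q := hlq ▸ hi
    rw [H.adj_comm, G.adj_comm, hgl i hi, hp.adj_iff hiq (Or.inl (by exact_mod_cast hs))]
    have hpp : ∀ j ≤ q + 1, ∀ k ≤ q + 1, p j = p k ↔ j = k := fun j hj k hk =>
      hp.injOn.eq_iff hj hk
    by_cases hs₀ : s = p 0
    · rw [hs₀, hl.adj_left_iff _ hmem, hl.isRainbowPath.getElem_eq_left_iff,
        hpp _ (by omega) _ (by omega), hpp _ (by omega) _ (by omega)]
      omega
    by_cases hs₁ : s = p (q + 1)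
    · rw [hs₁, hl.adj_right_iff _ hmem, hl.isRainbowPath.getElem_eq_right_iff,
        hpp _ (by omega) _ (by omega), hpp _ (by omega) _ (by omega)]
      omega
    refine iff_of_false ?_ (hl.not_adj _ hmem _ (hf.mem s hs).1
      (fun h => hs₀ (hf.injOn hs hp.2.2.1 h)) (fun h => hs₁ (hf.injOn hs hp.2.2.2.1 h)) _
      (hf.mem s hs).2)
    rintro (rfl | rfl)
    · obtain ⟨j, rfl⟩ := Nat.exists_eq_succ_of_ne_zero fun h : i = 0 => hs₀ (by rw [h])
      exact hp.notMem (i := j) (by omega) hs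
    · rcases (Nat.succ_le_of_lt hiq).eq_or_lt with h | h
      · exact hs₁ (by rw [← h])
      · exact hp.notMem h hs

lemma IsForced.union_handle (hT : 1 ≤ T) (hcT : 1 < c * T) (hq : 3 * T + 2 ≤ q)
    (hp : IsHandle H (S : Set W) (q + 1) p) (hF : IsForced H c S) :
    IsForced H c (S ∪ (range q).image fun i => p (i + 1)) := by
  obtain ⟨K₁, σ₁, hσ₁, lam₁, hlam₁, n₁, hF⟩ := hF
  obtain ⟨K, σ, lam, hσ, hlam, n₂, hear⟩ :=
    exists_forall_exists_isEar hT hcT hq (le_max_right K₁ 1) hlam₁ hσ₁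
  refine ⟨K, σ, hσ, lam, hlam, max n₁ n₂, fun V _ G hn hcoh col I A hI hcol hA hlink => ?_⟩
  simp only [max_le_iff] at hn
  obtain ⟨I', hI', hI'card, F, hFA, hF', hFlink, hear⟩ :=
    hear V G hn.2 hcoh col I A hI hcol hA hlink
  obtain ⟨f, hf⟩ := hF V G hn.1 hcoh col I' F (hI'card ▸ le_max_left _ _) (hcol.mono hI' hFA) hF'
    hFlink
  have hne : col (f (p 0)) ≠ col (f (p (q + 1))) := fun h => by
    simpa using hp.2.1 _ (Nat.zero_le _) _ le_rfl (hf.injOn hp.2.2.1 hp.2.2.2.1 h)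
  obtain ⟨h₀, h₀F⟩ := hf.mem _ hp.2.2.1
  obtain ⟨h₁, h₁F⟩ := hf.mem _ hp.2.2.2.1
  obtain ⟨x, y, l, hl, hlq⟩ := hear _ h₀ _ h₁ hne _ h₀F _ h₁F
  exact hl.exists_isRainbowEmbedding hf hp hI' hFA hlq

theorem WeaklyBuildableOn.exists_isForced (hc : 0 < c) (hT : 1 ≤ T) (hcT : 1 < c * T)
    (hβ : 3 * T + 3 ≤ β) (hU : WeaklyBuildableOn H β U) :
    ∃ S : Finset W, (S : Set W) = U ∧ IsForced H c S := by
  induction hU with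
  | empty => exact ⟨∅, coe_empty, isForced_empty H c⟩
  | subleaf U v hv hdeg _ ih =>
    obtain ⟨S, rfl, hS⟩ := ih
    refine ⟨insert v S, coe_insert v S, hS.insert_of_subsingleton hc (by exact_mod_cast hv) ?_⟩
    rw [Set.ncard_le_one_iff_subsingleton] at hdeg
    by_cases hvS : ∃ u ∈ S, H.Adj v u
    · obtain ⟨u, hu, hvu⟩ := hvS
      exact Or.inl ⟨u, hu, fun w hw => ⟨fun hvw => hdeg ⟨hw, hvw⟩ ⟨hu, hvu⟩, fun h => h ▸ hvu⟩⟩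
    · exact Or.inr (by push Not at hvS; exact hvS)
  | handle U n p _ hp hn ih =>
    obtain ⟨S, rfl, hS⟩ := ih
    obtain ⟨q, rfl⟩ : ∃ q, n = q + 1 := ⟨n - 1, by omega⟩
    exact ⟨_, by rw [hp.union_eq]; push_cast; rfl,
      hS.union_handle hT hcT (by omega) hp⟩

end Handles

section Congestion

variable {α : Type*} {H : SimpleGraph W} {S : Finset W} {z : ℕ → W} {m q i n : ℕ}

lemma bddAbove_congestion [Finite W] (H : SimpleGraph W) :
    BddAbove ({0} ∪ {x : ℝ | ∃ J : H.Subgraph, J.edgeSet.Nonempty ∧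
      x = 1 - ((J.verts.ncard : ℝ) - 1) / (J.edgeSet.ncard : ℝ)}) := by
  refine ⟨1, ?_⟩
  rintro x (rfl | ⟨J, ⟨e, he⟩, rfl⟩)
  · exact zero_le_one
  · induction e with
    | h a b =>
      have hverts : (1 : ℝ) ≤ J.verts.ncard := Nat.one_le_cast.mpr
        ((Set.ncard_pos (Set.toFinite _)).mpr ⟨a, J.edge_vert (Subgraph.mem_edgeSet.mp he)⟩)
      have : 0 ≤ ((J.verts.ncard : ℝ) - 1) / (J.edgeSet.ncard : ℝ) :=
        div_nonneg (by linarith) (Nat.cast_nonneg _)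
      linarith

lemma congestion_nonneg [Finite W] (H : SimpleGraph W) : 0 ≤ congestion H :=
  le_csSup (bddAbove_congestion H) (Or.inl rfl)

lemma one_sub_congestion_mul_le [Finite W] {J : H.Subgraph} (hJ : J.verts.Nonempty) :
    (1 - congestion H) * J.edgeSet.ncard ≤ (J.verts.ncard : ℝ) - 1 := by
  have hverts : (1 : ℝ) ≤ J.verts.ncard :=
    Nat.one_le_cast.mpr ((Set.ncard_pos (Set.toFinite _)).mpr hJ)
  rcases J.edgeSet.eq_empty_or_nonempty with hE | hE
  · simpa [hE] using hverts
  · have hpos : (0 : ℝ) < J.edgeSet.ncard :=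
      Nat.cast_pos.mpr ((Set.ncard_pos (Set.toFinite _)).mpr hE)
    have hle : 1 - ((J.verts.ncard : ℝ) - 1) / J.edgeSet.ncard ≤ congestion H :=
      le_csSup (bddAbove_congestion H) (Or.inr ⟨J, hE, rfl⟩)
    rw [← le_div_iff₀ hpos]
    linarith

lemma sum_card_nbrsIn_self [Finite W] (H : SimpleGraph W) (S : Finset W) :
    ∑ v ∈ S, #(nbrsIn H v S) = 2 * ((⊤ : H.Subgraph).induce (S : Set W)).edgeSet.ncard := by
  have := Fintype.ofFinite W
  set J := (⊤ : H.Subgraph).induce (S : Set W)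
  have hdeg : ∀ v, J.spanningCoe.degree v = if v ∈ S then #(nbrsIn H v S) else 0 := by
    intro v
    rw [← card_neighborFinset_eq_degree]
    split_ifs with hv
    · congr 1
      ext w
      simp [J, hv]
    · rw [card_eq_zero]
      ext w
      simp [J, hv]
  have hE : #J.spanningCoe.edgeFinset = J.edgeSet.ncard := by
    rw [← Subgraph.edgeSet_spanningCoe, ← Set.ncard_coe_finset, coe_edgeFinset]
  rw [← hE, ← J.spanningCoe.sum_degrees_eq_twice_card_edges, sum_congr rfl fun v _ => hdeg v,
    sum_ite_mem, univ_inter]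

lemma one_sub_congestion_mul_sum_card_nbrsIn_le [Finite W] (hS : S.Nonempty) :
    (1 - congestion H) * (∑ v ∈ S, #(nbrsIn H v S) : ℕ) ≤ 2 * ((#S : ℝ) - 1) := by
  have h := one_sub_congestion_mul_le (J := (⊤ : H.Subgraph).induce (S : Set W)) hS
  rw [Subgraph.induce_verts, Set.ncard_coe_finset] at h
  rw [sum_card_nbrsIn_self]
  push_cast
  linarith

lemma one_le_congestion_mul_card [Finite W] (hH : congestion H ≤ 1) (hS : S.Nonempty)
    (hdeg : ∀ v ∈ S, 2 ≤ #(nbrsIn H v S)) : 1 ≤ congestion H * #S := by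
  have hsum : (2 * #S : ℝ) ≤ (∑ v ∈ S, #(nbrsIn H v S) : ℕ) := by
    exact_mod_cast (mul_comm 2 #S).trans_le (card_nsmul_le_sum S _ 2 hdeg)
  nlinarith [one_sub_congestion_mul_sum_card_nbrsIn_le (H := H) hS]

/-- If every orbit of `F` in `D` meets `p` within `q` steps, and `F` is injective off `p`, then
the elements of `D` that first meet `p` after `k` steps embed in `{d ∈ D | p d}` for each `k`. -/
lemma card_le_mul_card_filter_of_iterate {D : Finset α} {F : α → α} {p : α → Prop} [DecidablePred p]
    (hF : ∀ d ∈ D, F d ∈ D) (hinj : Set.InjOn F {d | d ∈ D ∧ ¬ p d})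
    (hq : ∀ d ∈ D, ∃ k < q, p (F^[k] d)) : #D ≤ q * #{d ∈ D | p d} := by
  set L : ℕ → Finset α := fun k => {d ∈ D | p (F^[k] d) ∧ ∀ j < k, ¬ p (F^[j] d)}
  have hL : ∀ k, #(L k) ≤ #{d ∈ D | p d} := by
    intro k
    induction k with
    | zero => exact card_le_card fun d => by simp [L]
    | succ k ih =>
      refine (card_le_card_of_injOn F (fun d hd => ?_) fun d hd d' hd' h => ?_).trans ih
      · simp only [L, coe_filter, Set.mem_ofPred_eq] at hd ⊢
        exact ⟨hF d hd.1, hd.2.1, fun j hj => hd.2.2 (j + 1) (by omega)⟩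
      · simp only [L, coe_filter, Set.mem_ofPred_eq] at hd hd'
        exact hinj ⟨hd.1, hd.2.2 0 k.succ_pos⟩ ⟨hd'.1, hd'.2.2 0 k.succ_pos⟩ h
  have hD : D ⊆ (range q).biUnion L := fun d hd => by
    obtain ⟨k, hk, hkp⟩ := hq d hd
    simp only [L, mem_biUnion, mem_range, mem_filter]
    have hex : ∃ k, p (F^[k] d) := ⟨k, hkp⟩
    exact ⟨Nat.find hex, (Nat.find_min' hex hkp).trans_lt hk, hd, Nat.find_spec hex,
      fun j hj => Nat.find_min hex hj⟩
  calc #D ≤ #((range q).biUnion L) := card_le_card hD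
    _ ≤ #(range q) * #{d ∈ D | p d} := card_biUnion_le_card_mul _ _ _ fun k _ => hL k
    _ = q * #{d ∈ D | p d} := by rw [card_range]

/-- An infinite walk in `H[S]` that never immediately returns along the edge it came from. -/
structure IsNonbacktracking (H : SimpleGraph W) (S : Finset W) (z : ℕ → W) : Prop where
  mem : ∀ i, z i ∈ S
  adj : ∀ i, H.Adj (z i) (z (i + 1))
  ne : ∀ i, z i ≠ z (i + 2)

namespace IsNonbacktracking

lemma pair_subset_nbrsIn (h : IsNonbacktracking H S z) (i : ℕ) :
    {z i, z (i + 2)} ⊆ nbrsIn H (z (i + 1)) S := by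
  simp only [insert_subset_iff, singleton_subset_iff, mem_nbrsIn]
  exact ⟨⟨h.mem i, (h.adj i).symm⟩, h.mem _, h.adj (i + 1)⟩

lemma adj_iff (h : IsNonbacktracking H S z) (hi : #(nbrsIn H (z (i + 1)) S) ≤ 2) {w : W}
    (hw : w ∈ S) : H.Adj (z (i + 1)) w ↔ w = z i ∨ w = z (i + 2) := by
  have heq := eq_of_subset_of_card_le (h.pair_subset_nbrsIn i) (by rwa [card_pair (h.ne i)])
  have hmem := Finset.ext_iff.mp heq w
  simp only [mem_insert, mem_singleton, mem_nbrsIn, hw, true_and] at hmem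
  exact hmem.symm

lemma two_le_card_nbrsIn_image (h : IsNonbacktracking H S z) (hne : z i ≠ z (i + n))
    (hne' : z (i + 1) ≠ z (i + n + 1)) (hadj : H.Adj (z i) (z (i + n + 1))) :
    ∀ v ∈ (Icc i (i + n + 1)).image z,
      2 ≤ #(nbrsIn H v ((Icc i (i + n + 1)).image z)) := by
  simp only [forall_mem_image, mem_Icc]
  rintro k ⟨hik, hkn⟩
  obtain ⟨a, ha, b, hb, hab, hka, hkb⟩ : ∃ a ∈ Icc i (i + n + 1), ∃ b ∈ Icc i (i + n + 1),
      z a ≠ z b ∧ H.Adj (z k) (z a) ∧ H.Adj (z k) (z b) := by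
    simp only [mem_Icc]
    rcases hik.eq_or_lt with rfl | hik
    · exact ⟨i + 1, by omega, i + n + 1, by omega, hne', h.adj i, hadj⟩
    rcases hkn.eq_or_lt with rfl | hkn
    · exact ⟨i, by omega, i + n, by omega, hne, hadj.symm, (h.adj (i + n)).symm⟩
    obtain ⟨k, rfl⟩ := Nat.exists_eq_succ_of_ne_zero (Nat.ne_zero_of_lt hik)
    exact ⟨k, by omega, k + 2, by omega, h.ne k, (h.adj k).symm, h.adj (k + 1)⟩
  rw [← card_pair hab]
  refine card_le_card ?_
  simp only [insert_subset_iff, singleton_subset_iff, mem_nbrsIn]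
  exact ⟨⟨mem_image_of_mem z ha, hka⟩, mem_image_of_mem z hb, hkb⟩

lemma not_adj_add [Finite W] (h : IsNonbacktracking H S z) (hH : congestion H ≤ 1)
    (hm : congestion H * m < 1) (hnm : n + 2 ≤ m) (hne : z i ≠ z (i + n))
    (hne' : z (i + 1) ≠ z (i + n + 1)) : ¬ H.Adj (z i) (z (i + n + 1)) := fun hadj => by
  have hZ := one_le_congestion_mul_card hH ⟨z i, mem_image_of_mem z (by simp; omega)⟩
    (h.two_le_card_nbrsIn_image hne hne' hadj)
  have hcard : #((Icc i (i + n + 1)).image z) ≤ m :=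
    card_image_le.trans (by rw [Nat.card_Icc]; omega)
  exact hm.not_ge (hZ.trans (mul_le_mul_of_nonneg_left (Nat.cast_le.mpr hcard)
    (congestion_nonneg H)))

lemma ne_add [Finite W] (h : IsNonbacktracking H S z) (hH : congestion H ≤ 1)
    (hm : congestion H * m < 1) (hn : 0 < n) (hnm : n ≤ m) : z i ≠ z (i + n) := by
  induction n using Nat.strongRecOn generalizing i with
  | ind n ih =>
    intro hi
    match n with
    | 1 => exact (h.adj i).ne hi
    | 2 => exact h.ne i hi
    | k + 3 =>
      refine h.not_adj_add (i := i) (n := k + 1) hH hm (by omega) ?_ ?_ ?_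
      · exact hi ▸ (h.ne (i + (k + 1))).symm
      · convert ih (k + 1) (by omega) (i := i + 1) (by omega) (by omega) using 2
        omega
      · exact hi ▸ (h.adj (i + (k + 1) + 1)).symm

lemma injOn [Finite W] (h : IsNonbacktracking H S z) (hH : congestion H ≤ 1)
    (hm : congestion H * m < 1) : Set.InjOn z (Set.Iic m) := by
  have hne : ∀ i j, i < j → j ≤ m → z i ≠ z j := fun i j hij hj => by
    have := h.ne_add hH hm (n := j - i) (i := i) (by omega) (by omega)
    rwa [Nat.add_sub_cancel' hij.le] at this
  intro i hi j hj hij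
  by_contra hij'
  rcases lt_or_gt_of_ne hij' with hlt | hlt
  · exact hne i j hlt hj hij
  · exact hne j i hlt hi hij.symm

lemma isHandle [Finite W] (h : IsNonbacktracking H S z) (hq : 2 ≤ q)
    (hH : 3 * q * congestion H ≤ 1) (hdeg : ∀ i < q, #(nbrsIn H (z (i + 1)) S) ≤ 2) :
    IsHandle H (S \ (range q).image fun i => z (i + 1) : Finset W) (q + 1) z := by
  have := congestion_nonneg H
  have hq' : (2 : ℝ) ≤ q := by exact_mod_cast hq
  have hκ₁ : congestion H ≤ 1 := by nlinarith
  have hκq : congestion H * (q + 2 : ℕ) < 1 := by push_cast; nlinarith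
  have hinj : ∀ i ≤ q + 1, ∀ j ≤ q + 1, z i = z j → i = j := fun i hi j hj hij =>
    h.injOn hκ₁ hκq (by simp; omega) (by simp; omega) hij
  have hend : ∀ j ≤ q + 1, (∀ i < q, j ≠ i + 1) →
      z j ∈ S \ (range q).image fun i => z (i + 1) := fun j hj hji => by
    simp only [mem_sdiff, mem_image, mem_range, h.mem, true_and, not_exists, not_and]
    exact fun i hi hij => hji i hi (hinj _ (by omega) _ hj hij).symm
  refine ⟨by omega, hinj, hend 0 (by omega) (by omega), hend (q + 1) le_rfl (by omega), ?_,
    fun i _ => h.adj i, fun i j hij hj hadj => ?_, ?_⟩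
  · rintro (_ | i) hi hiq
    · omega
    · simpa using fun _ => ⟨i, by omega, rfl⟩
  · obtain ⟨n, rfl⟩ : ∃ n, j = i + n + 1 := ⟨j - i - 1, by omega⟩
    refine h.not_adj_add hκ₁ hκq (by omega) (fun hz => ?_) (fun hz => ?_) hadj
    · have := hinj _ (by omega) _ (by omega) hz
      omega
    · have := hinj _ (by omega) _ (by omega) hz
      omega
  · rintro (_ | i) hi hiq w hw hadj
    · omega
    · refine (h.adj_iff (hdeg i (by omega)) ?_).mp hadj
      rcases hw with hw | ⟨j, -, rfl⟩
      · exact (mem_sdiff.mp hw).1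
      · exact h.mem j

end IsNonbacktracking

/-- The oriented edges of `H[S]`. -/
def dartsIn (H : SimpleGraph W) (S : Finset W) : Finset (W × W) := {d ∈ S ×ˢ S | H.Adj d.1 d.2}

lemma mem_dartsIn {d : W × W} : d ∈ dartsIn H S ↔ d.1 ∈ S ∧ d.2 ∈ S ∧ H.Adj d.1 d.2 := by
  simp [dartsIn, and_assoc]

lemma card_filter_dartsIn (H : SimpleGraph W) (S : Finset W) (p : W → Prop)
    [DecidablePred p] :
    #{d ∈ dartsIn H S | p d.2} = ∑ v ∈ S, if p v then #(nbrsIn H v S) else 0 := by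
  rw [dartsIn, filter_filter, card_filter, sum_product_right]
  refine sum_congr rfl fun v _ => ?_
  split_ifs with hv
  · simp only [hv, and_true, ← card_filter, H.adj_comm _ v, nbrsIn]
  · simp [hv]

lemma mul_card_filter_dartsIn_lt [Finite W] (hS : S.Nonempty) (hq : 1 ≤ q)
    (hH : 3 * q * congestion H ≤ 1) (hdeg : ∀ v ∈ S, 2 ≤ #(nbrsIn H v S)) :
    q * #{d ∈ dartsIn H S | 3 ≤ #(nbrsIn H d.2 S)} < #(dartsIn H S) := by
  have hD : #(dartsIn H S) = ∑ v ∈ S, #(nbrsIn H v S) := by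
    simpa using card_filter_dartsIn H S fun _ => True
  have hT : #{d ∈ dartsIn H S | 3 ≤ #(nbrsIn H d.2 S)} + 6 * #S ≤ 3 * #(dartsIn H S) := by
    rw [card_filter_dartsIn H S fun v => 3 ≤ #(nbrsIn H v S), hD, mul_sum, mul_comm 6,
      ← smul_eq_mul, ← sum_const, ← sum_add_distrib]
    refine sum_le_sum fun v hv => ?_
    have := hdeg v hv
    split_ifs <;> omega
  have hcong := one_sub_congestion_mul_sum_card_nbrsIn_le (H := H) hS
  rw [← hD] at hcong
  set t := #{d ∈ dartsIn H S | 3 ≤ #(nbrsIn H d.2 S)}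
  rify at hT hq ⊢
  have ht : (t : ℝ) ≤ 3 * congestion H * #(dartsIn H S) - 6 := by linarith
  calc (q : ℝ) * t ≤ q * (3 * congestion H * #(dartsIn H S) - 6) := by gcongr
    _ = 3 * q * congestion H * #(dartsIn H S) - 6 * q := by ring
    _ ≤ 1 * #(dartsIn H S) - 6 * q := by gcongr
    _ < #(dartsIn H S) := by linarith

lemma eq_of_mem_of_ne_of_card_le_two {s : Finset α} {a b o : α} (hs : #s ≤ 2) (ha : a ∈ s)
    (hb : b ∈ s) (ho : o ∈ s) (hao : a ≠ o) (hbo : b ≠ o) : a = b := by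
  by_contra hab
  have h := card_le_card (show {a, b, o} ⊆ s by
    simp only [insert_subset_iff, singleton_subset_iff]; exact ⟨ha, hb, ho⟩)
  rw [card_eq_three.mpr ⟨a, b, o, hab, hao, hbo, rfl⟩] at h
  omega

lemma exists_isNonbacktracking [Finite W] (hS : S.Nonempty) (hq : 1 ≤ q)
    (hH : 3 * q * congestion H ≤ 1) (hdeg : ∀ v ∈ S, 2 ≤ #(nbrsIn H v S)) :
    ∃ z, IsNonbacktracking H S z ∧ ∀ i < q, #(nbrsIn H (z (i + 1)) S) ≤ 2 := by
  have hnext : ∀ a b, ∃ o, b ∈ S → o ∈ nbrsIn H b S ∧ o ≠ a := fun a b => by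
    by_cases hb : b ∈ S
    · obtain ⟨o, ho⟩ := exists_mem_ne (hdeg b hb) a
      exact ⟨o, fun _ => ho⟩
    · exact ⟨a, fun h => absurd h hb⟩
  choose next hnext using hnext
  set F : W × W → W × W := fun d => (d.2, next d.1 d.2)
  have hF : ∀ d ∈ dartsIn H S, F d ∈ dartsIn H S := fun d hd => by
    have hd₂ := (mem_dartsIn.mp hd).2.1
    exact mem_dartsIn.mpr ⟨hd₂, mem_nbrsIn.mp (hnext d.1 d.2 hd₂).1⟩
  have hinj : Set.InjOn F {d | d ∈ dartsIn H S ∧ ¬ 3 ≤ #(nbrsIn H d.2 S)} := by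
    rintro ⟨a, b⟩ ⟨hab, hb⟩ ⟨a', b'⟩ ⟨hab', -⟩ h
    obtain ⟨rfl, hnn⟩ : b = b' ∧ next a b = next a' b' := Prod.ext_iff.mp h
    simp only [mem_dartsIn] at hab hab'
    obtain ⟨ho, hoa⟩ := hnext a b hab.2.1
    rw [eq_of_mem_of_ne_of_card_le_two (not_lt.mp hb) (mem_nbrsIn.mpr ⟨hab.1, hab.2.2.symm⟩)
      (mem_nbrsIn.mpr ⟨hab'.1, hab'.2.2.symm⟩) ho hoa.symm
      (hnn ▸ (hnext a' b hab.2.1).2.symm)]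
  obtain ⟨d, hd, hdq⟩ : ∃ d ∈ dartsIn H S, ∀ k < q, ¬ 3 ≤ #(nbrsIn H (F^[k] d).2 S) := by
    by_contra! hall
    exact (mul_card_filter_dartsIn_lt hS hq hH hdeg).not_ge
      (card_le_mul_card_filter_of_iterate hF hinj hall)
  have hdk : ∀ k, F^[k] d ∈ dartsIn H S := fun k => (Set.MapsTo.iterate hF k) hd
  have hsucc : ∀ k, F^[k + 1] d = F (F^[k] d) := fun k => Function.iterate_succ_apply' F k d
  refine ⟨fun i => (F^[i] d).1, ⟨fun i => (mem_dartsIn.mp (hdk i)).1, fun i => ?_, fun i => ?_⟩,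
    fun i hi => ?_⟩ <;> simp only [hsucc, F]
  · exact (mem_dartsIn.mp (hdk i)).2.2
  · exact (hnext _ _ (mem_dartsIn.mp (hdk i)).2.1).2.symm
  · exact Nat.le_of_lt_succ (not_le.mp (hdq i hi))

theorem weaklyBuildableOn_of_congestion_le [Finite W] (hq : 2 ≤ q)
    (hH : 3 * q * congestion H ≤ 1) (S : Finset W) : WeaklyBuildableOn H (q + 1) S := by
  induction S using Finset.strongInduction with
  | H S ih =>
    rcases S.eq_empty_or_nonempty with rfl | hS
    · exact coe_empty (α := W) ▸ WeaklyBuildableOn.empty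
    by_cases hleaf : ∃ v ∈ S, #(nbrsIn H v S) ≤ 1
    · obtain ⟨v, hv, hdeg⟩ := hleaf
      rw [← insert_erase hv, coe_insert]
      refine .subleaf _ v (by simp) (le_trans ?_ hdeg) (ih _ (erase_ssubset hv))
      rw [← Set.ncard_coe_finset]
      refine Set.ncard_le_ncard (fun u hu => ?_) (Set.toFinite _)
      exact mem_coe.mpr (mem_nbrsIn.mpr ⟨mem_of_mem_erase hu.1, hu.2⟩)
    · push Not at hleaf
      obtain ⟨z, hz, hdeg⟩ := exists_isNonbacktracking hS (by omega) hH hleaf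
      have hp := hz.isHandle hq hH hdeg
      set P := (range q).image fun i => z (i + 1) with hP
      have hPS : P ⊆ S := by
        simpa only [hP, image_subset_iff] using fun i _ => hz.mem (i + 1)
      have hPne : P.Nonempty := ⟨z 1, mem_image.mpr ⟨0, mem_range.mpr (by omega), rfl⟩⟩
      have hSP : (S : Set W) = ↑(S \ P) ∪ {w | ∃ j ≤ q + 1, w = z j} := by
        rw [hp.union_eq, ← coe_Iio, ← coe_image, ← coe_union, Nat.Iio_eq_range, ← hP,
          sdiff_union_of_subset hPS]
      exact hSP ▸ .handle _ _ z (ih _ (sdiff_ssubset hPS hPne)) hp le_rfl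

end Congestion

section Rodl

variable {G G' : SimpleGraph V} {H : SimpleGraph W} {U X Y : Finset V} {C C₀ lam ε : ℝ} {m m' : ℕ}

lemma exists_card_le_card_mul_card_filter {ι : Type*} {S : Finset ι} {s : Finset V}
    (p : ι → V → Prop) (hs : s.Nonempty) (h : ∀ x ∈ s, ∃ i ∈ S, p i x) :
    ∃ i ∈ S, #s ≤ #S * #{x ∈ s | p i x} := by
  obtain ⟨x, hx⟩ := hs
  obtain ⟨i₀, hi₀, -⟩ := h x hx
  obtain ⟨i, hi, hmax⟩ := S.exists_max_image (fun i => #{x ∈ s | p i x}) ⟨i₀, hi₀⟩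
  refine ⟨i, hi, (card_le_card fun x hx => ?_).trans (card_biUnion_le_card_mul S _ _ hmax)⟩
  obtain ⟨j, hj, hpj⟩ := h x hx
  exact mem_biUnion.mpr ⟨j, hj, mem_filter.mpr ⟨hx, hpj⟩⟩

lemma exists_pairwise_disjoint_card_eq [Fintype W] {U : Finset V}
    (h : Fintype.card W * m ≤ #U) :
    ∃ D : W → Finset V, (∀ w, D w ⊆ U) ∧ (∀ w, #(D w) = m) ∧
      ∀ u v, u ≠ v → Disjoint (D u) (D v) := by
  obtain ⟨e⟩ : Nonempty (W × Fin m ↪ U) := Function.Embedding.nonempty_of_card_le (by simpa)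
  refine ⟨fun w => univ.image fun k => (e (w, k) : V), fun w => ?_, fun w => ?_, fun u v huv => ?_⟩
  · simp [image_subset_iff]
  · rw [card_image_of_injective _ fun k l hkl => ?_, card_univ, Fintype.card_fin]
    simpa using e.injective (Subtype.ext hkl)
  · simp only [Finset.disjoint_left, mem_image, mem_univ, true_and]
    rintro _ ⟨k, rfl⟩ ⟨l, hl⟩
    exact huv (congrArg Prod.fst (e.injective (Subtype.ext hl))).symm

lemma exists_isColoredBy {ι : Type*} [Nonempty ι] {I : Finset ι} {A : ι → Finset V}
    (h : ∀ i ∈ I, ∀ j ∈ I, i ≠ j → Disjoint (A i) (A j)) : ∃ col : V → ι, IsColoredBy col I A := by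
  have hcol : ∀ v, ∃ i, ∀ j ∈ I, v ∈ A j → i = j := by
    intro v
    by_cases hv : ∃ i ∈ I, v ∈ A i
    · obtain ⟨i, hi, hvi⟩ := hv
      refine ⟨i, fun j hj hvj => ?_⟩
      by_contra hij
      exact Finset.disjoint_left.mp (h i hi j hj hij) hvi hvj
    · exact ⟨Classical.arbitrary ι, fun j hj hvj => absurd ⟨j, hj, hvj⟩ hv⟩
  choose col hcol using hcol
  exact ⟨col, fun i hi v hv => hcol v i hi hv⟩

/-- Every vertex of `X` is adjacent to at most the proportion `ε` of `Y`. -/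
def IsSparseTo (G : SimpleGraph V) (ε : ℝ) (X Y : Finset V) : Prop :=
  ∀ x ∈ X, (#(nbrsIn G x Y) : ℝ) ≤ ε * #Y

lemma exists_extend_insert {S : Finset W} {D : W → Finset V} {f : W → V} {v : W} {x : V}
    (hv : v ∉ S) (hx : x ∈ D v)
    (hf : ∀ w ∈ S, f w ∈ nbrsIn (if H.Adj v w then G else Gᶜ) x (D w))
    (hadj : ∀ w ∈ S, ∀ w' ∈ S, H.Adj w w' ↔ G.Adj (f w) (f w')) :
    ∃ g : W → V, (∀ w ∈ insert v S, g w ∈ D w) ∧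
      ∀ w ∈ insert v S, ∀ w' ∈ insert v S, H.Adj w w' ↔ G.Adj (g w) (g w') := by
  have hxf : ∀ w ∈ S, H.Adj v w ↔ G.Adj x (f w) := by
    intro w hw
    have hw := (mem_nbrsIn.mp (hf w hw)).2
    split_ifs at hw with hvw
    · exact iff_of_true hvw hw
    · exact iff_of_false hvw (G.compl_adj _ _ |>.mp hw).2
  have hg : ∀ w ∈ S, Function.update f v x w = f w := fun w hw =>
    Function.update_of_ne (ne_of_mem_of_not_mem hw hv) _ _
  refine ⟨Function.update f v x, ?_, ?_⟩ <;>
    simp only [forall_mem_insert, Function.update_self, SimpleGraph.irrefl, iff_self, true_and]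
  · exact ⟨hx, fun w hw => hg w hw ▸ (mem_nbrsIn.mp (hf w hw)).1⟩
  · refine ⟨fun w hw => hg w hw ▸ hxf w hw, fun w hw => ⟨?_, fun w' hw' => ?_⟩⟩
    · rw [hg w hw, H.adj_comm, G.adj_comm, hxf w hw]
    · rw [hg w hw, hg w' hw', hadj w hw w' hw']

/-- For all nonempty sets `D w`, `w ∈ S`, in a graph `G`, either `H[S]` has an induced copy in `G`
with `w` placed in `D w`, or two of the sets have subsets, smaller by at most a factor `C`, of which
one is `ε`-sparse to the other in `G` or in its complement. -/
def HasCopyOrSparsePair (H : SimpleGraph W) (ε C : ℝ) (S : Finset W) : Prop :=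
  ∀ (V : Type) [Nonempty V] (G : SimpleGraph V) (D : W → Finset V), (∀ w ∈ S, (D w).Nonempty) →
    (∃ f : W → V, (∀ w ∈ S, f w ∈ D w) ∧ ∀ w ∈ S, ∀ w' ∈ S, H.Adj w w' ↔ G.Adj (f w) (f w')) ∨
    ∃ u ∈ S, ∃ v ∈ S, u ≠ v ∧ ∃ X ⊆ D u, ∃ Y ⊆ D v, #(D u) ≤ C * #X ∧ #(D v) ≤ C * #Y ∧
      (IsSparseTo G ε X Y ∨ IsSparseTo Gᶜ ε X Y)

lemma HasCopyOrSparsePair.insert {S : Finset W} {v : W} (h : HasCopyOrSparsePair H ε C S)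
    (hε : 0 < ε) (hv : v ∉ S) :
    HasCopyOrSparsePair H ε (max (max #S 1) (C / ε)) (insert v S) := by
  intro V _ G D hD
  set K : ℝ := max (max #S 1) (C / ε)
  have hK₁ : 1 ≤ K := (le_max_right _ _).trans (le_max_left _ _)
  set Gv : W → SimpleGraph V := fun w => if H.Adj v w then G else Gᶜ
  by_cases hgood : ∃ x ∈ D v, ∀ w ∈ S, ε * #(D w) < #(nbrsIn (Gv w) x (D w))
  · obtain ⟨x, hx, hxS⟩ := hgood
    have hcard : ∀ w ∈ S, ∀ X : Finset V, #(nbrsIn (Gv w) x (D w)) ≤ C * #X →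
        (#(D w) : ℝ) ≤ K * #X := fun w hw X hX =>
      calc (#(D w) : ℝ) ≤ C * #X / ε := by
            rw [le_div_iff₀' hε]; exact (hxS w hw).le.trans hX
        _ = C / ε * #X := by ring
        _ ≤ K * #X := by gcongr; exact le_max_right _ _
    rcases h V G (fun w => nbrsIn (Gv w) x (D w)) fun w hw => card_pos.mp (Nat.cast_pos.mp
      ((by positivity : 0 ≤ ε * #(D w)).trans_lt (hxS w hw))) with
      ⟨f, hf, hadj⟩ | ⟨u, hu, w, hw, huw, X, hX, Y, hY, hXcard, hYcard, hXY⟩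
    · exact .inl (exists_extend_insert hv hx hf hadj)
    · exact .inr ⟨u, mem_insert_of_mem hu, w, mem_insert_of_mem hw, huw,
        X, hX.trans (nbrsIn_subset _ _ _), Y, hY.trans (nbrsIn_subset _ _ _),
        hcard u hu X hXcard, hcard w hw Y hYcard, hXY⟩
  · push Not at hgood
    set bad : W → Finset V := fun w => {x ∈ D v | #(nbrsIn (Gv w) x (D w)) ≤ ε * #(D w)}
    obtain ⟨w, hw, hcard⟩ : ∃ w ∈ S, #(D v) ≤ #S * #(bad w) :=
      exists_card_le_card_mul_card_filter _ (hD v (mem_insert_self v S)) hgood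
    refine .inr ⟨v, mem_insert_self v S, w, mem_insert_of_mem hw, (ne_of_mem_of_not_mem hw hv).symm,
      bad w, filter_subset _ _, D w, Subset.rfl, ?_, le_mul_of_one_le_left (by positivity) hK₁, ?_⟩
    · refine (Nat.cast_le.mpr hcard).trans ?_
      push_cast
      gcongr
      exact (le_max_left _ _).trans (le_max_left _ _)
    · by_cases hvw : H.Adj v w
      · exact .inl fun x hx => by simpa [Gv, hvw] using (mem_filter.mp hx).2
      · exact .inr fun x hx => by simpa [Gv, hvw] using (mem_filter.mp hx).2

lemma exists_hasCopyOrSparsePair (H : SimpleGraph W) (hε : 0 < ε) (S : Finset W) :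
    ∃ C : ℝ, 0 < C ∧ HasCopyOrSparsePair H ε C S := by
  induction S using Finset.induction_on with
  | empty => exact ⟨1, one_pos, fun V _ G D _ => .inl ⟨fun _ => Classical.arbitrary V, by simp⟩⟩
  | insert v S hv ih =>
    obtain ⟨C, -, ih⟩ := ih
    exact ⟨_, by positivity, ih.insert hε hv⟩

lemma exists_isSparseTo [Finite W] (H : SimpleGraph W) (hε : 0 < ε) :
    ∃ C : ℝ, 0 < C ∧ ∃ N : ℕ, ∀ (V : Type) (G : SimpleGraph V), ¬ Contains G H →
      ∀ U : Finset V, N ≤ #U → ∃ X ⊆ U, ∃ Y ⊆ U, Disjoint X Y ∧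
        #U ≤ C * #X ∧ #U ≤ C * #Y ∧ (IsSparseTo G ε X Y ∨ IsSparseTo Gᶜ ε X Y) := by
  have := Fintype.ofFinite W
  obtain ⟨C, hC, hpair⟩ := exists_hasCopyOrSparsePair H hε univ
  set h := Fintype.card W
  refine ⟨2 * (h + 1) * C, by positivity, h + 1, fun V G hG U hU => ?_⟩
  have : Nonempty V := (card_pos.mp (by omega : 0 < #U)).to_type
  obtain ⟨D, hDU, hDcard, hDdisj⟩ := exists_pairwise_disjoint_card_eq (Nat.mul_div_le #U h)
  have hD : ∀ w : W, 0 < #(D w) ∧ (#U : ℝ) ≤ 2 * (h + 1) * #(D w) := by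
    intro w
    have hh : 0 < h := Fintype.card_pos_iff.mpr ⟨w⟩
    have hpos : 0 < #U / h := Nat.div_pos (by omega) hh
    have hlt := Nat.lt_mul_div_succ #U hh
    rw [hDcard]
    exact ⟨hpos, by exact_mod_cast (by nlinarith : #U ≤ 2 * (h + 1) * (#U / h))⟩
  rcases hpair V G D fun w _ => card_pos.mp (hD w).1 with
    ⟨f, hf, hadj⟩ | ⟨u, -, v, -, huv, X, hX, Y, hY, hXcard, hYcard, hXY⟩
  · refine absurd ⟨⟨f, fun u v huv => ?_⟩, ?_⟩ hG
    · by_contra hne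
      exact Finset.disjoint_left.mp (hDdisj u v hne) (hf u (mem_univ u)) (huv ▸ hf v (mem_univ v))
    · exact (hadj _ (mem_univ _) _ (mem_univ _)).symm
  · refine ⟨X, hX.trans (hDU u), Y, hY.trans (hDU v), (hDdisj u v huv).mono hX hY, ?_, ?_, hXY⟩ <;>
      rw [mul_assoc _ C]
    · exact (hD u).2.trans (by gcongr)
    · exact (hD v).2.trans (by gcongr)

/-- The set `U` contains `m` pairwise disjoint sets, smaller than `U` by at most a factor `C`, each
of which is `lam`-sparse to all later ones. -/
def HasSparseSequence (G : SimpleGraph V) (C lam : ℝ) (m : ℕ) (U : Finset V) : Prop :=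
  ∃ L : List (Finset V), L.length = m ∧ (∀ X ∈ L, X ⊆ U ∧ #U ≤ C * #X) ∧
    L.Pairwise fun X Y => Disjoint X Y ∧ IsSparseTo G lam X Y

lemma hasSparseSequence_one (G : SimpleGraph V) (lam : ℝ) (U : Finset V) :
    HasSparseSequence G 1 lam 1 U :=
  ⟨[U], by simp⟩

namespace HasSparseSequence

lemma mono_const {C' : ℝ} (h : HasSparseSequence G C lam m U) (hC : C ≤ C') :
    HasSparseSequence G C' lam m U := by
  obtain ⟨L, hlen, hL, hsparse⟩ := h
  exact ⟨L, hlen, fun X hX => ⟨(hL X hX).1, (hL X hX).2.trans (by gcongr)⟩, hsparse⟩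

lemma mono (h : HasSparseSequence G C lam m X) (hXU : X ⊆ U) (hC₀ : 0 ≤ C₀)
    (hU : #U ≤ C₀ * #X) : HasSparseSequence G (C₀ * C) lam m U := by
  obtain ⟨L, hlen, hL, hsparse⟩ := h
  refine ⟨L, hlen, fun Y hY => ⟨(hL Y hY).1.trans hXU, hU.trans ?_⟩, hsparse⟩
  rw [mul_assoc]
  gcongr
  exact (hL Y hY).2

lemma append (hX : HasSparseSequence G C lam m X) (hY : HasSparseSequence G C lam m' Y)
    (hXU : X ⊆ U) (hYU : Y ⊆ U) (hXY : Disjoint X Y) (hC₀ : 0 ≤ C₀) (hUX : #U ≤ C₀ * #X)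
    (hUY : #U ≤ C₀ * #Y) (hε : 0 ≤ ε) (hεC : ε * C ≤ lam) (hsparse : IsSparseTo G ε X Y) :
    HasSparseSequence G (C₀ * C) lam (m + m') U := by
  obtain ⟨L, rfl, hLX, hL⟩ := hX
  obtain ⟨L', rfl, hLY, hL'⟩ := hY
  refine ⟨L ++ L', List.length_append, fun Z hZ => ?_, List.pairwise_append.mpr ⟨hL, hL', ?_⟩⟩
  · rw [mul_assoc]
    rcases List.mem_append.mp hZ with hZ | hZ
    · exact ⟨(hLX Z hZ).1.trans hXU, hUX.trans (by gcongr; exact (hLX Z hZ).2)⟩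
    · exact ⟨(hLY Z hZ).1.trans hYU, hUY.trans (by gcongr; exact (hLY Z hZ).2)⟩
  · refine fun A hA B hB => ⟨hXY.mono (hLX A hA).1 (hLY B hB).1, fun x hx => ?_⟩
    calc (#(nbrsIn G x B) : ℝ) ≤ #(nbrsIn G x Y) := by gcongr; exact nbrsIn_mono (hLY B hB).1
      _ ≤ ε * #Y := hsparse x ((hLX A hA).1 hx)
      _ ≤ ε * (C * #B) := by gcongr; exact (hLY B hB).2
      _ = ε * C * #B := by ring
      _ ≤ lam * #B := by gcongr

lemma append_or (hX : HasSparseSequence G C lam m X ∨ HasSparseSequence G' C lam m' X)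
    (hY : HasSparseSequence G C lam m Y ∨ HasSparseSequence G' C lam m' Y)
    (hXU : X ⊆ U) (hYU : Y ⊆ U) (hXY : Disjoint X Y) (hC₀ : 0 ≤ C₀) (hUX : #U ≤ C₀ * #X)
    (hUY : #U ≤ C₀ * #Y) (hε : 0 ≤ ε) (hεC : ε * C ≤ lam) (hsparse : IsSparseTo G ε X Y) :
    HasSparseSequence G (C₀ * C) lam (m + m) U ∨ HasSparseSequence G' (C₀ * C) lam m' U := by
  rcases hX with hX | hX
  · rcases hY with hY | hY
    · exact .inl (hX.append hY hXU hYU hXY hC₀ hUX hUY hε hεC hsparse)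
    · exact .inr (hY.mono hYU hC₀ hUY)
  · exact .inr (hX.mono hXU hC₀ hUX)

lemma exists_hasLinkageLE {mu : ℝ} (h : HasSparseSequence G C mu m U) (hmu : 0 < mu)
    (hC : 0 ≤ C) :
    ∃ (col : V → ℕ) (A : ℕ → Finset V), IsColoredBy col (range m) A ∧
      (∀ i ∈ range m, #U ≤ C * 2 * #(A i)) ∧ HasLinkageLE G (range m) A (4 * m * mu) := by
  obtain ⟨L, rfl, hLU, hL⟩ := h
  set B : ℕ → Finset V := fun i => L.getD i ∅
  have hB : ∀ i ∈ range L.length, ∀ j ∈ range L.length, i < j →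
      Disjoint (B i) (B j) ∧ IsSparseTo G mu (B i) (B j) := by
    intro i hi j hj hij
    rw [mem_range] at hi hj
    simpa only [B, List.getD_eq_getElem _ _ hi, List.getD_eq_getElem _ _ hj] using
      List.pairwise_iff_getElem.mp hL i j hi hj hij
  have hsum : ∀ X Y, IsSparseTo G mu X Y →
      ∑ x ∈ X, (#(nbrsIn G x Y) : ℝ) ≤ mu * #X * #Y := fun X Y hXY => by
    rw [mul_right_comm, mul_comm, ← nsmul_eq_mul]
    exact sum_le_card_nsmul _ _ _ hXY
  obtain ⟨A, hAB, hA, hlink⟩ := exists_subset_hasLinkageLE (I := range L.length) (A := B) hmu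
    fun i hi j hj hij => by
      rcases lt_or_gt_of_ne hij with hij | hij
      · exact hsum _ _ (hB i hi j hj hij).2
      · rw [← Nat.cast_sum, sum_card_nbrsIn_comm, Nat.cast_sum, mul_right_comm]
        exact hsum _ _ (hB j hj i hi hij).2
  have hdisj : ∀ i ∈ range L.length, ∀ j ∈ range L.length, i ≠ j → Disjoint (A i) (A j) := by
    intro i hi j hj hij
    rcases lt_or_gt_of_ne hij with hij | hij
    · exact (hB i hi j hj hij).1.mono (hAB i) (hAB j)
    · exact (hB j hj i hi hij).1.symm.mono (hAB i) (hAB j)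
  obtain ⟨col, hcol⟩ := exists_isColoredBy hdisj
  refine ⟨col, A, hcol, fun i hi => ?_, by simpa using hlink⟩
  have hi' := mem_range.mp hi
  have hBi : #U ≤ C * #(B i) := by
    simpa only [B, List.getD_eq_getElem _ _ hi'] using (hLU _ (List.getElem_mem hi')).2
  rw [mul_assoc]
  exact hBi.trans (by gcongr; exact hA i hi)

end HasSparseSequence

lemma exists_hasSparseSequence [Finite W] (H : SimpleGraph W) (hlam : 0 < lam) (i j : ℕ) :
    ∃ C : ℝ, 0 < C ∧ ∃ N : ℕ, ∀ (V : Type) (G : SimpleGraph V), ¬ Contains G H →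
      ∀ U : Finset V, N ≤ #U →
        HasSparseSequence G C lam (2 ^ i) U ∨ HasSparseSequence Gᶜ C lam (2 ^ j) U := by
  induction i generalizing j with
  | zero => exact ⟨1, one_pos, 0, fun V G _ U _ => .inl (hasSparseSequence_one G lam U)⟩
  | succ i ihi =>
  induction j with
  | zero => exact ⟨1, one_pos, 0, fun V G _ U _ => .inr (hasSparseSequence_one Gᶜ lam U)⟩
  | succ j ihj =>
  obtain ⟨C₁, hC₁, N₁, h₁⟩ := ihi (j + 1)
  obtain ⟨C₂, -, N₂, h₂⟩ := ihj
  set C := max C₁ C₂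
  have hC : 0 < C := lt_max_of_lt_left hC₁
  have hε : 0 < lam / C := div_pos hlam hC
  have hεC : lam / C * C ≤ lam := (div_mul_cancel₀ _ hC.ne').le
  obtain ⟨C₀, hC₀, N₀, hsparse⟩ := exists_isSparseTo H hε
  refine ⟨C₀ * C, by positivity, max N₀ ⌈C₀ * max N₁ N₂⌉₊, fun V G hG U hU => ?_⟩
  obtain ⟨X, hXU, Y, hYU, hXY, hUX, hUY, hs⟩ := hsparse V G hG U ((le_max_left _ _).trans hU)
  have hlarge : ∀ Z : Finset V, #U ≤ C₀ * #Z → N₁ ≤ #Z ∧ N₂ ≤ #Z := by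
    intro Z hZ
    have hle := le_of_mul_le_mul_left
      ((Nat.ceil_le.mp ((le_max_right _ _).trans hU)).trans hZ) hC₀
    exact max_le_iff.mp (by exact_mod_cast hle)
  have h₁ : ∀ Z : Finset V, #U ≤ C₀ * #Z → HasSparseSequence G C lam (2 ^ i) Z ∨
      HasSparseSequence Gᶜ C lam (2 ^ (j + 1)) Z := fun Z hZ =>
    (h₁ V G hG Z (hlarge Z hZ).1).imp (·.mono_const (le_max_left _ _))
      (·.mono_const (le_max_left _ _))
  have h₂ : ∀ Z : Finset V, #U ≤ C₀ * #Z → HasSparseSequence G C lam (2 ^ (i + 1)) Z ∨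
      HasSparseSequence Gᶜ C lam (2 ^ j) Z := fun Z hZ =>
    (h₂ V G hG Z (hlarge Z hZ).2).imp (·.mono_const (le_max_right _ _))
      (·.mono_const (le_max_right _ _))
  rcases hs with hs | hs
  · have hmerge := HasSparseSequence.append_or (h₁ X hUX) (h₁ Y hUY) hXU hYU hXY
      hC₀.le hUX hUY hε.le hεC hs
    rwa [← mul_two, ← pow_succ] at hmerge
  · have hmerge := HasSparseSequence.append_or (h₂ X hUX).symm (h₂ Y hUY).symm hXU hYU hXY
      hC₀.le hUX hUY hε.le hεC hs
    rw [← mul_two, ← pow_succ] at hmerge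
    exact hmerge.symm

end Rodl

section Main

variable {G : SimpleGraph V} {H : SimpleGraph W} {c w : ℝ}

lemma IsRainbowEmbedding.contains {ι : Type*} [Fintype W] {col : V → ι} {I : Finset ι}
    {A : ι → Finset V} {f : W → V} (h : IsRainbowEmbedding G H col I A univ f) : Contains G H :=
  ⟨⟨f, fun _ _ huv => h.injOn (mem_univ _) (mem_univ _) (congrArg col huv)⟩,
    (h.adj_iff _ (mem_univ _) _ (mem_univ _)).symm⟩

lemma contains_compl_iff : Contains Gᶜ H ↔ Contains G Hᶜ :=
  ⟨fun ⟨e⟩ => ⟨Embedding.complEquiv.symm (by rwa [compl_compl])⟩,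
    fun ⟨e⟩ => ⟨by simpa using Embedding.complEquiv e⟩⟩

lemma IsForced.exists_forall_contains [Fintype W] (h : IsForced H c univ) :
    ∃ N : ℕ, ∀ (V : Type) [Fintype V] (G : SimpleGraph V), N ≤ Fintype.card V →
      Coherent G ((Fintype.card V : ℝ) ^ (1 - c)) ((Fintype.card V : ℝ) ^ (1 - c)) →
      Coherent Gᶜ ((Fintype.card V : ℝ) ^ (1 - c)) ((Fintype.card V : ℝ) ^ (1 - c)) →
      Contains G H ∨ Contains Gᶜ H := by
  obtain ⟨K, σ, hσ, lam, hlam, N₁, hforced⟩ := h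
  set m := 2 ^ K
  obtain ⟨C, hC, N₂, hseq⟩ :=
    exists_hasSparseSequence H (by positivity : 0 < lam / (4 * m)) K K
  obtain ⟨N₃, hN₃⟩ := Filter.eventually_atTop.mp
    ((eventually_le_natCast_rpow hσ (C * 2)).and (Filter.eventually_ge_atTop 1))
  refine ⟨max N₁ (max N₂ N₃), fun V _ G hn hG hGc => ?_⟩
  simp only [max_le_iff] at hn
  obtain ⟨hnC, hn1⟩ := hN₃ _ hn.2.2
  set n := Fintype.card V
  have hcontains : ∀ G' : SimpleGraph V, Coherent G' ((n : ℝ) ^ (1 - c)) ((n : ℝ) ^ (1 - c)) →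
      HasSparseSequence G' C (lam / (4 * m)) m univ → Contains G' H := by
    intro G' hG' hseq'
    obtain ⟨col, A, hcol, hA, hlink⟩ := hseq'.exists_hasLinkageLE (by positivity) hC.le
    rw [mul_div_cancel₀ _ (by positivity)] at hlink
    have hAσ : ∀ i ∈ range m, (n : ℝ) ^ (1 - σ) ≤ #(A i) := fun i hi =>
      le_of_mul_le_mul_left (a0 := (by positivity : 0 < C * 2)) <|
        calc C * 2 * (n : ℝ) ^ (1 - σ) ≤ (n : ℝ) ^ (1 : ℝ) :=
              mul_rpow_le_rpow (by exact_mod_cast hn1) hnC (by simp)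
          _ = #(univ : Finset V) := by rw [Real.rpow_one, card_univ]
          _ ≤ C * 2 * #(A i) := hA i hi
    obtain ⟨f, hf⟩ := hforced V G' hn.1 hG' col (range m) A
      (by rw [card_range]; exact Nat.lt_two_pow_self.le) hcol hAσ hlink
    exact hf.contains
  by_cases hGH : Contains G H
  · exact .inl hGH
  · rcases hseq V G hGH univ (by simpa using hn.2.1) with h | h
    · exact .inl (hcontains G hG h)
    · exact .inr (hcontains Gᶜ hGc h)

lemma isForced_univ_of_congestion_le [Fintype W] (hc : 0 < c)
    (hH : congestion H ≤ c / (9 + 15 * c)) : IsForced H c univ := by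
  set T := ⌊1 / c⌋₊ + 1
  set q := ⌊3 / c⌋₊ + 5
  have hT : 1 < c * T := by
    have hlt := Nat.lt_floor_add_one (1 / c)
    rw [div_lt_iff₀' hc] at hlt
    exact_mod_cast hlt
  have hTq : 3 * T + 3 ≤ q + 1 := by
    have hle : 3 * ⌊1 / c⌋₊ ≤ ⌊3 / c⌋₊ := Nat.le_floor <| by
      push_cast
      linarith [Nat.floor_le (by positivity : 0 ≤ 1 / c), mul_one_div 3 c]
    omega
  have hq : 3 * q * congestion H ≤ 1 := by
    have hle : (q : ℝ) * c ≤ 3 + 5 * c := by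
      have hfloor := (le_div_iff₀ hc).mp (Nat.floor_le (by positivity : 0 ≤ 3 / c))
      push_cast [q]
      linarith
    calc 3 * q * congestion H ≤ 3 * q * (c / (9 + 15 * c)) := by gcongr
      _ ≤ 1 := by
        rw [← mul_div_assoc, div_le_one (by positivity)]
        linarith
  obtain ⟨S, hS, hforced⟩ := WeaklyBuildableOn.exists_isForced hc (by omega) hT hTq
    (weaklyBuildableOn_of_congestion_le (by omega) hq univ)
  rwa [coe_inj.mp hS] at hforced

lemma exists_purePair_of_not_coherent (h : ¬ Coherent G w w) :
    ∃ A B : Set V, PurePair G A B ∧ w ≤ A.ncard ∧ w ≤ B.ncard := by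
  obtain ⟨A, B, hAB, hanti, hA, hB⟩ := not_not.mp h
  exact ⟨A, B, ⟨hAB, .inr hanti⟩, hA, hB⟩

lemma exists_purePair_of_not_coherent_compl (h : ¬ Coherent Gᶜ w w) :
    ∃ A B : Set V, PurePair G A B ∧ w ≤ A.ncard ∧ w ≤ B.ncard := by
  obtain ⟨A, B, hAB, hanti, hA, hB⟩ := not_not.mp h
  refine ⟨A, B, ⟨hAB, .inl fun a ha b hb => ?_⟩, hA, hB⟩
  by_contra hab
  exact hanti a ha b hb ⟨hAB.ne_of_mem ha hb, hab⟩

lemma exists_purePair_of_card_le [Nontrivial V] (G : SimpleGraph V) (hw : w ≤ 1) :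
    ∃ A B : Set V, PurePair G A B ∧ w ≤ A.ncard ∧ w ≤ B.ncard := by
  obtain ⟨a, b, hab⟩ := exists_pair_ne V
  refine ⟨{a}, {b}, ⟨Set.disjoint_singleton.mpr hab, ?_⟩, by simpa using hw, by simpa using hw⟩
  simpa using em (G.Adj a b)

lemma exists_forall_exists_purePair [Finite W] (hc : 0 < c)
    (hH : congestion H ≤ c / (9 + 15 * c)) :
    ∃ ε : ℝ, 0 < ε ∧ ∀ {V : Type} [Fintype V] (G : SimpleGraph V),
      1 < Fintype.card V → ¬ Contains G H → ¬ Contains G Hᶜ →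
      ∃ A B : Set V, PurePair G A B ∧
        ε * (Fintype.card V : ℝ) ^ (1 - c) ≤ (A.ncard : ℝ) ∧
        ε * (Fintype.card V : ℝ) ^ (1 - c) ≤ (B.ncard : ℝ) := by
  have := Fintype.ofFinite W
  obtain ⟨N, hN⟩ := (isForced_univ_of_congestion_le hc hH).exists_forall_contains
  refine ⟨1 / (N + 1), by positivity, fun {V} _ G hV hGH hGHc => ?_⟩
  set n := Fintype.card V
  have hn : (1 : ℝ) ≤ n := by exact_mod_cast hV.le
  rcases lt_or_ge n N with hlt | hge
  · have : Nontrivial V := Fintype.one_lt_card_iff_nontrivial.mp hV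
    refine exists_purePair_of_card_le G ?_
    calc 1 / (N + 1) * (n : ℝ) ^ (1 - c) ≤ 1 / (N + 1) * (n : ℝ) ^ (1 : ℝ) := by
          gcongr; linarith
      _ ≤ 1 := by
        rw [Real.rpow_one, one_div_mul_eq_div, div_le_one (by positivity)]
        exact_mod_cast hlt.le.trans N.le_succ
  · have hε : 1 / ((N : ℝ) + 1) * (n : ℝ) ^ (1 - c) ≤ (n : ℝ) ^ (1 - c) :=
      mul_le_of_le_one_left (by positivity)
        ((div_le_one (by positivity)).mpr (by linarith [N.cast_nonneg (α := ℝ)]))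
    suffices h : ∃ A B : Set V, PurePair G A B ∧ (n : ℝ) ^ (1 - c) ≤ A.ncard ∧
        (n : ℝ) ^ (1 - c) ≤ B.ncard by
      obtain ⟨A, B, hAB, hA, hB⟩ := h
      exact ⟨A, B, hAB, hε.trans hA, hε.trans hB⟩
    by_cases hG : Coherent G ((n : ℝ) ^ (1 - c)) ((n : ℝ) ^ (1 - c))
    · refine exists_purePair_of_not_coherent_compl fun hGc => ?_
      exact (hN V G hge hG hGc).elim hGH (hGHc ∘ contains_compl_iff.mp)
    · exact exists_purePair_of_not_coherent hG

end Main

end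

/-- if one of `H`, `Hᶜ` has congestion at most `c/(9+15c)`, then there is
`ε > 0` such that every graph `G` with `|G| > 1` that is `H`-free and `Hᶜ`-free has a
pure pair `A, B` with `|A|, |B| ≥ ε|G|^{1-c}`. -/
theorem statement_0 (c : ℝ) (hc : 0 < c) {W : Type} [Fintype W] (H : SimpleGraph W)
    (hcong : congestion H ≤ c / (9 + 15 * c) ∨ congestion Hᶜ ≤ c / (9 + 15 * c)) :
    ∃ ε : ℝ, 0 < ε ∧ ∀ {V : Type} [Fintype V] (G : SimpleGraph V),
      1 < Fintype.card V → ¬ Contains G H → ¬ Contains G Hᶜ →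
      ∃ A B : Set V, PurePair G A B ∧
        ε * (Fintype.card V : ℝ) ^ (1 - c) ≤ (A.ncard : ℝ) ∧
        ε * (Fintype.card V : ℝ) ^ (1 - c) ≤ (B.ncard : ℝ) := by
  rcases hcong with hH | hH
  · exact exists_forall_exists_purePair hc hH
  · obtain ⟨ε, hε, hpure⟩ := exists_forall_exists_purePair hc hH
    exact ⟨ε, hε, fun G hV hGH hGHc => hpure G hV hGHc (by rwa [compl_compl])⟩

end PurePairs
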